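/- arXiv:2501.06840 — 2 statements merged into one kernel-verified Lean document; each statement's English description precedes it below -/
import Mathlib

section
/- Let n ≥ 3 and let φ : U(n) → M_n be a continuous, commutativity-preserving and spectrum-shrinking map. Then there exists T ∈ GL(n) such that either φ(X) = T X T⁻¹ for all X ∈ U(n), or φ(X) = T Xᵗ T⁻¹ for all X ∈ U(n) (where Xᵗ denotes the transpose). -/
open Matrix

namespace PU

abbrev UU (n : ℕ) := {X : Matrix (Fin n) (Fin n) ℂ // X * X.conjTranspose = 1}

variable {n : ℕ}

lemma UU.star_mul (V : UU n) : V.1ᴴ * V.1 = 1 := mul_eq_one_comm.mp V.2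

noncomputable def zz (θ : Fin n → ℝ) : Fin n → ℂ := fun j => Complex.exp (θ j * Complex.I)

lemma zz_star (θ : Fin n → ℝ) (j : Fin n) : zz θ j * star (zz θ j) = 1 := by
  have : ‖zz θ j‖ = 1 := Complex.norm_exp_ofReal_mul_I _
  rw [Complex.star_def, Complex.mul_conj, Complex.normSq_eq_norm_sq, this]; simp

lemma diag_unit (V : UU n) (d : Fin n → ℂ) (hd : ∀ j, d j * star (d j) = 1) :
    (V.1 * diagonal d * V.1ᴴ) * (V.1 * diagonal d * V.1ᴴ)ᴴ = 1 := by
  have h : diagonal d * (diagonal d)ᴴ = 1 := by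
    rw [diagonal_conjTranspose, diagonal_mul_diagonal, ← diagonal_one]
    congr 1; ext j; exact hd j
  simp only [conjTranspose_mul, conjTranspose_conjTranspose]
  calc _ = V.1 * (diagonal d * ((V.1ᴴ * V.1) * (diagonal d)ᴴ)) * V.1ᴴ := by
        simp only [Matrix.mul_assoc]
    _ = 1 := by rw [V.star_mul, Matrix.one_mul, h, Matrix.mul_one, V.2]

noncomputable def XX (V : UU n) (θ : Fin n → ℝ) : UU n :=
  ⟨V.1 * diagonal (zz θ) * V.1ᴴ, diag_unit V _ (zz_star θ)⟩

lemma continuous_zz : Continuous (zz : (Fin n → ℝ) → _) := by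
  unfold zz; fun_prop

lemma continuous_XX : Continuous (fun p : UU n × (Fin n → ℝ) => XX p.1 p.2) := by
  refine Continuous.subtype_mk ?_ _
  have h1 : Continuous (fun p : UU n × (Fin n → ℝ) => p.1.1) := by fun_prop
  have h2 : Continuous (fun p : UU n × (Fin n → ℝ) => diagonal (zz p.2)) :=
    (continuous_zz.comp continuous_snd).matrix_diagonal
  exact (h1.matrix_mul h2).matrix_mul h1.matrix_conjTranspose

lemma exists_angle (z : ℂ) (hz : ‖z‖ = 1) : ∃ t : ℝ, 0 ≤ t ∧ t < 2 * Real.pi ∧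
    z = Complex.exp (t * Complex.I) := by
  have h : z = Complex.exp (z.arg * Complex.I) := by
    conv_lhs => rw [← Complex.norm_mul_exp_arg_mul_I z, hz]
    simp
  have h1 := Complex.neg_pi_lt_arg z
  have h2 := Complex.arg_le_pi z
  by_cases h0 : 0 ≤ z.arg
  · exact ⟨z.arg, h0, by linarith [Real.pi_pos], h⟩
  · refine ⟨z.arg + 2 * Real.pi, by linarith, by linarith, ?_⟩
    push_cast
    rw [add_mul, Complex.exp_add, Complex.exp_two_pi_mul_I, mul_one]; exact h

lemma spectral_diag (X : UU n) : ∃ (V : UU n) (d : Fin n → ℂ),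
    X.1 = V.1 * diagonal d * V.1ᴴ := by
  obtain ⟨μ, hμ, hμs⟩ : ∃ μ : ℂ, ‖μ‖ = 1 ∧ -μ ∉ spectrum ℂ X.1 := by
    have hfin : (spectrum ℂ X.1).Finite := Matrix.finite_spectrum X.1
    have hinf : (Metric.sphere (0:ℂ) 1).Infinite := by
      have : ((fun t : ℝ => Complex.exp (t * Complex.I)) '' Set.Ioo 0 1).Infinite := by
        refine Set.Infinite.image ?_ (Set.Ioo_infinite one_pos)
        intro a ha b hb hab
        simp only at hab
        rw [Complex.exp_eq_exp_iff_exists_int] at hab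
        obtain ⟨k, hk⟩ := hab
        have h2 : a = b + k * (2 * Real.pi) := by
          have := congrArg Complex.im hk
          simpa using this
        have hpi := Real.pi_gt_three
        obtain ⟨ha0, ha1⟩ := ha
        obtain ⟨hb0, hb1⟩ := hb
        have : k = 0 := by
          by_contra hne
          rcases lt_or_gt_of_ne hne with h | h
          · have : (k:ℝ) ≤ -1 := by exact_mod_cast Int.le_sub_one_of_lt h
            nlinarith
          · have : (1:ℝ) ≤ k := by exact_mod_cast h
            nlinarith
        simpa [this] using h2
      refine this.mono ?_
      rintro _ ⟨t, -, rfl⟩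
      simp [Complex.norm_exp_ofReal_mul_I]
    obtain ⟨ν, hν, hνs⟩ := hinf.exists_notMem_finite hfin
    exact ⟨-ν, by simpa using hν, by simpa using hνs⟩
  have hμ1 : μ * star μ = 1 := by
    rw [Complex.star_def, Complex.mul_conj, Complex.normSq_eq_norm_sq, hμ]; simp
  set A := X.1 with hA
  have hu : IsUnit (μ • (1 : Matrix (Fin n) (Fin n) ℂ) + A) := by
    rw [spectrum.mem_iff, not_not] at hμs
    have := hμs.neg
    convert this using 1
    simp [Algebra.algebraMap_eq_smul_one]; abel
  obtain ⟨G, hG⟩ := hu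
  set N : Matrix (Fin n) (Fin n) ℂ := ((G⁻¹ : _ˣ) : Matrix (Fin n) (Fin n) ℂ) with hN
  have hGN : (μ • 1 + A) * N = 1 := by rw [← hG]; simp [N]
  have hNG : N * (μ • 1 + A) = 1 := by rw [← hG]; simp [N]
  have hAs : A * Aᴴ = 1 := X.2
  have hAs' : Aᴴ * A = 1 := X.star_mul
  set H := Complex.I • ((μ • 1 - A) * N) with hH
  have hHG : H * (μ • 1 + A) = Complex.I • (μ • 1 - A) := by
    rw [hH, Matrix.smul_mul, Matrix.mul_assoc, hNG, Matrix.mul_one]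
  have hHerm : H.IsHermitian := by
    have key : (μ • 1 + A)ᴴ * (H * (μ • 1 + A)) = (H * (μ • 1 + A))ᴴ * (μ • 1 + A) := by
      rw [hHG]
      simp only [conjTranspose_add, conjTranspose_smul, conjTranspose_sub, conjTranspose_one,
        Matrix.add_mul, Matrix.mul_add, Matrix.sub_mul, Matrix.mul_sub, smul_mul_assoc,
        mul_smul_comm, Matrix.one_mul, Matrix.mul_one, hAs', smul_sub, smul_add, smul_smul]
      have : star Complex.I = -Complex.I := by simp
      simp only [star_mul', this]
      have h3 : star μ * μ = 1 := by rw [mul_comm]; exact hμ1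
      ext i j
      simp only [Matrix.sub_apply, Matrix.add_apply, Matrix.smul_apply, smul_eq_mul]
      linear_combination (2 * Complex.I * (1 : Matrix (Fin n) (Fin n) ℂ) i j) * h3
    have hGN' : Nᴴ * (μ • 1 + A)ᴴ = 1 := by rw [← conjTranspose_mul, hGN]; simp
    rw [conjTranspose_mul] at key
    have := congrArg (fun M => Nᴴ * (M * N)) key
    simp only [Matrix.mul_assoc, hGN, Matrix.mul_one] at this
    rw [← Matrix.mul_assoc, ← Matrix.mul_assoc, hGN', Matrix.one_mul, Matrix.one_mul] at this
    exact this.symm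
  let Vm := (hHerm.eigenvectorUnitary : Matrix (Fin n) (Fin n) ℂ)
  have hV : Vm * Vmᴴ = 1 := Unitary.coe_mul_star_self hHerm.eigenvectorUnitary
  have hV' : Vmᴴ * Vm = 1 := mul_eq_one_comm.mp hV
  have hsp : H = Vm * diagonal (fun i => (hHerm.eigenvalues i : ℂ)) * Vmᴴ := by
    have := hHerm.spectral_theorem
    rw [Unitary.conjStarAlgAut_apply] at this
    exact this
  set Λ : Fin n → ℂ := fun i => (hHerm.eigenvalues i : ℂ) with hΛ
  have hne : ∀ i, Λ i + Complex.I ≠ 0 := by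
    intro i h
    have := congrArg Complex.im h
    simp [Λ] at this
  refine ⟨⟨Vm, hV⟩, fun i => μ * (Complex.I - Λ i) / (Λ i + Complex.I), ?_⟩
  have e1 : diagonal (fun i => Λ i + Complex.I) * (Vmᴴ * A * Vm)
      = diagonal (fun i => μ * (Complex.I - Λ i)) := by
    have e2 : Vmᴴ * (H * (μ • 1 + A)) * Vm = Vmᴴ * (Complex.I • (μ • 1 - A)) * Vm := by rw [hHG]
    rw [hsp] at e2
    have e3 : diagonal Λ * (μ • 1 + Vmᴴ * A * Vm) = Complex.I • (μ • 1 - Vmᴴ * A * Vm) := by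
      calc diagonal Λ * (μ • 1 + Vmᴴ * A * Vm)
          = (Vmᴴ * Vm) * diagonal Λ * (Vmᴴ * (μ • 1 + A) * Vm) := by
            rw [hV', Matrix.one_mul, Matrix.mul_add Vmᴴ, Matrix.add_mul]; simp [hV']
        _ = _ := by
            simp only [Matrix.mul_assoc] at e2 ⊢
            rw [e2]
            simp [Matrix.mul_sub, Matrix.sub_mul, hV']
    ext i j
    have := congrFun (congrFun e3 i) j
    simp only [diagonal_mul, Matrix.add_apply, Matrix.smul_apply, Matrix.sub_apply,
      smul_eq_mul] at this ⊢
    by_cases hij : i = j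
    · subst hij; simp at this ⊢; linear_combination this
    · simp only [Matrix.one_apply_ne hij, diagonal_apply_ne _ hij] at this ⊢
      linear_combination this
  have e4 : Vmᴴ * A * Vm = diagonal (fun i => μ * (Complex.I - Λ i) / (Λ i + Complex.I)) := by
    ext i j
    have := congrFun (congrFun e1 i) j
    simp only [diagonal_mul] at this
    have hi := hne i
    by_cases hij : i = j
    · subst hij; simp at this ⊢; field_simp; linear_combination this
    · simp [hij] at this ⊢
      exact this.resolve_left hi
  show A = Vm * _ * Vmᴴ
  rw [← e4]
  calc A = (Vm * Vmᴴ) * A * (Vm * Vmᴴ) := by simp [hV]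
    _ = _ := by simp only [Matrix.mul_assoc]

lemma diag_norm (V X : UU n) (d : Fin n → ℂ) (h : X.1 = V.1 * diagonal d * V.1ᴴ) (j : Fin n) :
    ‖d j‖ = 1 := by
  have h1 : diagonal d = V.1ᴴ * X.1 * V.1 := by
    rw [h]
    calc diagonal d = (V.1ᴴ * V.1) * diagonal d * (V.1ᴴ * V.1) := by simp [V.star_mul]
      _ = _ := by simp only [Matrix.mul_assoc]
  have h2 : diagonal d * (diagonal d)ᴴ = 1 := by
    rw [h1]
    simp only [conjTranspose_mul, conjTranspose_conjTranspose]
    calc _ = V.1ᴴ * (X.1 * ((V.1 * V.1ᴴ) * X.1ᴴ)) * V.1 := by simp only [Matrix.mul_assoc]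
      _ = 1 := by rw [V.2, Matrix.one_mul, X.2, Matrix.mul_one, V.star_mul]
  have := congrFun (congrFun h2 j) j
  simp [diagonal_conjTranspose, Complex.mul_conj, Complex.normSq_eq_norm_sq] at this
  rcases this with h | h
  · exact_mod_cast h
  · have h4 : ‖d j‖ = -1 := by exact_mod_cast h
    linarith [norm_nonneg (d j)]

def OmC (n : ℕ) : Set (Fin n → ℝ) :=
  {θ | (∀ i j, i < j → θ i ≤ θ j) ∧ ∀ i j, θ i ≤ θ j + 2 * Real.pi}

def Om (n : ℕ) : Set (Fin n → ℝ) :=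
  {θ | (∀ i j, i < j → θ i < θ j) ∧ ∀ i j, θ i < θ j + 2 * Real.pi}

def permU (σ : Equiv.Perm (Fin n)) : UU n :=
  ⟨(Matrix.of fun i j => if i = σ j then 1 else 0), by
    ext i j
    simp only [mul_apply, conjTranspose_apply, of_apply, one_apply]
    rw [← Equiv.sum_comp σ.symm]
    simp⟩

def mulU (V W : UU n) : UU n := ⟨V.1 * W.1, by
  rw [conjTranspose_mul, Matrix.mul_assoc, ← Matrix.mul_assoc W.1, W.2, Matrix.one_mul, V.2]⟩

lemma permU_conj (σ : Equiv.Perm (Fin n)) (d : Fin n → ℂ) :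
    (permU σ).1 * diagonal (d ∘ σ) * (permU σ).1ᴴ = diagonal d := by
  ext i j
  rw [mul_apply]
  simp only [permU, conjTranspose_apply, of_apply, mul_diagonal]
  rw [← Equiv.sum_comp σ.symm]
  by_cases h : i = j
  · subst h; simp
  · simp [h]

lemma mulU_conj (V : UU n) (σ : Equiv.Perm (Fin n)) (d : Fin n → ℂ) :
    (mulU V (permU σ)).1 * diagonal (d ∘ σ) * (mulU V (permU σ)).1ᴴ = V.1 * diagonal d * V.1ᴴ := by
  rw [← permU_conj σ d]
  simp only [mulU, conjTranspose_mul, Matrix.mul_assoc]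

lemma spectral_angle (X : UU n) : ∃ (V : UU n) (θ : Fin n → ℝ), θ ∈ OmC n ∧ X = XX V θ := by
  obtain ⟨V, d, h⟩ := spectral_diag X
  choose t ht0 ht1 ht using fun j => exists_angle (d j) (diag_norm V X d h j)
  let σ := Tuple.sort t
  refine ⟨mulU V (permU σ), t ∘ σ, ⟨?_, ?_⟩, ?_⟩
  · intro i j hij
    exact Tuple.monotone_sort t hij.le
  · intro i j
    have := ht0 (σ j); have := ht1 (σ i); simp only [Function.comp]; linarith
  · apply Subtype.ext
    have : zz (t ∘ σ) = d ∘ σ := by ext j; simp [zz, ht (σ j)]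
    simp only [XX]
    rw [this, mulU_conj, h]

lemma continuous_XX' (V : UU n) : Continuous (XX V) := by
  refine Continuous.subtype_mk ?_ _
  have h2 : Continuous (fun θ : Fin n → ℝ => diagonal (zz θ)) :=
    continuous_zz.matrix_diagonal
  exact (continuous_const.matrix_mul h2).matrix_mul continuous_const

def oneU (n : ℕ) : UU n := ⟨1, by simp⟩

lemma XX_zero (V : UU n) : XX V 0 = oneU n := by
  apply Subtype.ext
  have : zz (0 : Fin n → ℝ) = fun _ => 1 := by ext j; simp [zz]
  simp only [XX, this, oneU]
  have h1 : (diagonal fun _ : Fin n => (1:ℂ)) = 1 := diagonal_one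
  rw [h1, Matrix.mul_one, V.2]

lemma preconn (n : ℕ) : IsPreconnected (Set.univ : Set (UU n)) := by
  refine isPreconnected_of_forall (oneU n) (fun X _ => ?_)
  obtain ⟨V, θ, -, rfl⟩ := spectral_angle X
  refine ⟨Set.range (XX V), Set.subset_univ _, ⟨0, XX_zero V⟩, ⟨θ, rfl⟩,
    isPreconnected_range (continuous_XX' V)⟩

end PU

namespace PU
variable {n : ℕ}

lemma Om_zz_inj {θ : Fin n → ℝ} (h : θ ∈ Om n) : Function.Injective (zz θ) := by
  intro i j hij
  simp only [zz] at hij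
  rw [Complex.exp_eq_exp_iff_exists_int] at hij
  obtain ⟨k, hk⟩ := hij
  have h2 : θ i = θ j + k * (2 * Real.pi) := by
    have := congrArg Complex.im hk
    simpa using this
  have hpi := Real.pi_gt_three
  have h3 := h.2 i j
  have h4 := h.2 j i
  have hk0 : k = 0 := by
    by_contra hne
    rcases lt_or_gt_of_ne hne with h | h
    · have : (k:ℝ) ≤ -1 := by exact_mod_cast Int.le_sub_one_of_lt h
      nlinarith
    · have : (1:ℝ) ≤ k := by exact_mod_cast h
      nlinarith
  have h5 : θ i = θ j := by simpa [hk0] using h2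
  rcases lt_trichotomy i j with hl | hl | hl
  · exact absurd h5 (h.1 i j hl).ne
  · exact hl
  · exact absurd h5 (h.1 j i hl).ne'

lemma Om_comb {θ η : Fin n → ℝ} (hθ : θ ∈ OmC n) (hη : η ∈ Om n) {a b : ℝ} (ha : 0 ≤ a) (hb : 0 < b)
    (hab : a + b = 1) : a • θ + b • η ∈ Om n := by
  constructor
  · intro i j hij
    have h1 := mul_le_mul_of_nonneg_left (hθ.1 i j hij) ha
    have h2 := mul_lt_mul_of_pos_left (hη.1 i j hij) hb
    simp only [Pi.add_apply, Pi.smul_apply, smul_eq_mul]; linarith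
  · intro i j
    have h1 := mul_le_mul_of_nonneg_left (hθ.2 i j) ha
    have h2 := mul_lt_mul_of_pos_left (hη.2 i j) hb
    have : (a + b) * (2 * Real.pi) = 2 * Real.pi := by rw [hab, one_mul]
    simp only [Pi.add_apply, Pi.smul_apply, smul_eq_mul]; nlinarith

lemma Om_sub : Om n ⊆ OmC n := fun _ h => ⟨fun i j hij => (h.1 i j hij).le, fun i j => (h.2 i j).le⟩

lemma Om_convex : Convex ℝ (Om n) := by
  intro x hx y hy a b ha hb hab
  rcases hb.eq_or_lt with h | h
  · subst h
    have : a = 1 := by linarith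
    subst this; simpa using hx
  · exact Om_comb (Om_sub hx) hy ha h hab

lemma Om_pre : IsPreconnected (Om n) := Om_convex.isPreconnected

noncomputable def th0 (n : ℕ) : Fin n → ℝ := fun j => (j : ℝ) / n

lemma th0_mem : th0 n ∈ Om n := by
  constructor
  · intro i j hij
    have hn : (0:ℝ) < n := by exact_mod_cast i.pos
    have : (i:ℝ) < j := by exact_mod_cast hij
    simp only [th0]; gcongr
  · intro i j
    have hn : (0:ℝ) < n := by exact_mod_cast i.pos
    have h1 : (i:ℝ) / n < 1 := by rw [div_lt_one hn]; exact_mod_cast i.2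
    have h2 : 0 ≤ (j:ℝ) / n := by positivity
    have := Real.pi_gt_three
    simp only [th0]; linarith

lemma OmC_closure {θ : Fin n → ℝ} (hθ : θ ∈ OmC n) : θ ∈ closure (Om n) := by
  have hc : Continuous (fun s : ℝ => (1 - s) • θ + s • th0 n) := by fun_prop
  have : (0:ℝ) ∈ closure (Set.Ioo (0:ℝ) 1) := by
    rw [closure_Ioo (by norm_num)]; simp
  have h1 := map_mem_closure (t := Om n) hc this ?_
  · simpa using h1
  intro s hs
  exact Om_comb hθ th0_mem (by linarith [hs.2]) hs.1 (by ring)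

lemma spectrum_XX (V : UU n) (θ : Fin n → ℝ) : spectrum ℂ (XX V θ).1 = Set.range (zz θ) := by
  let u : (Matrix (Fin n) (Fin n) ℂ)ˣ := ⟨V.1, V.1ᴴ, V.2, V.star_mul⟩
  have : (XX V θ).1 = u * diagonal (zz θ) * (u⁻¹ : _ˣ) := rfl
  rw [this, spectrum.units_conjugate, _root_.spectrum_diagonal]

noncomputable def LP (z : Fin n → ℂ) (j : Fin n) (A : Matrix (Fin n) (Fin n) ℂ) :
    Matrix (Fin n) (Fin n) ℂ :=
  (((Finset.univ.erase j).toList).map (fun k => A - z k • 1)).prod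

noncomputable def PP (z : Fin n → ℂ) (j : Fin n) : Polynomial ℂ :=
  (((Finset.univ.erase j).toList).map (fun k => (Polynomial.X - Polynomial.C (z k)))).prod

lemma LP_eq (z : Fin n → ℂ) (j : Fin n) (A : Matrix (Fin n) (Fin n) ℂ) :
    LP z j A = Polynomial.aeval A (PP z j) := by
  rw [PP, map_list_prod, List.map_map, LP]
  congr 2
  ext1 k
  simp [Algebra.algebraMap_eq_smul_one]

lemma PP_eval (z : Fin n → ℂ) (j : Fin n) (x : ℂ) :
    (PP z j).eval x = 0 ↔ ∃ k, k ≠ j ∧ x = z k := by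
  rw [PP, Polynomial.eval_list_prod, List.prod_eq_zero_iff]
  simp only [List.map_map, List.mem_map, Finset.mem_toList, Finset.mem_erase, Finset.mem_univ,
    and_true, Function.comp, Polynomial.eval_sub, Polynomial.eval_X, Polynomial.eval_C, sub_eq_zero]

lemma nilp_of_spectrum (B : Matrix (Fin n) (Fin n) ℂ) (h : spectrum ℂ B ⊆ {0}) : B ^ n = 0 := by
  have hs := IsAlgClosed.splits B.charpoly
  have hc : B.charpoly = Polynomial.X ^ n := by
    have h1 := hs.eq_prod_roots
    have h2 : B.charpoly.roots = Multiset.replicate n 0 := by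
      rw [Multiset.eq_replicate]
      constructor
      · rw [← hs.natDegree_eq_card_roots, Matrix.charpoly_natDegree_eq_dim]; simp
      · intro b hb
        have : b ∈ spectrum ℂ B := by
          rw [Matrix.mem_spectrum_iff_isRoot_charpoly]
          exact Polynomial.isRoot_of_mem_roots hb
        exact h this
    rw [h1, h2, (Matrix.charpoly_monic B).leadingCoeff]; simp
  have := Matrix.aeval_self_charpoly B
  rw [hc] at this; simpa using this

lemma LP_nilp (z : Fin n → ℂ) (j : Fin n) (A : Matrix (Fin n) (Fin n) ℂ)
    (h : spectrum ℂ A ⊆ Set.range z) (hj : z j ∉ spectrum ℂ A) : (LP z j A) ^ n = 0 := by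
  apply nilp_of_spectrum
  rcases n with _ | n
  · exact j.elim0
  rw [LP_eq, spectrum.map_polynomial_aeval_of_nonempty A _ (spectrum.nonempty_of_isAlgClosed_of_finiteDimensional ℂ A)]
  rintro _ ⟨x, hx, rfl⟩
  obtain ⟨k, rfl⟩ := h hx
  simp only [Set.mem_singleton_iff, PP_eval]
  refine ⟨k, ?_, rfl⟩
  rintro rfl; exact hj hx

lemma LP_not (z : Fin n → ℂ) (hz : Function.Injective z) (j : Fin n) (A : Matrix (Fin n) (Fin n) ℂ)
    (hj : z j ∈ spectrum ℂ A) : (LP z j A) ^ n ≠ 0 := by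
  intro h0
  rw [LP_eq, ← map_pow] at h0
  have := spectrum.subset_polynomial_aeval A (PP z j ^ n) ⟨z j, hj, rfl⟩
  rw [h0] at this
  have hne : Nonempty (Fin n) := ⟨j⟩
  rw [spectrum.zero_eq] at this
  simp only [Set.mem_singleton_iff, Polynomial.eval_pow] at this
  have h2 := eq_zero_of_pow_eq_zero this
  rw [PP_eval] at h2
  obtain ⟨k, hk, he⟩ := h2
  exact hk (hz he).symm

lemma mem_spec_iff (A : Matrix (Fin n) (Fin n) ℂ) (x : ℂ) :
    x ∈ spectrum ℂ A ↔ (x • 1 - A).det = 0 := by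
  rw [spectrum.mem_iff, Matrix.isUnit_iff_isUnit_det, isUnit_iff_ne_zero, not_not,
    Algebra.algebraMap_eq_smul_one]

lemma spec_all_or_none (φ : UU n → Matrix (Fin n) (Fin n) ℂ) (hcont : Continuous φ)
    (hshrink : ∀ X, spectrum ℂ (φ X) ⊆ spectrum ℂ X.val) (j : Fin n) :
    (∀ V, ∀ θ ∈ Om n, zz θ j ∉ spectrum ℂ (φ (XX V θ))) ∨
    (∀ V, ∀ θ ∈ Om n, zz θ j ∈ spectrum ℂ (φ (XX V θ))) := by
  have hW : IsPreconnected ((Set.univ : Set (UU n)) ×ˢ Om n) := (preconn n).prod Om_pre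
  rw [isPreconnected_closed_iff] at hW
  have cA : Continuous (fun p : UU n × (Fin n → ℝ) => φ (XX p.1 p.2)) := hcont.comp continuous_XX
  have cz : ∀ k, Continuous (fun p : UU n × (Fin n → ℝ) => zz p.2 k) := fun k =>
    (continuous_apply k).comp (continuous_zz.comp continuous_snd)
  have h1 : IsClosed {p : UU n × (Fin n → ℝ) | (zz p.2 j • 1 - φ (XX p.1 p.2)).det = 0} := by
    refine isClosed_eq ?_ continuous_const
    exact (((cz j).smul continuous_const).sub cA).matrix_det
  have h2 : IsClosed {p : UU n × (Fin n → ℝ) | LP (zz p.2) j (φ (XX p.1 p.2)) ^ n = 0} := by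
    refine isClosed_eq ?_ continuous_const
    refine Continuous.pow ?_ n
    unfold LP
    refine continuous_list_prod _ ?_
    intro k _
    exact cA.sub ((cz k).smul continuous_const)
  have := hW _ _ h1 h2 ?_
  · by_contra hcon
    push Not at hcon
    obtain ⟨⟨V, θ, hθ, h3⟩, ⟨V', θ', hθ', h4⟩⟩ := hcon
    obtain ⟨⟨V'', θ''⟩, h5, h6, h7⟩ := this ⟨(V, θ), ⟨trivial, hθ⟩, (mem_spec_iff _ _).1 h3⟩
      ⟨(V', θ'), ⟨trivial, hθ'⟩, LP_nilp _ _ _ (by rw [← spectrum_XX V']; exact hshrink _) h4⟩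
    exact LP_not _ (Om_zz_inj h5.2) _ _ ((mem_spec_iff _ _).2 h6) h7
  · rintro ⟨V, θ⟩ h
    by_cases h3 : zz θ j ∈ spectrum ℂ (φ (XX V θ))
    · exact Or.inl ((mem_spec_iff _ _).1 h3)
    · exact Or.inr (LP_nilp _ _ _ (by rw [← spectrum_XX V]; exact hshrink _) h3)

lemma spec_all (φ : UU n → Matrix (Fin n) (Fin n) ℂ) (hcont : Continuous φ)
    (hshrink : ∀ X, spectrum ℂ (φ X) ⊆ spectrum ℂ X.val) (j : Fin n) (V : UU n) (θ : Fin n → ℝ) (hθ : θ ∈ Om n) :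
    zz θ j ∈ spectrum ℂ (φ (XX V θ)) := by
  rcases n with _ | n
  · exact j.elim0
  let B : Fin (n+1) → Prop := fun j => ∀ V, ∀ θ ∈ Om (n+1), zz θ j ∈ spectrum ℂ (φ (XX V θ))
  have hB : ∀ j V θ, θ ∈ Om (n+1) → zz θ j ∈ spectrum ℂ (φ (XX V θ)) → B j := by
    intro j V θ hθ h
    rcases spec_all_or_none φ hcont hshrink j with h' | h'
    · exact absurd h (h' V θ hθ)
    · exact h'
  have hex : ∃ j, B j := by
    obtain ⟨x, hx⟩ := spectrum.nonempty_of_isAlgClosed_of_finiteDimensional ℂ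
      (φ (XX (oneU _) (th0 (n+1))))
    have := hshrink _ hx
    rw [spectrum_XX] at this
    obtain ⟨j, rfl⟩ := this
    exact ⟨j, hB j _ _ th0_mem hx⟩
  have hstep : ∀ j, B j → B (finRotate (n+1) j) := by
    intro j hj
    let σ := finRotate (n+1)
    let θ : Fin (n+1) → ℝ := th0 (n+1)
    let θ' : Fin (n+1) → ℝ := fun i => θ (σ i) + if i = Fin.last n then 2 * Real.pi else 0
    have hzz : zz θ' = zz θ ∘ σ := by
      ext i
      simp only [zz, θ', Function.comp]
      split_ifs
      · push_cast; rw [add_mul, Complex.exp_add, Complex.exp_two_pi_mul_I, mul_one]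
      · simp
    have hX : XX (oneU _) θ = XX (mulU (oneU _) (permU σ)) θ' := by
      apply Subtype.ext
      simp only [XX]
      rw [hzz, mulU_conj]
    have hθ' : θ' ∈ Om (n+1) := by
      have hθ : θ ∈ Om (n+1) := th0_mem
      have hpi := Real.pi_gt_three
      have hc : ∀ i : Fin (n+1), (σ i = 0 ∧ i = Fin.last n) ∨
          ((σ i : ℕ) = i + 1 ∧ i ≠ Fin.last n) := by
        intro i
        by_cases h : i = Fin.last n
        · left; subst h; exact ⟨finRotate_last, rfl⟩
        · right; exact ⟨coe_finRotate_of_ne_last h, h⟩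
      constructor
      · intro i k hik
        rcases hc i with ⟨h1, h2⟩ | ⟨h1, h2⟩
        · exact absurd hik (by rw [h2]; exact (Fin.le_last k).not_gt)
        · rcases hc k with ⟨h3, h4⟩ | ⟨h3, h4⟩
          · simp only [θ', h2, h4, if_true, if_false]
            have := hθ.2 (σ i) (σ (Fin.last n)); linarith
          · simp only [θ', h2, h4, if_false, add_zero]
            apply hθ.1; rw [Fin.lt_def, h1, h3]; simpa using hik
      · intro i k
        rcases hc i with ⟨h1, h2⟩ | ⟨h1, h2⟩
        · rcases hc k with ⟨h3, h4⟩ | ⟨h3, h4⟩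
          · subst h2; subst h4; linarith
          · simp only [θ', h2, h4, if_true, if_false, add_zero]
            have : θ (σ (Fin.last n)) < θ (σ k) := by
              apply hθ.1; rw [← h2, h1, Fin.lt_def, h3]; simp
            linarith
        · rcases hc k with ⟨h3, h4⟩ | ⟨h3, h4⟩
          · simp only [θ', h2, h4, if_true, if_false, add_zero]
            have := hθ.2 (σ i) (σ (Fin.last n)); linarith
          · simp only [θ', h2, h4, if_false, add_zero]
            exact hθ.2 _ _
    have := hj (mulU (oneU _) (permU σ)) θ' hθ'
    rw [← hX, hzz] at this
    exact hB _ _ _ th0_mem this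
  obtain ⟨j0, hj0⟩ := hex
  have hpow : ∀ k : ℕ, B (((finRotate (n+1)) ^ k) j0) := by
    intro k
    induction k with
    | zero => simpa using hj0
    | succ k ih => rw [pow_succ']; exact hstep _ ih
  have hj : B j := by
    rcases n with _ | n
    · have : j = j0 := by ext; omega
      rwa [this]
    obtain ⟨k, hk⟩ := (isCycle_finRotate (n := n)).exists_pow_eq (x := j0) (y := j)
      (by rw [← Equiv.Perm.mem_support, support_finRotate]; simp)
      (by rw [← Equiv.Perm.mem_support, support_finRotate]; simp)
    rw [← hk]; exact hpow k
  exact hj V θ hθ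

lemma diag_of_spec (A : Matrix (Fin n) (Fin n) ℂ) (z : Fin n → ℂ) (hz : Function.Injective z)
    (h : ∀ j, z j ∈ spectrum ℂ A) :
    ∃ S : Matrix (Fin n) (Fin n) ℂ, IsUnit S ∧ A * S = S * diagonal z := by
  have h1 : ∀ j, ∃ v : Fin n → ℂ, v ≠ 0 ∧ A *ᵥ v = z j • v := by
    intro j
    have := (mem_spec_iff _ _).1 (h j)
    obtain ⟨v, hv, hv'⟩ := Matrix.exists_mulVec_eq_zero_iff.2 this
    refine ⟨v, hv, ?_⟩
    rw [Matrix.sub_mulVec, sub_eq_zero, Matrix.smul_mulVec, Matrix.one_mulVec] at hv'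
    exact hv'.symm
  choose v hv hAv using h1
  have hli : LinearIndependent ℂ v := by
    refine Module.End.eigenvectors_linearIndependent' (Matrix.toLin' A) z hz v ?_
    intro j
    rw [Module.End.hasEigenvector_iff, Module.End.mem_eigenspace_iff]
    exact ⟨by simpa using hAv j, hv j⟩
  refine ⟨(Matrix.of v)ᵀ, ?_, ?_⟩
  · rw [Matrix.isUnit_transpose]
    rwa [← Matrix.linearIndependent_rows_iff_isUnit]
  · ext i j
    have := congrFun (hAv j) i
    rw [mul_diagonal, mul_apply]
    simp only [transpose_apply, of_apply]
    simp only [mulVec, dotProduct, Pi.smul_apply, smul_eq_mul] at this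
    rw [this]; ring

lemma frame (φ : UU n → Matrix (Fin n) (Fin n) ℂ) (hcont : Continuous φ)
    (hcomm : ∀ X Y, X.val * Y.val = Y.val * X.val → φ X * φ Y = φ Y * φ X)
    (hshrink : ∀ X, spectrum ℂ (φ X) ⊆ spectrum ℂ X.val) (V : UU n) :
    ∃ S : Matrix (Fin n) (Fin n) ℂ, IsUnit S ∧
      ∀ θ ∈ OmC n, φ (XX V θ) * S = S * diagonal (zz θ) := by
  obtain ⟨S, hS, hA⟩ := diag_of_spec (φ (XX V (th0 n))) (zz (th0 n)) (Om_zz_inj th0_mem)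
    (fun j => spec_all φ hcont hshrink j V _ th0_mem)
  refine ⟨S, hS, ?_⟩
  have hSd : IsUnit S.det := (Matrix.isUnit_iff_isUnit_det _).1 hS
  have hSi : S⁻¹ * S = 1 := Matrix.nonsing_inv_mul _ hSd
  have hSi' : S * S⁻¹ = 1 := Matrix.mul_nonsing_inv _ hSd
  let B : (Fin n → ℝ) → Matrix (Fin n) (Fin n) ℂ := fun θ => S⁻¹ * φ (XX V θ) * S
  have hBc : Continuous B :=
    (continuous_const.matrix_mul (hcont.comp (continuous_XX' V))).matrix_mul continuous_const
  have hB0 : B (th0 n) = diagonal (zz (th0 n)) := by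
    simp only [B]; rw [Matrix.mul_assoc, hA, ← Matrix.mul_assoc, hSi, Matrix.one_mul]
  have hXc : ∀ θ η, (XX V θ).1 * (XX V η).1 = (XX V η).1 * (XX V θ).1 := by
    have : ∀ θ η, (XX V θ).1 * (XX V η).1 = V.1 * diagonal (fun i => zz θ i * zz η i) * V.1ᴴ := by
      intro θ η
      simp only [XX]
      rw [← diagonal_mul_diagonal]
      calc _ = V.1 * (diagonal (zz θ) * ((V.1ᴴ * V.1) * diagonal (zz η))) * V.1ᴴ := by
            simp only [Matrix.mul_assoc]
        _ = _ := by rw [V.star_mul, Matrix.one_mul]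
    intro θ η
    rw [this, this]; congr 3; ext i; ring
  have hBm : ∀ θ η, B θ * B η = B η * B θ := by
    have : ∀ θ η, B θ * B η = S⁻¹ * (φ (XX V θ) * φ (XX V η)) * S := by
      intro θ η
      simp only [B]
      calc _ = S⁻¹ * (φ (XX V θ) * ((S * S⁻¹) * φ (XX V η))) * S := by
            simp only [Matrix.mul_assoc]
        _ = _ := by rw [hSi', Matrix.one_mul]
    intro θ η
    rw [this, this, hcomm _ _ (hXc θ η)]
  have hoff : ∀ θ i j, i ≠ j → B θ i j = 0 := by
    intro θ i j hij
    have := hBm θ (th0 n)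
    rw [hB0] at this
    have := congrFun (congrFun this i) j
    rw [mul_diagonal, diagonal_mul] at this
    have hne : zz (th0 n) i ≠ zz (th0 n) j := fun h => hij (Om_zz_inj th0_mem h)
    have h2 : (zz (th0 n) i - zz (th0 n) j) * B θ i j = 0 := by linear_combination -this
    exact (mul_eq_zero.1 h2).resolve_left (sub_ne_zero.2 hne)
  have hBd : ∀ θ, B θ = diagonal (fun i => B θ i i) := by
    intro θ; ext i j
    by_cases h : i = j
    · subst h; simp
    · simp [h, hoff θ i j h]
  have hspec : ∀ θ j, ∃ k, B θ j j = zz θ k := by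
    intro θ j
    have h1 : B θ j j ∈ spectrum ℂ (B θ) := by
      rw [hBd θ, _root_.spectrum_diagonal]; exact ⟨j, by simp⟩
    let u : (Matrix (Fin n) (Fin n) ℂ)ˣ := ⟨S, S⁻¹, hSi', hSi⟩
    have h2 : B θ = (u⁻¹ : _ˣ) * φ (XX V θ) * u := rfl
    rw [h2, spectrum.units_conjugate'] at h1
    have := hshrink _ h1
    rw [spectrum_XX] at this
    obtain ⟨k, hk⟩ := this
    exact ⟨k, hk.symm⟩
  have cz : ∀ k, Continuous (fun θ : Fin n → ℝ => zz θ k) := fun k =>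
    (continuous_apply k).comp continuous_zz
  have cB : ∀ k, Continuous (fun θ : Fin n → ℝ => B θ k k) := fun k => hBc.matrix_elem k k
  have hOm : ∀ j, ∀ θ ∈ Om n, B θ j j = zz θ j := by
    intro j θ hθ
    by_contra hne
    have hW := isPreconnected_closed_iff.1 (Om_pre (n := n))
      {θ | B θ j j = zz θ j} (⋃ k : {k : Fin n // k ≠ j}, {θ | B θ j j = zz θ k})
      (isClosed_eq (cB j) (cz j))
      (isClosed_iUnion_of_finite fun k => isClosed_eq (cB j) (cz k)) ?_
      ⟨th0 n, th0_mem, by simp [hB0]⟩ ?_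
    · obtain ⟨η, h1, h2, h3⟩ := hW
      simp only [Set.mem_iUnion, Set.mem_ofPred_eq] at h2 h3
      obtain ⟨⟨k, hk⟩, h3⟩ := h3
      exact hk (Om_zz_inj h1 (h3.symm.trans h2))
    · intro η hη
      obtain ⟨k, hk⟩ := hspec η j
      by_cases hkj : k = j
      · subst hkj; exact Or.inl hk
      · exact Or.inr (Set.mem_iUnion.2 ⟨⟨k, hkj⟩, hk⟩)
    · obtain ⟨k, hk⟩ := hspec θ j
      refine ⟨θ, hθ, Set.mem_iUnion.2 ⟨⟨k, ?_⟩, hk⟩⟩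
      rintro rfl; exact hne hk
  have hOmC : ∀ j, ∀ θ ∈ OmC n, B θ j j = zz θ j := by
    intro j θ hθ
    have : closure (Om n) ⊆ {θ | B θ j j = zz θ j} :=
      closure_minimal (fun η hη => hOm j η hη) (isClosed_eq (cB j) (cz j))
    exact this (OmC_closure hθ)
  intro θ hθ
  have h1 : B θ = diagonal (zz θ) := by
    rw [hBd θ]; congr 1; ext j; exact hOmC j θ hθ
  rw [← h1]
  simp only [B]
  rw [← Matrix.mul_assoc, ← Matrix.mul_assoc, hSi', Matrix.one_mul]

end PU

namespace PU
variable {n : ℕ}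

structure Dat (n : ℕ) (Q : (Fin n → ℂ) → Matrix (Fin n) (Fin n) ℂ)
    (r k : (Fin n → ℂ) → (Fin n → ℂ)) : Prop where
  hQ : ∀ v, v ≠ 0 → Q v = vecMulVec (r v) (k v)
  hkr : ∀ v, v ≠ 0 → k v ⬝ᵥ r v = 1
  hc : ContinuousOn Q {0}ᶜ
  hsc : ∀ (c : ℂ) v, c ≠ 0 → v ≠ 0 → Q (c • v) = Q v
  hb : ∀ u w, u ≠ 0 → w ≠ 0 → star u ⬝ᵥ w = 0 → ∃ a b : ℂ, r (u + w) = a • r u + b • r w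
  hsupp : ∀ v i, v ≠ 0 → v i = 0 → r v i = 0

namespace Dat
variable {Q : (Fin n → ℂ) → Matrix (Fin n) (Fin n) ℂ} {r k : (Fin n → ℂ) → (Fin n → ℂ)}

lemma r_ne (D : Dat n Q r k) {v} (hv : v ≠ 0) : r v ≠ 0 := by
  intro h
  have := D.hkr v hv
  rw [h] at this; simp at this

lemma k_ne (D : Dat n Q r k) {v} (hv : v ≠ 0) : ∃ l, k v l ≠ 0 := by
  by_contra h
  push Not at h
  have := D.hkr v hv
  rw [show k v = 0 from funext h] at this; simp at this

lemma row_iff (D : Dat n Q r k) {v} (hv : v ≠ 0) (i : Fin n) : r v i = 0 ↔ ∀ l, Q v i l = 0 := by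
  constructor
  · intro h l
    rw [D.hQ v hv, vecMulVec_apply, h, zero_mul]
  · intro h
    obtain ⟨l, hl⟩ := D.k_ne hv
    have := h l
    rw [D.hQ v hv, vecMulVec_apply] at this
    exact (mul_eq_zero.1 this).resolve_right hl

lemma closed (D : Dat n Q r k) (c : ℂ → (Fin n → ℂ)) (hc : Continuous c) (h0 : ∀ x, c x ≠ 0)
    (i : Fin n) : IsClosed {x | r (c x) i = 0} := by
  have : {x | r (c x) i = 0} = ⋂ l, {x | Q (c x) i l = 0} := by
    ext x; simp [D.row_iff (h0 x)]
  rw [this]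
  have h : Continuous (fun x => Q (c x)) := D.hc.comp_continuous hc (fun x => h0 x)
  exact isClosed_iInter fun l => isClosed_eq (h.matrix_elem i l) continuous_const

lemma scale (D : Dat n Q r k) (c : ℂ) (v) (hc : c ≠ 0) (hv : v ≠ 0) :
    ∃ a : ℂ, r (c • v) = a • r v := by
  have hcv : c • v ≠ 0 := smul_ne_zero hc hv
  have h1 : Q (c • v) *ᵥ r (c • v) = r (c • v) := by
    rw [D.hQ _ hcv, vecMulVec_mulVec, D.hkr _ hcv]; simp
  refine ⟨k v ⬝ᵥ r (c • v), ?_⟩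
  rw [D.hsc c v hc hv, D.hQ _ hv, vecMulVec_mulVec] at h1
  conv_lhs => rw [← h1]
  ext; simp [mul_comm]

def e2 (i j : Fin n) (x : ℂ) : Fin n → ℂ := Pi.single i 1 + Pi.single j x
def e3 (i j l : Fin n) (x y : ℂ) : Fin n → ℂ := Pi.single i 1 + Pi.single j x + Pi.single l y

lemma pairproj (D : Dat n Q r k) {v} {i j : Fin n} (hij : i ≠ j) (hi : v i ≠ 0) :
    ∃ a : ℂ, r v i = a * r (e2 i j (v j / v i)) i ∧ r v j = a * r (e2 i j (v j / v i)) j := by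
  have hv : v ≠ 0 := fun h => hi (by rw [h]; rfl)
  have he : e2 i j (v j / v i) ≠ 0 := fun h => by
    have := congrFun h i; simp [e2, hij] at this
  set p : Fin n → ℂ := v i • e2 i j (v j / v i) with hp
  have hpi : p i = v i := by simp [hp, e2, hij]
  have hpj : p j = v j := by simp [hp, e2, hij.symm]; field_simp
  have hpl : ∀ l, l ≠ i → l ≠ j → p l = 0 := by
    intro l h1 h2; simp [hp, e2, h1, h2]
  have hp0 : p ≠ 0 := smul_ne_zero hi he
  obtain ⟨a, ha⟩ := D.scale (v i) _ hi he
  rw [← hp] at ha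
  by_cases hr : v - p = 0
  · have : v = p := sub_eq_zero.1 hr
    refine ⟨a, ?_⟩
    have h2 : r v = r p := by rw [← this]
    rw [h2, ha]; simp
  · have ho : star p ⬝ᵥ (v - p) = 0 := by
      rw [dotProduct]
      apply Finset.sum_eq_zero
      intro l _
      by_cases h1 : l = i
      · subst h1; simp [hpi]
      · by_cases h2 : l = j
        · subst h2; simp [hpj]
        · simp [hpl l h1 h2]
    obtain ⟨b, c, hbc⟩ := D.hb p (v - p) hp0 hr ho
    rw [add_sub_cancel] at hbc
    have z1 := D.hsupp (v - p) i hr (by simp [hpi])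
    have z2 := D.hsupp (v - p) j hr (by simp [hpj])
    refine ⟨b * a, ?_, ?_⟩
    · rw [hbc]; simp [z1, ha]; ring
    · rw [hbc]; simp [z2, ha]; ring

lemma e3_swap (i j l : Fin n) (x y : ℂ) : e3 i j l x y = e3 i l j y x := by
  simp only [e3]; abel

lemma L1 (D : Dat n Q r k) {i j l : Fin n} (hij : i ≠ j) (hil : i ≠ l) (hjl : j ≠ l) {x y : ℂ}
    (hx : r (e2 i j x) i = 0) (hy : r (e2 i l y) i ≠ 0) :
    r (e3 i j l x y) i = 0 ∧ r (e3 i j l x y) l = 0 := by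
  set v := e3 i j l x y with hv
  have v1 : v i = 1 := by simp [hv, e3, hij, hil]
  have v2 : v j = x := by simp [hv, e3, hij.symm, hjl]
  have v3 : v l = y := by simp [hv, e3, hil.symm, hjl.symm]
  obtain ⟨a, h1, h2⟩ := D.pairproj (v := v) hij (by rw [v1]; exact one_ne_zero)
  obtain ⟨b, h3, h4⟩ := D.pairproj (v := v) hil (by rw [v1]; exact one_ne_zero)
  rw [v1, v2, div_one] at h1 h2
  rw [v1, v3, div_one] at h3 h4
  rw [hx, mul_zero] at h1
  refine ⟨h1, ?_⟩
  rw [h1] at h3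
  have : b = 0 := by
    rcases mul_eq_zero.1 h3.symm with h | h
    · exact h
    · exact absurd h hy
  rw [h4, this, zero_mul]

lemma e3_ne {i j l : Fin n} (hij : i ≠ j) (hil : i ≠ l) (x y : ℂ) : e3 i j l x y ≠ 0 := fun h => by
  have := congrFun h i; simp [e3, hij, hil] at this

lemma e2_ne {i j : Fin n} (hij : i ≠ j) (x : ℂ) : e2 i j x ≠ 0 := fun h => by
  have := congrFun h i; simp [e2, hij] at this

lemma e2_cont (i j : Fin n) : Continuous (fun x : ℂ => e2 i j x) := by
  unfold e2
  exact continuous_pi fun m => by simp only [Pi.add_apply, Pi.single_apply]; split_ifs <;> fun_prop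

lemma L2 (D : Dat n Q r k) {i j l : Fin n} (hij : i ≠ j) (hil : i ≠ l) (hjl : j ≠ l) {x y : ℂ}
    (hx : r (e2 i j x) i = 0) (hy : y ∈ closure ({y | r (e2 i l y) i = 0}ᶜ)) :
    r (e3 i j l x y) i = 0 ∧ r (e3 i j l x y) l = 0 := by
  have hc : Continuous (fun y : ℂ => e3 i j l x y) := by
    unfold e3
    exact continuous_pi fun m => by simp only [Pi.add_apply, Pi.single_apply]; split_ifs <;> fun_prop
  have c1 := D.closed (fun y => e3 i j l x y) hc (fun y => e3_ne hij hil x y) i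
  have c2 := D.closed (fun y => e3 i j l x y) hc (fun y => e3_ne hij hil x y) l
  have := closure_minimal (s := {y | r (e2 i l y) i = 0}ᶜ)
    (fun y hy => D.L1 hij hil hjl hx hy) (c1.inter c2)
  exact this hy

lemma zero_notin (D : Dat n Q r k) {i j : Fin n} (hij : i ≠ j) : r (e2 i j 0) i ≠ 0 := by
  intro h
  apply D.r_ne (e2_ne hij 0)
  ext m
  by_cases hm : m = i
  · rw [hm, h]; rfl
  · exact D.hsupp _ _ (e2_ne hij 0) (by simp [e2, hm])

lemma exists_front (D : Dat n Q r k) {i j : Fin n} (hij : i ≠ j) {x : ℂ}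
    (hx : r (e2 i j x) i = 0) :
    ∃ x1, r (e2 i j x1) i = 0 ∧ x1 ∈ closure ({y | r (e2 i j y) i = 0}ᶜ) := by
  have hF : IsClosed {y | r (e2 i j y) i = 0} :=
    D.closed (fun y => e2 i j y) (e2_cont i j) (e2_ne hij) i
  have hne : (frontier {y | r (e2 i j y) i = 0}).Nonempty := by
    rw [nonempty_frontier_iff]
    refine ⟨⟨x, hx⟩, ?_⟩
    intro h
    have : (0:ℂ) ∈ {y | r (e2 i j y) i = 0} := by rw [h]; trivial
    exact D.zero_notin hij this
  obtain ⟨x1, h1⟩ := hne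
  rw [frontier_eq_closure_inter_closure, hF.closure_eq] at h1
  exact ⟨x1, h1.1, h1.2⟩

lemma finite_val (D : Dat n Q r k) {i j l : Fin n} (hij : i ≠ j) (hil : i ≠ l) (hjl : j ≠ l) (x : ℂ) :
    r (e2 i j x) i ≠ 0 := by
  intro hx
  by_cases hy : ∃ y, r (e2 i l y) i = 0
  · obtain ⟨y, hy⟩ := hy
    obtain ⟨x1, h1, h1'⟩ := D.exists_front hij hx
    obtain ⟨y1, h2, h2'⟩ := D.exists_front hil hy
    obtain ⟨a1, a2⟩ := D.L2 hij hil hjl h1 h2'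
    obtain ⟨b1, b2⟩ := D.L2 hil hij hjl.symm h2 h1'
    rw [e3_swap] at b2
    apply D.r_ne (e3_ne hij hil x1 y1)
    ext m
    by_cases m1 : m = i
    · rw [m1, a1]; rfl
    by_cases m2 : m = j
    · rw [m2, b2]; rfl
    by_cases m3 : m = l
    · rw [m3, a2]; rfl
    exact D.hsupp _ _ (e3_ne hij hil x1 y1) (by simp [e3, m1, m2, m3])
  · push Not at hy
    have hx0 : x ≠ 0 := by
      rintro rfl; exact D.zero_notin hij hx
    have key : ∀ s : ℂ, s ≠ 0 → r (e2 l j s) l = 0 := by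
      intro s hs
      have hy' := hy (x / s)
      obtain ⟨a1, a2⟩ := D.L1 hij hil hjl hx hy'
      set v := e3 i j l x (x / s) with hv
      have v2 : v j = x := by simp [hv, e3, hij.symm, hjl]
      have v3 : v l = x / s := by simp [hv, e3, hil.symm, hjl.symm]
      obtain ⟨a, h1, h2⟩ := D.pairproj (v := v) hjl.symm (by rw [v3]; exact div_ne_zero hx0 hs)
      have : x / (x / s) = s := by field_simp
      rw [v2, v3, this] at h1 h2
      rw [a2] at h1
      rcases mul_eq_zero.1 h1.symm with h | h
      · exfalso
        apply D.r_ne (e3_ne hij hil x (x / s))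
        rw [← hv]
        ext m
        by_cases m1 : m = i
        · rw [m1, a1]; rfl
        by_cases m2 : m = j
        · rw [m2, h2, h, zero_mul]; rfl
        by_cases m3 : m = l
        · rw [m3, a2]; rfl
        have hvm : v m = 0 := by rw [hv]; simp [e3, m1, m2, m3]
        exact D.hsupp v m (e3_ne hij hil x _) hvm
      · exact h
    have hcl : IsClosed {y | r (e2 l j y) l = 0} :=
      D.closed (fun y => e2 l j y) (e2_cont l j) (e2_ne hjl.symm) l
    have h0 : (0:ℂ) ∈ closure ({0}ᶜ : Set ℂ) := by
      rw [(dense_compl_singleton (0:ℂ)).closure_eq]; trivial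
    have := closure_minimal (s := ({0}ᶜ : Set ℂ)) (fun s hs => key s hs) hcl h0
    exact D.zero_notin hjl.symm this

lemma exists_third (hn : 3 ≤ n) (i j : Fin n) : ∃ l : Fin n, i ≠ l ∧ j ≠ l := by
  have : (({i, j} : Finset (Fin n))ᶜ).Nonempty := by
    rw [← Finset.card_pos, Finset.card_compl]
    have : ({i, j} : Finset (Fin n)).card ≤ 2 := Finset.card_le_two
    simp; omega
  obtain ⟨l, hl⟩ := this
  simp at hl
  exact ⟨l, fun h => hl.1 h.symm, fun h => hl.2 h.symm⟩

lemma fin (D : Dat n Q r k) (hn : 3 ≤ n) {i j : Fin n} (hij : i ≠ j) (x : ℂ) :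
    r (e2 i j x) i ≠ 0 := by
  obtain ⟨l, h1, h2⟩ := exists_third hn i j
  exact D.finite_val hij h1 h2 x

noncomputable def ff (r : (Fin n → ℂ) → (Fin n → ℂ)) (i j : Fin n) (x : ℂ) : ℂ :=
  r (e2 i j x) j / r (e2 i j x) i

lemma r_eq (D : Dat n Q r k) (hn : 3 ≤ n) {v} {i j : Fin n} (hij : i ≠ j) (hi : v i ≠ 0) :
    r v j = r v i * ff r i j (v j / v i) := by
  obtain ⟨a, h1, h2⟩ := D.pairproj hij hi
  have := D.fin hn hij (v j / v i)
  rw [h1, h2, ff]; field_simp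

lemma r_i_ne (D : Dat n Q r k) (hn : 3 ≤ n) {v} {i : Fin n} (hi : v i ≠ 0) : r v i ≠ 0 := by
  intro h
  have hv : v ≠ 0 := fun h => hi (by rw [h]; rfl)
  apply D.r_ne hv
  ext j
  by_cases hj : i = j
  · rw [← hj, h]; rfl
  · rw [D.r_eq hn hj hi, h, zero_mul]; rfl

lemma ff_zero (D : Dat n Q r k) {i j : Fin n} (hij : i ≠ j) : ff r i j 0 = 0 := by
  rw [ff, D.hsupp _ j (e2_ne hij 0) (by simp [e2, hij.symm]), zero_div]

lemma ff_ne (D : Dat n Q r k) (hn : 3 ≤ n) {i j : Fin n} (hij : i ≠ j) {x : ℂ} (hx : x ≠ 0) :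
    ff r i j x ≠ 0 :=
  div_ne_zero (D.r_i_ne hn (by simpa [e2, hij.symm] using hx)) (D.fin hn hij x)

lemma ff_mul (D : Dat n Q r k) (hn : 3 ≤ n) {i j l : Fin n} (hij : i ≠ j) (hil : i ≠ l) (hjl : j ≠ l)
    (x t : ℂ) : ff r i l (x * t) = ff r i j x * ff r j l t := by
  by_cases hx : x = 0
  · subst hx; rw [zero_mul, D.ff_zero hil, D.ff_zero hij, zero_mul]
  set v := e3 i j l x (x * t) with hv
  have v1 : v i = 1 := by simp [hv, e3, hij, hil]
  have v2 : v j = x := by simp [hv, e3, hij.symm, hjl]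
  have v3 : v l = x * t := by simp [hv, e3, hil.symm, hjl.symm]
  have hi : v i ≠ 0 := by rw [v1]; exact one_ne_zero
  have h1 := D.r_eq hn hij hi
  have h2 := D.r_eq hn hil hi
  have h3 := D.r_eq hn hjl (v := v) (by rw [v2]; exact hx)
  rw [v1, v2, div_one] at h1
  rw [v1, v3, div_one] at h2
  rw [v2, v3, mul_div_cancel_left₀ _ hx] at h3
  have h0 := D.r_i_ne hn hi
  apply mul_left_cancel₀ h0
  rw [← h2, h3, h1, mul_assoc]

lemma ff_inv (D : Dat n Q r k) (hn : 3 ≤ n) {i j : Fin n} (hij : i ≠ j) {x : ℂ} (hx : x ≠ 0) :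
    ff r i j x * ff r j i (x⁻¹) = 1 := by
  set v := e2 i j x with hv
  have v1 : v i = 1 := by simp [hv, e2, hij]
  have v2 : v j = x := by simp [hv, e2, hij.symm]
  have hi : v i ≠ 0 := by rw [v1]; exact one_ne_zero
  have h1 := D.r_eq hn hij hi
  have h3 := D.r_eq hn hij.symm (v := v) (by rw [v2]; exact hx)
  rw [v1, v2, div_one] at h1
  rw [v2, v1, one_div] at h3
  have h0 := D.r_i_ne hn hi
  apply mul_left_cancel₀ h0
  rw [mul_one, ← mul_assoc, ← h1, ← h3]

lemma ff_cont (D : Dat n Q r k) (hn : 3 ≤ n) {i j : Fin n} (hij : i ≠ j) :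
    Continuous (ff r i j) := by
  rw [continuous_iff_continuousAt]
  intro x
  obtain ⟨l, hl⟩ := D.k_ne (e2_ne hij x)
  have hQc : Continuous (fun x => Q (e2 i j x)) := D.hc.comp_continuous (e2_cont i j) (e2_ne hij)
  have hne : Q (e2 i j x) i l ≠ 0 := by
    rw [D.hQ _ (e2_ne hij x), vecMulVec_apply]
    exact mul_ne_zero (D.fin hn hij x) hl
  have h1 : ContinuousAt (fun x => Q (e2 i j x) j l / Q (e2 i j x) i l) x :=
    (hQc.matrix_elem j l).continuousAt.div (hQc.matrix_elem i l).continuousAt hne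
  refine h1.congr ?_
  have hev : ∀ᶠ y in nhds x, Q (e2 i j y) i l ≠ 0 :=
    (hQc.matrix_elem i l).continuousAt.eventually_ne hne
  filter_upwards [hev] with y hy
  rw [D.hQ _ (e2_ne hij y), vecMulVec_apply] at hy ⊢
  rw [vecMulVec_apply, ff]
  have := right_ne_zero_of_mul hy
  have := left_ne_zero_of_mul hy
  field_simp

lemma hb' (D : Dat n Q r k) {u o : Fin n → ℂ} (hu : u ≠ 0) (ho : o ≠ 0) (h : star u ⬝ᵥ o = 0)
    (s t : ℂ) (hst : s • u + t • o ≠ 0) : ∃ a b : ℂ, r (s • u + t • o) = a • r u + b • r o := by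
  by_cases hs : s = 0
  · by_cases ht : t = 0
    · simp [hs, ht] at hst
    · obtain ⟨a, ha⟩ := D.scale t o ht ho
      exact ⟨0, a, by simp [hs, ha]⟩
  · by_cases ht : t = 0
    · obtain ⟨a, ha⟩ := D.scale s u hs hu
      exact ⟨a, 0, by simp [ht, ha]⟩
    · obtain ⟨a, ha⟩ := D.scale t o ht ho
      obtain ⟨b, hb⟩ := D.scale s u hs hu
      obtain ⟨c, d, hcd⟩ := D.hb (s • u) (t • o) (smul_ne_zero hs hu) (smul_ne_zero ht ho)
        (by rw [star_smul, smul_dotProduct, dotProduct_smul, h]; simp)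
      refine ⟨c * b, d * a, ?_⟩
      rw [hcd, ha, hb, smul_smul, smul_smul]

open scoped ComplexOrder in
lemma span (D : Dat n Q r k) (hn : 3 ≤ n) {u w : Fin n → ℂ} {i : Fin n} (hu : u i ≠ 0) (hw : w i = 0)
    (hw0 : w ≠ 0) : ∃ a b : ℂ, r (u + w) = a • r u + b • r w := by
  have hu0 : u ≠ 0 := fun h => hu (by rw [h]; rfl)
  have huu : star u ⬝ᵥ u ≠ 0 := by
    intro h; exact hu0 (dotProduct_star_self_eq_zero.1 h)
  set s : ℂ := (star u ⬝ᵥ w) / (star u ⬝ᵥ u) with hs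
  set o : Fin n → ℂ := w - s • u with ho
  have hwo : w = s • u + (1:ℂ) • o := by rw [ho]; simp
  have ho0 : o ≠ 0 := by
    intro h
    rw [h] at hwo
    have := congrFun hwo i
    simp [hw, hu] at this
    rw [this] at hwo
    exact hw0 (by simpa using hwo)
  have horth : star u ⬝ᵥ o = 0 := by
    rw [ho, dotProduct_sub, dotProduct_smul, hs, smul_eq_mul]; field_simp; simp
  obtain ⟨a, b, h1⟩ := D.hb' hu0 ho0 horth s 1 (by rw [← hwo]; exact hw0)
  rw [← hwo] at h1
  have huw : u + w = (1 + s) • u + (1:ℂ) • o := by rw [hwo]; module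
  have huw0 : u + w ≠ 0 := fun h => hu (by have := congrFun h i; simpa [hw] using this)
  obtain ⟨c, d, h2⟩ := D.hb' hu0 ho0 horth (1 + s) 1 (by rw [← huw]; exact huw0)
  rw [← huw] at h2
  have hb0 : b ≠ 0 := by
    rintro rfl
    have h3 := congrFun h1 i
    rw [D.hsupp w i hw0 hw] at h3
    simp [D.r_i_ne hn hu] at h3
    rw [h3] at h1
    exact D.r_ne hw0 (by simpa using h1)
  refine ⟨c - d * b⁻¹ * a, d * b⁻¹, ?_⟩
  rw [h1, h2]
  ext m
  simp; field_simp; ring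

theorem main (D : Dat n Q r k) (hn : 3 ≤ n) : ∃ m : Fin n → ℂ, (∀ i, m i ≠ 0) ∧
    ((∀ v, v ≠ 0 → ∃ c : ℂ, c ≠ 0 ∧ ∀ i, r v i = c * (m i * v i)) ∨
     (∀ v, v ≠ 0 → ∃ c : ℂ, c ≠ 0 ∧ ∀ i, r v i = c * (m i * star (v i)))) := by
  let z : Fin n := ⟨0, by omega⟩
  let o : Fin n := ⟨1, by omega⟩
  let w : Fin n := ⟨2, by omega⟩
  have hzo : z ≠ o := by simp [z, o]
  have hzw : z ≠ w := by simp [z, w]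
  have how : o ≠ w := by simp [o, w]
  let m : Fin n → ℂ := fun j => if j = z then 1 else ff r z j 1
  have mz : m z = 1 := by simp [m]
  have mj : ∀ j, z ≠ j → m j = ff r z j 1 := fun j h => by simp [m, h.symm]
  have m0 : ∀ i, m i ≠ 0 := by
    intro i
    by_cases h : z = i
    · rw [← h, mz]; exact one_ne_zero
    · rw [mj i h]; exact D.ff_ne hn h one_ne_zero
  let c : ℂ → ℂ := fun x => ff r z o x / m o
  have c0 : c 0 = 0 := by simp [c, D.ff_zero hzo]
  have c1 : c 1 = 1 := by simp only [c, mj o hzo]; exact div_self (D.ff_ne hn hzo one_ne_zero)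
  have g1 : ∀ j, z ≠ j → ∀ x, ff r z j x = c x * m j := by
    intro j hj x
    by_cases hjo : o = j
    · subst hjo; simp only [c]; rw [div_mul_cancel₀ _ (m0 o)]
    · have h1 := D.ff_mul hn hzo hj hjo x 1
      have h2 := D.ff_mul hn hzo hj hjo 1 1
      rw [mul_one] at h1 h2
      rw [← mj j hj, ← mj o hzo] at h2
      rw [h1, h2]; simp only [c]; field_simp [m0 o]
  have g2 : ∀ j l, z ≠ j → z ≠ l → j ≠ l → ∀ t, ff r j l t = c t * m l / m j := by
    intro j l hj hl hjl t
    have h1 := D.ff_mul hn hj hl hjl 1 t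
    rw [one_mul, g1 l hl, ← mj j hj] at h1
    rw [h1]; field_simp [m0 j]
  have cmul : ∀ x t, c (x * t) = c x * c t := by
    intro x t
    have h1 := D.ff_mul hn hzo hzw how x t
    rw [g1 w hzw, g1 o hzo, g2 o w hzo hzw how] at h1
    have := m0 o; have := m0 w
    field_simp at h1; exact h1
  have cne : ∀ x, x ≠ 0 → c x ≠ 0 := by
    intro x hx h
    have := cmul x x⁻¹
    rw [mul_inv_cancel₀ hx, c1, h, zero_mul] at this
    exact one_ne_zero this
  have cdiv : ∀ x y, y ≠ 0 → c (x / y) = c x / c y := by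
    intro x y hy
    have := cmul (x / y) y
    rw [div_mul_cancel₀ _ hy] at this
    rw [this, mul_div_cancel_right₀ _ (cne y hy)]
  have g3 : ∀ i j, i ≠ j → ∀ x, ff r i j x = c x * m j / m i := by
    intro i j hij x
    by_cases hi : z = i
    · subst hi; rw [g1 j hij, mz, div_one]
    · by_cases hj : z = j
      · subst hj
        by_cases hx : x = 0
        · subst hx; rw [D.ff_zero hij, c0]; simp
        · have h1 := D.ff_inv hn hij hx
          rw [g1 i hi] at h1
          have h2 : c x⁻¹ = (c x)⁻¹ := by
            have := cdiv 1 x hx; rw [c1, one_div, one_div] at this; exact this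
          rw [h2] at h1
          have := cne x hx; have := m0 i
          rw [mz]; field_simp at h1 ⊢; linear_combination h1
      · exact g2 i j hi hj hij x
  have form : ∀ v, v ≠ 0 → ∃ a : ℂ, a ≠ 0 ∧ ∀ j, r v j = a * (m j * c (v j)) := by
    intro v hv
    obtain ⟨i, hi⟩ : ∃ i, v i ≠ 0 := by
      by_contra h; push Not at h; exact hv (funext h)
    have hri := D.r_i_ne hn hi
    have hmi := m0 i
    have hci := cne _ hi
    refine ⟨r v i / (m i * c (v i)), div_ne_zero hri (mul_ne_zero hmi hci), ?_⟩
    intro j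
    by_cases hij : i = j
    · subst hij; field_simp
    · rw [D.r_eq hn hij hi, g3 i j hij, cdiv _ _ hi]; field_simp
  have cadd' : ∀ x y, c (-1) * (c (x + y) - c x) = - c y := by
    intro x y
    set u : Fin n → ℂ := e3 z o w x 1 with hu
    set w' : Fin n → ℂ := Pi.single o y + Pi.single w (-1) with hw'
    have u1 : u z = 1 := by simp [hu, e3, hzo, hzw]
    have u2 : u o = x := by simp [hu, e3, hzo.symm, how]
    have u3 : u w = 1 := by simp [hu, e3, hzw.symm, how.symm]
    have w1 : w' z = 0 := by simp [hw', hzo, hzw]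
    have w2 : w' o = y := by simp [hw', how]
    have w3 : w' w = -1 := by simp [hw', how.symm]
    have hw0 : w' ≠ 0 := fun h => by rw [h] at w3; simp at w3
    have hu0 : u ≠ 0 := fun h => by rw [h] at u1; simp at u1
    have huw0 : u + w' ≠ 0 := fun h => by
      have := congrFun h z; simp [u1, w1] at this
    obtain ⟨a, b, hab⟩ := D.span hn (u := u) (w := w') (i := z) (by rw [u1]; exact one_ne_zero) w1 hw0
    obtain ⟨l1, hl1, f1⟩ := form u hu0
    obtain ⟨l2, hl2, f2⟩ := form w' hw0
    obtain ⟨l3, hl3, f3⟩ := form (u + w') huw0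
    have E : ∀ j, l3 * (m j * c (u j + w' j)) = a * (l1 * (m j * c (u j))) + b * (l2 * (m j * c (w' j))) := by
      intro j
      have := congrFun hab j
      simp only [Pi.add_apply, Pi.smul_apply, smul_eq_mul] at this
      rw [f1, f2, f3] at this
      exact this
    have E1 := E z
    have E2 := E o
    have E3 := E w
    rw [u1, w1, add_zero, c0, c1, mz] at E1
    rw [u2, w2] at E2
    rw [u3, w3, add_neg_cancel, c0, c1] at E3
    have hmo := m0 o
    have hmw := m0 w
    have E2' : l3 * c (x + y) = a * l1 * c x + b * l2 * c y := by
      apply mul_left_cancel₀ hmo; linear_combination E2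
    have E3' : 0 = a * l1 + b * l2 * c (-1) := by
      apply mul_left_cancel₀ hmw; linear_combination E3
    have E1' : l3 = a * l1 := by linear_combination E1
    apply mul_left_cancel₀ hl3
    linear_combination (c (-1)) * E2' - c x * c (-1) * E1' - c y * E3' + c y * E1'
  have cm1 : c (-1) = -1 := by
    have := cadd' 0 1
    rw [zero_add, c0, c1] at this; linear_combination this
  have cadd : ∀ x y, c (x + y) = c x + c y := by
    intro x y
    have := cadd' x y
    rw [cm1] at this; linear_combination -this
  have ccont : Continuous c := (D.ff_cont hn hzo).div_const _
  let ch : ℂ →+* ℂ :=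
    { toFun := c, map_one' := c1, map_mul' := cmul, map_zero' := c0, map_add' := cadd }
  refine ⟨m, m0, ?_⟩
  rcases Complex.ringHom_eq_id_or_conj_of_continuous (f := ch) ccont with h | h
  · left
    have hc : ∀ x, c x = x := fun x => by
      have := congrArg (fun f : ℂ →+* ℂ => f x) h; exact this
    intro v hv
    obtain ⟨a, ha, f⟩ := form v hv
    exact ⟨a, ha, fun i => by rw [f i, hc]⟩
  · right
    have hc : ∀ x, c x = star x := fun x => by
      have := congrArg (fun f : ℂ →+* ℂ => f x) h; exact this
    intro v hv
    obtain ⟨a, ha, f⟩ := form v hv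
    exact ⟨a, ha, fun i => by rw [f i, hc]⟩

end Dat
end PU

namespace PU
variable {n : ℕ}

noncomputable def refl (v : Fin n → ℂ) : Matrix (Fin n) (Fin n) ℂ :=
  1 - (2 / (star v ⬝ᵥ v)) • vecMulVec v (star v)

lemma refl_herm (v : Fin n → ℂ) : (refl v)ᴴ = refl v := by
  have hN : star (star v ⬝ᵥ v) = star v ⬝ᵥ v := by
    simp only [dotProduct, star_sum, star_mul', Pi.star_apply, star_star, mul_comm]
  unfold refl
  rw [conjTranspose_sub, conjTranspose_one, conjTranspose_smul, conjTranspose_vecMulVec, star_star,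
    star_div₀, hN]
  simp

lemma refl_unit (v : Fin n → ℂ) : refl v * (refl v)ᴴ = 1 := by
  rw [refl_herm]
  unfold refl
  set N := star v ⬝ᵥ v with hN
  have hP : vecMulVec v (star v) * vecMulVec v (star v) = N • vecMulVec v (star v) := by
    rw [vecMulVec_mul_vecMulVec]
    ext a b; simp [vecMulVec_apply, ← hN]; ring
  rw [Matrix.sub_mul, Matrix.one_mul, Matrix.mul_sub, Matrix.mul_one, Matrix.smul_mul,
    Matrix.mul_smul, hP, smul_smul, smul_smul]
  by_cases h : N = 0
  · simp [h]
  · have : 2 / N * (2 / N) * N = 2 / N + 2 / N := by field_simp; norm_num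
    rw [this, add_smul]; abel

lemma refl_smul (c : ℂ) (v : Fin n → ℂ) (hc : c ≠ 0) : refl (c • v) = refl v := by
  unfold refl
  congr 1
  rw [star_smul, smul_dotProduct, dotProduct_smul, vecMulVec_smul, smul_vecMulVec, smul_smul,
    smul_smul]
  congr 1
  have : star c ≠ 0 := star_ne_zero.2 hc
  by_cases h : star v ⬝ᵥ v = 0
  · simp [h]
  · simp only [smul_eq_mul]
    field_simp

open scoped ComplexOrder in
lemma refl_cont : ContinuousOn (refl (n := n)) {0}ᶜ := by
  unfold refl
  have h1 : Continuous (fun v : Fin n → ℂ => star v ⬝ᵥ v) := by fun_prop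
  have h2 : Continuous (fun v : Fin n → ℂ => vecMulVec v (star v)) := by fun_prop
  refine continuousOn_const.sub (ContinuousOn.smul (continuousOn_const.div h1.continuousOn ?_)
    h2.continuousOn)
  intro v hv h
  exact hv (dotProduct_star_self_eq_zero.1 h)

noncomputable def thj (j : Fin n) : Fin n → ℝ :=
  fun i => if i < j then 0 else if i = j then Real.pi else 2 * Real.pi

lemma thj_mem (j : Fin n) : thj j ∈ OmC n := by
  have := Real.pi_pos
  constructor
  · intro i l h
    unfold thj
    split_ifs <;> first | linarith | (exfalso; omega)
  · intro i l
    unfold thj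
    split_ifs <;> linarith

lemma zz_thj (j : Fin n) : zz (thj j) = 1 - (2 : ℂ) • Pi.single j (1:ℂ) := by
  ext i
  unfold zz thj
  rcases lt_trichotomy i j with h | h | h
  · simp [h, h.ne]
  · subst h; simp; norm_num
  · simp [h.ne', not_lt.2 h.le, Complex.exp_two_pi_mul_I]

lemma dsplit (j : Fin n) : diagonal (1 - (2:ℂ) • (Pi.single j (1:ℂ) : Fin n → ℂ)) =
    1 - (2:ℂ) • diagonal (Pi.single j (1:ℂ)) := by
  ext a b
  by_cases h : a = b
  · subst h; simp
  · simp [h]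

def col (V : UU n) (j : Fin n) : Fin n → ℂ := fun l => V.1 l j

lemma col_orth (V : UU n) (i j : Fin n) : star (col V i) ⬝ᵥ col V j = if i = j then 1 else 0 := by
  have := congrFun (congrFun V.star_mul i) j
  rw [Matrix.one_apply] at this
  rw [← this]; rfl

lemma col_ne (V : UU n) (i : Fin n) : col V i ≠ 0 := by
  intro h
  have := col_orth V i i
  rw [h] at this; simp at this

lemma refl_col (V : UU n) (j : Fin n) : refl (col V j) = (XX V (thj j)).1 := by
  unfold refl
  rw [col_orth]
  simp only [XX, zz_thj, if_true]
  have := dsplit j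
  rw [this, Matrix.mul_sub, Matrix.sub_mul, Matrix.mul_one, V.2, Matrix.mul_smul, Matrix.smul_mul]
  congr 1
  rw [div_one]
  congr 1
  ext a b
  rw [Matrix.mul_apply, Finset.sum_eq_single j]
  · simp [vecMulVec_apply, col, Matrix.mul_diagonal]
  · intro i _ hi; simp [Matrix.mul_diagonal, hi]
  · simp

noncomputable def QQ (φ : UU n → Matrix (Fin n) (Fin n) ℂ) (v : Fin n → ℂ) :
    Matrix (Fin n) (Fin n) ℂ := (1 / 2 : ℂ) • (1 - φ ⟨refl v, refl_unit v⟩)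

lemma QQ_smul (φ : UU n → Matrix (Fin n) (Fin n) ℂ) (c : ℂ) (v : Fin n → ℂ) (hc : c ≠ 0) :
    QQ φ (c • v) = QQ φ v := by
  unfold QQ
  have : (⟨refl (c • v), refl_unit (c • v)⟩ : UU n) = ⟨refl v, refl_unit v⟩ :=
    Subtype.ext (refl_smul c v hc)
  rw [this]

lemma QQ_cont (φ : UU n → Matrix (Fin n) (Fin n) ℂ) (hcont : Continuous φ) :
    ContinuousOn (QQ φ) {0}ᶜ := by
  unfold QQ
  have h : ContinuousOn (fun v : Fin n → ℂ => (⟨refl v, refl_unit v⟩ : UU n)) {0}ᶜ :=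
    continuousOn_iff_continuous_domRestrict.2 (Continuous.subtype_mk
      (continuousOn_iff_continuous_domRestrict.1 refl_cont) _)
  have h2 := (continuousOn_const (c := (1 : Matrix (Fin n) (Fin n) ℂ))).sub (hcont.comp_continuousOn h)
  exact h2.const_smul (1 / 2 : ℂ)

lemma QQ_col (φ : UU n → Matrix (Fin n) (Fin n) ℂ) (V : UU n) (S : Matrix (Fin n) (Fin n) ℂ)
    (h : ∀ θ ∈ OmC n, φ (XX V θ) * S = S * diagonal (zz θ)) (j : Fin n) :
    QQ φ (col V j) * S = S * diagonal (Pi.single j 1) := by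
  unfold QQ
  have : (⟨refl (col V j), refl_unit _⟩ : UU n) = XX V (thj j) := Subtype.ext (refl_col V j)
  rw [this, Matrix.smul_mul, Matrix.sub_mul, h _ (thj_mem j), zz_thj, Matrix.one_mul]
  have := dsplit j
  rw [this, Matrix.mul_sub, Matrix.mul_one, sub_sub_cancel, Matrix.mul_smul, smul_smul]
  norm_num

lemma exists_V (u : Fin n → Fin n → ℂ) (s : Set (Fin n)) (h0 : ∀ i ∈ s, u i ≠ 0)
    (ho : ∀ i ∈ s, ∀ j ∈ s, i ≠ j → star (u i) ⬝ᵥ u j = 0) :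
    ∃ V : UU n, ∀ i ∈ s, ∃ c : ℂ, c ≠ 0 ∧ u i = c • col V i := by
  let x : Fin n → EuclideanSpace ℂ (Fin n) := fun i => WithLp.toLp 2 (u i)
  let w : Fin n → EuclideanSpace ℂ (Fin n) := fun i => ((‖x i‖ : ℂ)⁻¹) • x i
  have hx0 : ∀ i ∈ s, x i ≠ 0 := fun i hi h => h0 i hi (by
    have := congrArg WithLp.ofLp h; exact this)
  have hw : Orthonormal ℂ (s.domRestrict w) := by
    constructor
    · rintro ⟨i, hi⟩
      have : ‖x i‖ ≠ 0 := norm_ne_zero_iff.2 (hx0 i hi)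
      simp [w, Set.domRestrict, norm_smul, this]
    · rintro ⟨i, hi⟩ ⟨j, hj⟩ hij
      have hij' : i ≠ j := fun h => hij (Subtype.ext h)
      have : inner ℂ (x i) (x j) = 0 := by
        rw [EuclideanSpace.inner_eq_star_dotProduct, dotProduct_comm]; exact ho i hi j hj hij'
      simp [w, Set.domRestrict, inner_smul_left, inner_smul_right, this]
  obtain ⟨b, hb⟩ := hw.exists_orthonormalBasis_extension_of_card_eq (by simp)
  let M : Matrix (Fin n) (Fin n) ℂ := Matrix.of fun l i => b i l
  have hM : Mᴴ * M = 1 := by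
    ext i j
    have := (orthonormal_iff_ite.1 b.orthonormal) i j
    rw [EuclideanSpace.inner_eq_star_dotProduct, dotProduct_comm] at this
    rw [Matrix.one_apply, ← this]; rfl
  refine ⟨⟨M, mul_eq_one_comm.mp hM⟩, fun i hi => ⟨(‖x i‖ : ℂ), ?_, ?_⟩⟩
  · exact_mod_cast norm_ne_zero_iff.2 (hx0 i hi)
  · have hne : (‖x i‖ : ℂ) ≠ 0 := by exact_mod_cast norm_ne_zero_iff.2 (hx0 i hi)
    ext l
    have : b i l = (‖x i‖ : ℂ)⁻¹ * u i l := by rw [hb i hi]; rfl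
    change u i l = (‖x i‖ : ℂ) * b i l
    rw [this]; field_simp

end PU

namespace PU
variable {n : ℕ}

def HF (φ : UU n → Matrix (Fin n) (Fin n) ℂ) : Prop :=
  ∀ V : UU n, ∃ S : Matrix (Fin n) (Fin n) ℂ, IsUnit S ∧
      ∀ θ ∈ OmC n, φ (XX V θ) * S = S * diagonal (zz θ)

variable {φ : UU n → Matrix (Fin n) (Fin n) ℂ}

lemma QQ_orth (hF : HF φ) (hn : 3 ≤ n) (u w : Fin n → ℂ) (hu : u ≠ 0) (hw : w ≠ 0)
    (h : star u ⬝ᵥ w = 0) : ∃ V : UU n, ∃ i j : Fin n, i ≠ j ∧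
      QQ φ u = QQ φ (col V i) ∧ QQ φ w = QQ φ (col V j) ∧
      ∃ a b : ℂ, u = a • col V i ∧ w = b • col V j := by
  let i : Fin n := ⟨0, by omega⟩
  let j : Fin n := ⟨1, by omega⟩
  have hij : i ≠ j := by simp [i, j]
  have h' : star w ⬝ᵥ u = 0 := by
    have := congrArg star h
    rw [← star_dotProduct_star, star_star, star_zero, dotProduct_comm] at this
    rw [dotProduct_comm] at this; exact this
  obtain ⟨V, hV⟩ := exists_V (fun l => if l = i then u else w) {i, j}
    (by
      intro l hl
      by_cases hli : l = i
      · simpa [hli] using hu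
      · simpa [hli] using hw)
    (by
      intro l hl m hm hlm
      by_cases hli : l = i
      · have : m ≠ i := fun h => hlm (hli.trans h.symm)
        simpa [hli, this] using h
      · have hlj : l = j := by
          rcases hl with h | h
          · exact absurd h hli
          · exact h
        have : m = i := by
          rcases hm with h | h
          · exact h
          · exact absurd (hlj.trans h.symm) hlm
        simpa [hli, this] using h')
  obtain ⟨a, ha, hua⟩ := hV i (by simp)
  obtain ⟨b, hb, hwb⟩ := hV j (by simp)
  simp only [if_true, hij.symm, if_false] at hua hwb
  exact ⟨V, i, j, hij, by rw [hua, QQ_smul _ _ _ ha], by rw [hwb, QQ_smul _ _ _ hb],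
    a, b, hua, hwb⟩

lemma QQ_mul (hF : HF φ) (hn : 3 ≤ n) (u w : Fin n → ℂ) (hu : u ≠ 0) (hw : w ≠ 0)
    (h : star u ⬝ᵥ w = 0) : QQ φ u * QQ φ w = 0 := by
  obtain ⟨V, i, j, hij, h1, h2, -⟩ := QQ_orth hF hn u w hu hw h
  obtain ⟨S, hS, hSt⟩ := hF V
  rw [h1, h2]
  apply hS.mul_left_inj.1
  rw [Matrix.mul_assoc, QQ_col φ V S hSt j, ← Matrix.mul_assoc, QQ_col φ V S hSt i, Matrix.mul_assoc,
    diagonal_mul_diagonal]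
  have : (fun l => (Pi.single i 1 : Fin n → ℂ) l * (Pi.single j 1 : Fin n → ℂ) l) = 0 := by
    ext l
    by_cases hl : l = i
    · have : l ≠ j := fun h => hij (hl.symm.trans h)
      simp [this]
    · simp [hl]
  rw [this]; simp

lemma QQ_sum (hF : HF φ) (V : UU n) : ∑ j, QQ φ (col V j) = 1 := by
  obtain ⟨S, hS, hSt⟩ := hF V
  apply hS.mul_left_inj.1
  rw [Finset.sum_mul, Finset.sum_congr rfl (fun j _ => QQ_col φ V S hSt j), ← Finset.mul_sum,
    Matrix.one_mul]
  have : ∑ j, diagonal (Pi.single j (1:ℂ) : Fin n → ℂ) = 1 := by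
    ext a b
    rw [Matrix.sum_apply]
    by_cases h : a = b
    · subst h; simp [Pi.single_apply]
    · simp [h]
  rw [this, Matrix.mul_one]

lemma QQ_rank (hF : HF φ) (hn : 3 ≤ n) (v : Fin n → ℂ) (hv : v ≠ 0) :
    ∃ r k : Fin n → ℂ, QQ φ v = vecMulVec r k ∧ k ⬝ᵥ r = 1 := by
  let i : Fin n := ⟨0, by omega⟩
  obtain ⟨V, hV⟩ := exists_V (fun _ => v) {i} (fun _ _ => hv)
    (fun a ha b hb hab => absurd ((ha : a = i).trans (hb : b = i).symm) hab)
  obtain ⟨c, hc, hvc⟩ := hV i rfl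
  obtain ⟨S, hS, hSt⟩ := hF V
  have hSd : IsUnit S.det := (Matrix.isUnit_iff_isUnit_det _).1 hS
  have h1 := QQ_col φ V S hSt i
  refine ⟨fun l => S l i, fun l => S⁻¹ i l, ?_, ?_⟩
  · rw [hvc, QQ_smul _ _ _ hc]
    have h2 : QQ φ (col V i) = S * diagonal (Pi.single i 1) * S⁻¹ := by
      rw [← h1, Matrix.mul_assoc, Matrix.mul_nonsing_inv _ hSd, Matrix.mul_one]
    rw [h2]
    ext a b
    rw [Matrix.mul_apply, Finset.sum_eq_single i]
    · simp [vecMulVec_apply, Matrix.mul_diagonal]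
    · intro j _ hj; simp [Matrix.mul_diagonal, hj]
    · simp
  · have := congrFun (congrFun (Matrix.nonsing_inv_mul S hSd) i) i
    rw [Matrix.one_apply_eq] at this
    rw [← this]; rfl

lemma vmv_mulVec (r k x : Fin n → ℂ) : vecMulVec r k *ᵥ x = (k ⬝ᵥ x) • r := by
  rw [vecMulVec_mulVec]; ext; simp [mul_comm]

lemma finish {A S T W Wi G D : Matrix (Fin n) (Fin n) ℂ} (hS : IsUnit S) (hT : IsUnit T)
    (hSG : S = T * W * G) (hW : W * Wi = 1) (hGD : G * D = D * G) (h : A * S = S * D) :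
    A = T * (W * D * Wi) * T⁻¹ := by
  have hTd : IsUnit T.det := (Matrix.isUnit_iff_isUnit_det _).1 hT
  have hG : IsUnit G := by
    rw [Matrix.isUnit_iff_isUnit_det] at hS ⊢
    rw [hSG, det_mul] at hS
    exact isUnit_of_mul_isUnit_right hS
  have h1 : A * (T * W) = T * W * D := by
    apply hG.mul_left_inj.1
    rw [Matrix.mul_assoc, ← hSG, h, hSG, Matrix.mul_assoc, hGD, ← Matrix.mul_assoc]
  have h2 : A * T = T * (W * D * Wi) := by
    calc A * T = A * (T * W) * Wi := by
          rw [Matrix.mul_assoc, Matrix.mul_assoc, hW, Matrix.mul_one]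
      _ = _ := by rw [h1]; simp only [Matrix.mul_assoc]
  rw [← h2, Matrix.mul_assoc, Matrix.mul_nonsing_inv _ hTd, Matrix.mul_one]

lemma main_norm (hn : 3 ≤ n) (hcont : Continuous φ) (hF : HF φ)
    (h1 : ∀ θ ∈ OmC n, φ (XX (oneU n) θ) = diagonal (zz θ)) :
    ∃ T : Matrix (Fin n) (Fin n) ℂ, IsUnit T ∧
      ((∀ X, φ X = T * X.val * T⁻¹) ∨ (∀ X, φ X = T * X.val.transpose * T⁻¹)) := by
  have hrk : ∀ v : Fin n → ℂ, ∃ r k : Fin n → ℂ, v ≠ 0 → QQ φ v = vecMulVec r k ∧ k ⬝ᵥ r = 1 := by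
    intro v
    by_cases hv : v = 0
    · exact ⟨0, 0, fun h => absurd hv h⟩
    · obtain ⟨r, k, h⟩ := QQ_rank hF hn v hv
      exact ⟨r, k, fun _ => h⟩
  choose r k hrk using hrk
  have hfix : ∀ v, v ≠ 0 → QQ φ v *ᵥ r v = r v := by
    intro v hv
    rw [(hrk v hv).1, vmv_mulVec, (hrk v hv).2, one_smul]
  have D : Dat n (QQ φ) r k :=
    { hQ := fun v hv => (hrk v hv).1
      hkr := fun v hv => (hrk v hv).2
      hc := QQ_cont φ hcont
      hsc := fun c v hc _ => QQ_smul φ c v hc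
      hb := by
        intro u w hu hw huw
        obtain ⟨V, i, j, hij, hui, hwj, a, b, ha, hb⟩ := QQ_orth hF hn u w hu hw huw
        by_cases huw0 : u + w = 0
        · exfalso
          have hw' : w = -u := by rw [eq_neg_iff_add_eq_zero, add_comm]; exact huw0
          have h2 := QQ_mul hF hn u w hu hw huw
          have : QQ φ w = QQ φ u := by
            rw [hw', ← neg_one_smul ℂ u, QQ_smul _ _ _ (by norm_num)]
          rw [this] at h2
          have h3 := hfix u hu
          have h4 : (QQ φ u * QQ φ u) *ᵥ r u = r u := by rw [← Matrix.mulVec_mulVec, h3, h3]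
          rw [h2, Matrix.zero_mulVec] at h4
          have := (hrk u hu).2
          rw [← h4] at this; simp at this
        refine ⟨k u ⬝ᵥ r (u + w), k w ⬝ᵥ r (u + w), ?_⟩
        have hs := congrArg (fun M => M *ᵥ r (u + w)) (QQ_sum hF V)
        simp only [Matrix.sum_mulVec, Matrix.one_mulVec] at hs
        have hz : ∀ l, l ≠ i → l ≠ j → QQ φ (col V l) *ᵥ r (u + w) = 0 := by
          intro l hli hlj
          have : star (col V l) ⬝ᵥ (u + w) = 0 := by
            rw [ha, hb, dotProduct_add, dotProduct_smul, dotProduct_smul, col_orth, col_orth]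
            simp [hli, hlj]
          rw [← hfix _ huw0, Matrix.mulVec_mulVec, QQ_mul hF hn _ _ (col_ne V l) huw0 this,
            Matrix.zero_mulVec]
        rw [Finset.sum_eq_add i j hij (fun l _ hl => hz l hl.1 hl.2) (by simp) (by simp)] at hs
        rw [← vmv_mulVec, ← vmv_mulVec, ← (hrk u hu).1, ← (hrk w hw).1, hui, hwj, hs]
      hsupp := by
        intro v i hv hvi
        have hE := QQ_col φ (oneU n) 1 (fun θ hθ => by rw [h1 θ hθ]; simp) i
        rw [Matrix.mul_one, Matrix.one_mul] at hE
        have ho : star (col (oneU n) i) ⬝ᵥ v = 0 := by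
          simp [dotProduct, col, oneU, Matrix.one_apply, hvi]
        have h2 := QQ_mul hF hn _ _ (col_ne (oneU n) i) hv ho
        have h3 : (QQ φ (col (oneU n) i) * QQ φ v) *ᵥ r v = 0 := by rw [h2, Matrix.zero_mulVec]
        rw [← Matrix.mulVec_mulVec, hfix v hv, hE] at h3
        have := congrFun h3 i
        simpa [Matrix.mulVec_diagonal] using this }
  obtain ⟨m, hm, hmain⟩ := D.main hn
  have hT : IsUnit (diagonal m) := by
    rw [Matrix.isUnit_iff_isUnit_det, det_diagonal, isUnit_iff_ne_zero]
    exact Finset.prod_ne_zero_iff.2 fun i _ => hm i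
  have hcolS : ∀ (V : UU n) (S : Matrix (Fin n) (Fin n) ℂ),
      (∀ θ ∈ OmC n, φ (XX V θ) * S = S * diagonal (zz θ)) →
      ∀ j, ∃ g : ℂ, ∀ l, S l j = g * r (col V j) l := by
    intro V S hS j
    have h2 := QQ_col φ V S hS j
    rw [(hrk _ (col_ne V j)).1] at h2
    refine ⟨k (col V j) ⬝ᵥ (fun l => S l j), fun l => ?_⟩
    have h3 := congrFun (congrFun h2 l) j
    rw [Matrix.mul_diagonal, Pi.single_eq_same, mul_one] at h3
    rw [← h3, Matrix.mul_apply, dotProduct, Finset.sum_mul]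
    exact Finset.sum_congr rfl fun x _ => by rw [vecMulVec_apply]; ring
  refine ⟨diagonal m, hT, ?_⟩
  rcases hmain with hmain | hmain
  · left
    intro X
    obtain ⟨V, θ, hθ, rfl⟩ := spectral_angle X
    obtain ⟨S, hS, hSt⟩ := hF V
    choose g hg using hcolS V S hSt
    choose c hc0 hc using fun j => hmain (col V j) (col_ne V j)
    refine finish (S := S) (W := V.1) (Wi := V.1ᴴ) (G := diagonal fun j => g j * c j) hS hT ?_ V.2 ?_
      (hSt θ hθ)
    · ext l j
      rw [Matrix.mul_diagonal, Matrix.diagonal_mul, hg, hc, col]; ring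
    · rw [diagonal_mul_diagonal, diagonal_mul_diagonal]; simp only [mul_comm]
  · right
    intro X
    obtain ⟨V, θ, hθ, rfl⟩ := spectral_angle X
    obtain ⟨S, hS, hSt⟩ := hF V
    choose g hg using hcolS V S hSt
    choose c hc0 hc using fun j => hmain (col V j) (col_ne V j)
    have e : (XX V θ).1ᵀ = V.1ᴴᵀ * diagonal (zz θ) * V.1ᵀ := by
      simp only [XX, transpose_mul, diagonal_transpose, Matrix.mul_assoc]
    rw [e]
    refine finish (S := S) (W := V.1ᴴᵀ) (Wi := V.1ᵀ) (G := diagonal fun j => g j * c j) hS hT ?_ ?_ ?_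
      (hSt θ hθ)
    · ext l j
      rw [Matrix.mul_diagonal, Matrix.diagonal_mul, hg, hc, col, transpose_apply,
        conjTranspose_apply]; ring
    · rw [← transpose_mul, V.2, transpose_one]
    · rw [diagonal_mul_diagonal, diagonal_mul_diagonal]; simp only [mul_comm]

end PU

open PU in
theorem preserver_Un (n : ℕ) (hn : 3 ≤ n)
    (φ : {X : Matrix (Fin n) (Fin n) ℂ // X * X.conjTranspose = 1} →
      Matrix (Fin n) (Fin n) ℂ)
    (hcont : Continuous φ)
    (hcomm : ∀ X Y, X.val * Y.val = Y.val * X.val → φ X * φ Y = φ Y * φ X)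
    (hshrink : ∀ X, spectrum ℂ (φ X) ⊆ spectrum ℂ X.val) :
    ∃ T : Matrix (Fin n) (Fin n) ℂ, IsUnit T ∧
      ((∀ X, φ X = T * X.val * T⁻¹) ∨ (∀ X, φ X = T * X.val.transpose * T⁻¹)) := by
  have hF : HF φ := frame φ hcont hcomm hshrink
  obtain ⟨S, hS, hSt⟩ := hF (oneU n)
  have hSd : IsUnit S.det := (Matrix.isUnit_iff_isUnit_det _).1 hS
  have e1 := Matrix.mul_nonsing_inv _ hSd
  have e2 := Matrix.nonsing_inv_mul _ hSd
  have hback : ∀ A B T : Matrix (Fin n) (Fin n) ℂ, S⁻¹ * A * S = T * B * T⁻¹ →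
      A = (S * T) * B * (S * T)⁻¹ := by
    intro A B T h
    rw [Matrix.mul_inv_rev]
    calc A = (S * S⁻¹) * A * (S * S⁻¹) := by rw [e1, Matrix.one_mul, Matrix.mul_one]
      _ = S * (S⁻¹ * A * S) * S⁻¹ := by simp only [Matrix.mul_assoc]
      _ = _ := by rw [h]; simp only [Matrix.mul_assoc]
  obtain ⟨T, hT, h⟩ := main_norm (φ := fun X => S⁻¹ * φ X * S) hn
    ((continuous_const.matrix_mul hcont).matrix_mul continuous_const)
    (by
      intro V
      obtain ⟨R, hR, hRt⟩ := hF V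
      refine ⟨S⁻¹ * R, (Matrix.isUnit_nonsing_inv_iff.2 hS).mul hR, fun θ hθ => ?_⟩
      calc S⁻¹ * φ (XX V θ) * S * (S⁻¹ * R) = S⁻¹ * φ (XX V θ) * (S * S⁻¹) * R := by
            simp only [Matrix.mul_assoc]
        _ = S⁻¹ * (φ (XX V θ) * R) := by rw [e1, Matrix.mul_one, Matrix.mul_assoc]
        _ = _ := by rw [hRt θ hθ, Matrix.mul_assoc])
    (by
      intro θ hθ
      change S⁻¹ * φ (XX (oneU n) θ) * S = _
      rw [Matrix.mul_assoc, hSt θ hθ, ← Matrix.mul_assoc, e2, Matrix.one_mul])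
  refine ⟨S * T, hS.mul hT, ?_⟩
  rcases h with h | h
  · exact Or.inl fun X => hback _ _ _ (h X)
  · exact Or.inr fun X => hback _ _ _ (h X)
end

section
/- Let n ≥ 3 and let φ : N_n → M_n be a continuous, commutativity-preserving and spectrum-shrinking map defined on the set N_n of normal n×n complex matrices. Then there exists T ∈ GL(n) such that either φ(X) = T X T⁻¹ for all X ∈ N_n, or φ(X) = T Xᵗ T⁻¹ for all X ∈ N_n (where Xᵗ denotes the transpose). -/
open Matrix

namespace PN

/-- Euclidean space of column vectors. -/
abbrev EV (n : ℕ) := EuclideanSpace ℂ (Fin n)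

/-- The matrix whose columns are the vectors of an orthonormal basis. -/
noncomputable def bm {n : ℕ} (b : OrthonormalBasis (Fin n) ℂ (EV n)) : Matrix (Fin n) (Fin n) ℂ :=
  Matrix.of fun i j => b j i

lemma bm_star_mul {n : ℕ} (b : OrthonormalBasis (Fin n) ℂ (EV n)) : star (bm b) * bm b = 1 := by
  ext i j
  have h := orthonormal_iff_ite.mp b.orthonormal i j
  rw [PiLp.inner_apply] at h
  rw [Matrix.mul_apply, Matrix.one_apply, ← h]
  refine Finset.sum_congr rfl fun k _ => ?_
  simp [bm, Matrix.star_apply, mul_comm]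

lemma bm_mem {n : ℕ} (b : OrthonormalBasis (Fin n) ℂ (EV n)) :
    bm b ∈ Matrix.unitaryGroup (Fin n) ℂ := by
  rw [Matrix.mem_unitaryGroup_iff']
  exact bm_star_mul b

lemma diag_of_eig {n : ℕ} (X : Matrix (Fin n) (Fin n) ℂ)
    (b : OrthonormalBasis (Fin n) ℂ (EV n)) (d : Fin n → ℂ)
    (h : ∀ i, X *ᵥ (b i).ofLp = d i • (b i).ofLp) :
    X = bm b * diagonal d * star (bm b) := by
  have h1 : X * bm b = bm b * diagonal d := by
    ext i j
    have := congrFun (h j) i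
    rw [Matrix.mul_diagonal, Matrix.mul_apply]
    simp only [Matrix.mulVec, dotProduct, Pi.smul_apply, smul_eq_mul] at this
    simpa [bm, mul_comm] using this
  have h2 : bm b * star (bm b) = 1 := Matrix.mem_unitaryGroup_iff.mp (bm_mem b)
  rw [← h1, Matrix.mul_assoc, h2, Matrix.mul_one]

lemma normal_diag {n : ℕ} (X : Matrix (Fin n) (Fin n) ℂ)
    (hX : X * X.conjTranspose = X.conjTranspose * X) :
    ∃ (b : OrthonormalBasis (Fin n) ℂ (EV n)) (d : Fin n → ℂ),
      X = bm b * diagonal d * star (bm b) := by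
  classical
  set A : Matrix (Fin n) (Fin n) ℂ := X + Xᴴ with hA
  set B : Matrix (Fin n) (Fin n) ℂ := Complex.I • (X - Xᴴ) with hB
  have hAh : A.IsHermitian := by
    simp [Matrix.IsHermitian, hA, add_comm]
  have hBh : B.IsHermitian := by
    simp [Matrix.IsHermitian, hB, Matrix.conjTranspose_smul, ← smul_neg]
  have hAB : A * B = B * A := by
    simp only [hA, hB, Matrix.mul_smul, Matrix.smul_mul]
    congr 1
    simp only [add_mul, mul_add, sub_mul, mul_sub, hX]
    abel
  have hXA : ∀ v : Fin n → ℂ, X *ᵥ v = (1/2 : ℂ) • (A *ᵥ v - Complex.I • (B *ᵥ v)) := by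
    intro v
    rw [← Matrix.smul_mulVec, ← Matrix.sub_mulVec, ← Matrix.smul_mulVec]
    congr 1
    simp only [hA, hB, smul_smul, Complex.I_mul_I]
    module
  have sA := Matrix.isSymmetric_toEuclideanLin_iff.mpr hAh
  have sB := Matrix.isSymmetric_toEuclideanLin_iff.mpr hBh
  have hc : Commute (toEuclideanLin A) (toEuclideanLin B) := by
    ext v i
    have := congrArg (fun M => (M *ᵥ v.ofLp) i) hAB
    simpa [Matrix.toEuclideanLin, Matrix.toLpLin_apply] using this
  have hI := LinearMap.IsSymmetric.directSum_isInternal_of_commute sA sB hc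
  have hO := LinearMap.IsSymmetric.orthogonalFamily_eigenspace_inf_eigenspace sA sB
  have hind := hI.submodule_iSupIndep
  have hI2 := DirectSum.isInternal_ne_bot_iff.mpr hI
  let _ := hind.fintypeNeBotOfFiniteDimensional
  have hO2 := hO.comp (γ := {i : ℂ × ℂ // Module.End.eigenspace (toEuclideanLin A) i.2 ⊓
    Module.End.eigenspace (toEuclideanLin B) i.1 ≠ ⊥}) Subtype.val_injective
  have hn : Module.finrank ℂ (EV n) = n := by simp
  refine ⟨hI2.subordinateOrthonormalBasis hn hO2, fun a =>
    (1/2 : ℂ) * ((hI2.subordinateOrthonormalBasisIndex hn a hO2).1.2 -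
      Complex.I * (hI2.subordinateOrthonormalBasisIndex hn a hO2).1.1), ?_⟩
  apply diag_of_eig
  intro a
  have h := hI2.subordinateOrthonormalBasis_subordinate hn a hO2
  rw [Submodule.mem_inf, Module.End.mem_eigenspace_iff, Module.End.mem_eigenspace_iff] at h
  obtain ⟨h1, h2⟩ := h
  have h1' := congrArg (fun v : EV n => v.ofLp) h1
  have h2' := congrArg (fun v : EV n => v.ofLp) h2
  simp only [Matrix.toEuclideanLin, Matrix.toLpLin_apply, WithLp.ofLp_smul] at h1' h2'
  rw [hXA, h1', h2']
  module

end PN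


namespace PN

lemma charpoly_factor {n : ℕ} (M : Matrix (Fin n) (Fin n) ℂ) (μ : Fin n → ℂ)
    (h : spectrum ℂ M ⊆ Set.range μ) :
    ∃ κ : Fin n → Fin n, ∀ x : ℂ, (Matrix.scalar (Fin n) x - M).det = ∏ k, (x - μ (κ k)) := by
  have hs : M.charpoly.Splits := IsAlgClosed.splits _
  have hcard : M.charpoly.roots.card = n := by
    rw [← hs.natDegree_eq_card_roots, Matrix.charpoly_natDegree_eq_dim, Fintype.card_fin]
  have hlen : M.charpoly.roots.toList.length = n := by simpa using hcard
  have hmem : ∀ k : Fin n, ∃ i, μ i = M.charpoly.roots.toList.get (Fin.cast hlen.symm k) := by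
    intro k
    have hk : M.charpoly.roots.toList.get (Fin.cast hlen.symm k) ∈ M.charpoly.roots := by
      rw [← Multiset.mem_toList]
      exact List.get_mem _ _
    have := h (Matrix.mem_spectrum_of_isRoot_charpoly (Polynomial.isRoot_of_mem_roots hk))
    exact this
  choose κ hκ using hmem
  refine ⟨κ, fun x => ?_⟩
  rw [← Matrix.eval_charpoly, hs.eq_prod_roots_of_monic (Matrix.charpoly_monic M)]
  simp only [hκ]
  have e1 : (M.charpoly.roots.map fun a => (Polynomial.X - Polynomial.C a)) =
      ((M.charpoly.roots.toList.map fun a => (Polynomial.X - Polynomial.C a) : List _) :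
        Multiset (Polynomial ℂ)) := by
    rw [← Multiset.map_coe, Multiset.coe_toList]
  rw [e1, Multiset.prod_coe, Polynomial.eval_list_prod, List.map_map]
  have e2 : ∀ L : List ℂ, ∀ hL : L.length = n,
      (L.map ((Polynomial.eval x) ∘ fun a => (Polynomial.X - Polynomial.C a))).prod =
      ∏ k : Fin n, (x - L.get (Fin.cast hL.symm k)) := by
    intro L hL
    subst hL
    have : (∏ k : Fin L.length, (x - L.get (Fin.cast rfl k))) =
      (List.ofFn fun k : Fin L.length => (x - L.get k)).prod := by
      rw [List.prod_ofFn]; rfl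
    rw [this]
    congr 1
    apply List.ext_get <;> simp
  exact e2 _ hlen

lemma mem_spec_iff {n : ℕ} (M : Matrix (Fin n) (Fin n) ℂ) (x : ℂ) :
    x ∈ spectrum ℂ M ↔ (Matrix.scalar (Fin n) x - M).det = 0 := by
  rw [Matrix.mem_spectrum_iff_isRoot_charpoly, Polynomial.IsRoot, Matrix.eval_charpoly]

lemma presence {n : ℕ} {S : Type*} [TopologicalSpace S] [PreconnectedSpace S]
    (M : S → Matrix (Fin n) (Fin n) ℂ) (hM : Continuous M) (μ : S → Fin n → ℂ)
    (hμ : Continuous μ) (hinj : ∀ s, Function.Injective (μ s))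
    (hsp : ∀ s, spectrum ℂ (M s) ⊆ Set.range (μ s)) (i : Fin n) (s t : S)
    (hs : μ s i ∈ spectrum ℂ (M s)) : μ t i ∈ spectrum ℂ (M t) := by
  classical
  let K : (Fin n → Fin n) → Set S := fun κ =>
    {s | ∀ x : ℂ, (Matrix.scalar (Fin n) x - M s).det = ∏ k, (x - μ s (κ k))}
  have hK : ∀ κ, IsClosed (K κ) := by
    intro κ
    simp only [K, Set.ofPred_forall]
    refine isClosed_iInter fun x => isClosed_eq ?_ ?_
    · exact (continuous_const.sub hM).matrix_det
    · exact continuous_finsetProd _ fun k _ =>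
        continuous_const.sub ((continuous_apply _).comp hμ)
  let A : Set S := {s | μ s i ∈ spectrum ℂ (M s)}
  have key : ∀ κ s, s ∈ K κ → (s ∈ A ↔ i ∈ Set.range κ) := by
    intro κ s hs
    simp only [A, Set.mem_ofPred_eq, mem_spec_iff]
    rw [hs, Finset.prod_eq_zero_iff]
    constructor
    · rintro ⟨k, -, hk⟩
      exact ⟨k, (hinj s (sub_eq_zero.mp hk)).symm⟩
    · rintro ⟨k, hk⟩
      exact ⟨k, Finset.mem_univ _, by rw [hk, sub_self]⟩
  have hA1 : A = ⋃ κ ∈ {κ : Fin n → Fin n | i ∈ Set.range κ}, K κ := by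
    ext s
    simp only [Set.mem_iUnion, Set.mem_ofPred_eq, exists_prop]
    constructor
    · intro hs
      obtain ⟨κ, hκ⟩ := charpoly_factor (M s) (μ s) (hsp s)
      exact ⟨κ, (key κ s hκ).mp hs, hκ⟩
    · rintro ⟨κ, h1, h2⟩
      exact (key κ s h2).mpr h1
  have hA2 : Aᶜ = ⋃ κ ∈ {κ : Fin n → Fin n | i ∉ Set.range κ}, K κ := by
    ext s
    simp only [Set.mem_iUnion, Set.mem_ofPred_eq, exists_prop, Set.mem_compl_iff]
    constructor
    · intro hs
      obtain ⟨κ, hκ⟩ := charpoly_factor (M s) (μ s) (hsp s)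
      exact ⟨κ, fun h => hs ((key κ s hκ).mpr h), hκ⟩
    · rintro ⟨κ, h1, h2⟩ h3
      exact h1 ((key κ s h2).mp h3)
  have hc1 : IsClosed A := by
    rw [hA1]
    exact Set.Finite.isClosed_biUnion (Set.toFinite _) fun κ _ => hK κ
  have hc2 : IsClosed Aᶜ := by
    rw [hA2]
    exact Set.Finite.isClosed_biUnion (Set.toFinite _) fun κ _ => hK κ
  have hcl : IsClopen A := ⟨hc1, isClosed_compl_iff.mp hc2⟩
  rcases isClopen_iff.mp hcl with h | h
  · exact absurd (show s ∈ A from hs) (by rw [h]; simp)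
  · exact (show t ∈ A by rw [h]; trivial)

lemma index_const {n : ℕ} {S : Type*} [TopologicalSpace S] [PreconnectedSpace S]
    (e : S → ℂ) (he : Continuous e) (μ : S → Fin n → ℂ)
    (hμ : Continuous μ) (hinj : ∀ s, Function.Injective (μ s))
    (hsp : ∀ s, e s ∈ Set.range (μ s)) (i : Fin n) (s t : S)
    (hs : e s = μ s i) : e t = μ t i := by
  let A : Set S := {s | e s = μ s i}
  have hc : ∀ j, IsClosed {s | e s = μ s j} := fun j =>
    isClosed_eq he ((continuous_apply _).comp hμ)
  have hA2 : Aᶜ = ⋃ j ∈ {j : Fin n | j ≠ i}, {s | e s = μ s j} := by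
    ext s
    simp only [Set.mem_iUnion, Set.mem_ofPred_eq, exists_prop, Set.mem_compl_iff, A]
    constructor
    · intro h
      obtain ⟨j, hj⟩ := hsp s
      exact ⟨j, fun h' => h (by rw [← hj, h']), hj.symm⟩
    · rintro ⟨j, h1, h2⟩ h3
      exact h1 (hinj s (h2.symm.trans h3))
  have hc2 : IsClosed Aᶜ := by
    rw [hA2]
    exact Set.Finite.isClosed_biUnion (Set.toFinite _) fun κ _ => hc κ
  have hcl : IsClopen A := ⟨hc i, isClosed_compl_iff.mp hc2⟩
  rcases isClopen_iff.mp hcl with h | h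
  · exact absurd (show s ∈ A from hs) (by rw [h]; simp)
  · exact (show t ∈ A by rw [h]; trivial)

/-- The line of diagonals joining `d0` to `d`. -/
noncomputable def ln {n : ℕ} (d0 d : Fin n → ℂ) (z : ℂ) : Fin n → ℂ :=
  fun i => (1 - z) * d0 i + z * d i

/-- the bad parameters -/
def bad {n : ℕ} (d0 d : Fin n → ℂ) : Set ℂ := {z | ¬ Function.Injective (ln d0 d z)}

lemma bad_countable {n : ℕ} (d0 d : Fin n → ℂ) (h0 : Function.Injective d0) :
    (bad d0 d).Countable := by
  have : bad d0 d ⊆ ⋃ p ∈ {p : Fin n × Fin n | p.1 ≠ p.2},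
      {z | ln d0 d z p.1 = ln d0 d z p.2} := by
    intro z hz
    simp only [bad, Set.mem_ofPred_eq, Function.Injective, not_forall] at hz
    obtain ⟨i, j, h1, h2⟩ := hz
    simp only [Set.mem_iUnion]
    exact ⟨(i, j), h2, h1⟩
  refine Set.Countable.mono this (Set.Countable.biUnion (Set.to_countable _) ?_)
  rintro ⟨i, j⟩ hij
  apply Set.Subsingleton.countable
  intro z hz w hw
  simp only [ln, Set.mem_ofPred_eq] at hz hw
  have ha : d0 i - d0 j ≠ 0 := sub_ne_zero.mpr fun h => hij (h0 h)
  have : (d0 i - d0 j) * (z - w) = 0 := by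
    linear_combination z * hw - w * hz
  rcases mul_eq_zero.mp this with h | h
  · exact absurd h ha
  · exact sub_eq_zero.mp h

lemma bad_conn {n : ℕ} (d0 d : Fin n → ℂ) (h0 : Function.Injective d0) :
    PreconnectedSpace ((bad d0 d)ᶜ : Set ℂ) := by
  have := (bad_countable d0 d h0).isPathConnected_compl_of_one_lt_rank
    (by rw [Complex.rank_real_complex]; norm_num)
  exact isPreconnected_iff_preconnectedSpace.mp this.isConnected.isPreconnected

lemma bad_dense {n : ℕ} (d0 d : Fin n → ℂ) (h0 : Function.Injective d0) :
    Dense ((bad d0 d)ᶜ : Set ℂ) := (bad_countable d0 d h0).dense_compl ℝ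

lemma ln_cont {n : ℕ} (d0 d : Fin n → ℂ) : Continuous (ln d0 d) := by
  unfold ln; fun_prop

lemma ln_zero {n : ℕ} (d0 d : Fin n → ℂ) : ln d0 d 0 = d0 := by
  ext; simp [ln]

lemma ln_one {n : ℕ} (d0 d : Fin n → ℂ) : ln d0 d 1 = d := by
  ext; simp [ln]

end PN


namespace PN

/-- The type of normal matrices. -/
abbrev NM (n : ℕ) :=
  {X : Matrix (Fin n) (Fin n) ℂ // X * X.conjTranspose = X.conjTranspose * X}

/-- The unitary group. -/
abbrev UG (n : ℕ) := Matrix.unitaryGroup (Fin n) ℂ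

lemma ug_star_mul {n : ℕ} (U : UG n) : star U.val * U.val = 1 :=
  Matrix.mem_unitaryGroup_iff'.mp U.2

lemma ug_mul_star {n : ℕ} (U : UG n) : U.val * star U.val = 1 :=
  Matrix.mem_unitaryGroup_iff.mp U.2

lemma conj_mul_conj {n : ℕ} {T T' : Matrix (Fin n) (Fin n) ℂ} (h : T' * T = 1)
    (A B : Matrix (Fin n) (Fin n) ℂ) : (T * A * T') * (T * B * T') = T * (A * B) * T' := by
  calc (T * A * T') * (T * B * T') = T * A * (T' * T) * B * T' := by simp only [Matrix.mul_assoc]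
    _ = _ := by rw [h, Matrix.mul_one]; simp only [Matrix.mul_assoc]

/-- The normal matrix `U diag(d) U*`. -/
noncomputable def nm {n : ℕ} (U : UG n) (d : Fin n → ℂ) : NM n :=
  ⟨U.val * diagonal d * star U.val, by
    have h : (U.val * diagonal d * star U.val)ᴴ = U.val * diagonal (star d) * star U.val := by
      rw [Matrix.conjTranspose_mul, Matrix.conjTranspose_mul, Matrix.diagonal_conjTranspose,
        Matrix.star_eq_conjTranspose, Matrix.conjTranspose_conjTranspose, Matrix.mul_assoc]
    rw [h, conj_mul_conj (ug_star_mul U), conj_mul_conj (ug_star_mul U), diagonal_mul_diagonal,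
      diagonal_mul_diagonal]
    simp only [mul_comm]⟩

lemma nm_comm {n : ℕ} (U : UG n) (d e : Fin n → ℂ) :
    (nm U d).val * (nm U e).val = (nm U e).val * (nm U d).val := by
  simp only [nm]
  rw [conj_mul_conj (ug_star_mul U), conj_mul_conj (ug_star_mul U), diagonal_mul_diagonal,
      diagonal_mul_diagonal]
  simp only [mul_comm]

lemma nm_spec {n : ℕ} (U : UG n) (d : Fin n → ℂ) :
    spectrum ℂ (nm U d).val = Set.range d := by
  have := spectrum.units_conjugate (R := ℂ) (a := diagonal d) (u := Unitary.toUnits U)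
  rw [spectrum_diagonal] at this
  rw [← this]
  rfl

lemma nm_cont {n : ℕ} : Continuous fun p : UG n × (Fin n → ℂ) => nm p.1 p.2 := by
  unfold nm
  refine Continuous.subtype_mk ?_ _
  have h1 : Continuous fun p : UG n × (Fin n → ℂ) => p.1.val := by fun_prop
  have h2 : Continuous fun p : UG n × (Fin n → ℂ) => diagonal p.2 :=
    Continuous.matrix_diagonal continuous_snd
  exact (h1.matrix_mul h2).matrix_mul h1.star

lemma nm_cont' {n : ℕ} {S : Type*} [TopologicalSpace S] {f : S → UG n} {g : S → Fin n → ℂ}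
    (hf : Continuous f) (hg : Continuous g) : Continuous fun s => nm (f s) (g s) :=
  Continuous.comp (g := fun p : UG n × (Fin n → ℂ) => nm p.1 p.2)
    (f := fun s => (f s, g s)) nm_cont (hf.prodMk hg)

/-- Path of unitaries from the identity to a transposition. -/
noncomputable def wp {n : ℕ} (i j : Fin n) (t : ℝ) : UG n :=
  ⟨1 + ((Complex.exp (t * Complex.I) - 1) / 2) • (1 - Matrix.swap ℂ i j), by
    rw [Matrix.mem_unitaryGroup_iff, Matrix.star_eq_conjTranspose, Matrix.conjTranspose_add,
      Matrix.conjTranspose_smul, Matrix.conjTranspose_sub, Matrix.conjTranspose_swap,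
      Matrix.conjTranspose_one]
    set P := Matrix.swap ℂ i j
    have hP : P * P = 1 := Matrix.swap_mul_self i j
    have hQ : (1 - P) * (1 - P) = (2 : ℂ) • (1 - P) := by
      rw [sub_mul, mul_sub, mul_sub, hP]; simp only [mul_one, one_mul]; module
    set z := Complex.exp (t * Complex.I)
    have hz : z * star z = 1 := by
      have : ‖z‖ = 1 := Complex.norm_exp_ofReal_mul_I t
      rw [Complex.star_def, Complex.mul_conj, Complex.normSq_eq_norm_sq, this]; simp
    simp only [add_mul, mul_add, Matrix.smul_mul, Matrix.mul_smul, hQ,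
      Matrix.mul_one, Matrix.one_mul, smul_smul]
    have : star ((z - 1) / 2) = (star z - 1) / 2 := by simp
    have h0 : (star z - 1) / 2 + (z - 1) / 2 + (z - 1) / 2 * ((star z - 1) / 2) * 2 = 0 := by
      linear_combination (1/2) * hz
    rw [this]
    calc _ = 1 + ((star z - 1) / 2 + (z - 1) / 2 + (z - 1) / 2 * ((star z - 1) / 2) * 2) •
          (1 - P) := by module
      _ = 1 := by rw [h0, zero_smul, add_zero]⟩

lemma wp_cont {n : ℕ} (i j : Fin n) : Continuous (wp i j) := by
  unfold wp
  refine Continuous.subtype_mk ?_ _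
  fun_prop

lemma wp_zero {n : ℕ} (i j : Fin n) : (wp i j 0) = 1 := by
  ext; simp [wp]

lemma wp_pi {n : ℕ} (i j : Fin n) : (wp i j Real.pi).val = Matrix.swap ℂ i j := by
  simp only [wp, Complex.exp_pi_mul_I]
  module

lemma swap_diag {n : ℕ} (i j : Fin n) (d : Fin n → ℂ) :
    Matrix.swap ℂ i j * diagonal d * Matrix.swap ℂ i j = diagonal (d ∘ Equiv.swap i j) := by
  have h : Matrix.swap ℂ i j * diagonal d = diagonal (d ∘ Equiv.swap i j) * Matrix.swap ℂ i j := by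
    ext a b
    rw [Matrix.mul_diagonal, Matrix.diagonal_mul]
    simp only [Matrix.swap, Equiv.Perm.permMatrix, PEquiv.toMatrix_apply, Equiv.toPEquiv_apply,
      Option.mem_def, Option.some.injEq]
    split_ifs with hh
    · simp [← hh]
    · simp
  rw [h, Matrix.mul_assoc, Matrix.swap_mul_self, Matrix.mul_one]

lemma nm_swap {n : ℕ} (U : UG n) (i j : Fin n) (d : Fin n → ℂ) :
    nm (U * wp i j Real.pi) d = nm U (d ∘ Equiv.swap i j) := by
  apply Subtype.ext
  simp only [nm, Submonoid.coe_mul, wp_pi, star_mul]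
  rw [Matrix.star_eq_conjTranspose (Matrix.swap ℂ i j), Matrix.conjTranspose_swap,
    ← swap_diag]
  simp only [Matrix.mul_assoc]

/-- the base diagonal -/
def d0 (n : ℕ) : Fin n → ℂ := fun i => (i.val : ℂ)

lemma d0_inj (n : ℕ) : Function.Injective (d0 n) := by
  intro i j h
  simpa [d0, Fin.ext_iff] using h

lemma presence_swap {n : ℕ} (φ : NM n → Matrix (Fin n) (Fin n) ℂ) (hcont : Continuous φ)
    (hshrink : ∀ X, spectrum ℂ (φ X) ⊆ spectrum ℂ X.val)
    (U : UG n) (i j k : Fin n) (hk : d0 n k ∈ spectrum ℂ (φ (nm U (d0 n)))) :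
    d0 n (Equiv.swap i j k) ∈ spectrum ℂ (φ (nm U (d0 n))) := by
  have h1 : d0 n (Equiv.swap i j k) ∈
      spectrum ℂ (φ (nm U (d0 n ∘ Equiv.swap i j))) := by
    set d := d0 n ∘ Equiv.swap i j
    have := bad_conn (d0 n) d (d0_inj n)
    have p0 : (0 : ℂ) ∈ (bad (d0 n) d)ᶜ := by
      simp only [bad, Set.mem_compl_iff, Set.mem_ofPred_eq, not_not, ln_zero]
      exact d0_inj n
    have p1 : (1 : ℂ) ∈ (bad (d0 n) d)ᶜ := by
      simp only [bad, Set.mem_compl_iff, Set.mem_ofPred_eq, not_not, ln_one]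
      exact (d0_inj n).comp (Equiv.injective _)
    have hl : Continuous fun z : ((bad (d0 n) d)ᶜ : Set ℂ) => ln (d0 n) d z :=
      (ln_cont _ _).comp continuous_subtype_val
    have := presence (S := ((bad (d0 n) d)ᶜ : Set ℂ)) (fun z => φ (nm U (ln (d0 n) d z)))
      (hcont.comp (nm_cont' continuous_const hl))
      (fun z => ln (d0 n) d z) hl
      (fun z => by have := z.2; simpa only [bad, Set.mem_compl_iff, Set.mem_ofPred_eq, not_not])
      (fun z => by rw [← nm_spec U]; exact hshrink _) k ⟨0, p0⟩ ⟨1, p1⟩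
    simp only [ln_zero, ln_one] at this
    exact this hk
  rw [← nm_swap] at h1
  have := presence (S := ℝ) (fun t => φ (nm (U * wp i j t) (d0 n)))
    (hcont.comp (nm_cont' (continuous_const.mul (wp_cont i j)) continuous_const))
    (fun t => d0 n) continuous_const (fun _ => d0_inj n)
    (fun z => by rw [← nm_spec]; exact hshrink _) _ _ 0 h1
  simpa [wp_zero] using this

lemma presence_all {n : ℕ} (φ : NM n → Matrix (Fin n) (Fin n) ℂ) (hcont : Continuous φ)
    (hshrink : ∀ X, spectrum ℂ (φ X) ⊆ spectrum ℂ X.val)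
    (U : UG n) (k : Fin n) : d0 n k ∈ spectrum ℂ (φ (nm U (d0 n))) := by
  have : Nonempty (Fin n) := ⟨k⟩
  obtain ⟨x, hx⟩ := spectrum.nonempty_of_isAlgClosed_of_finiteDimensional ℂ (φ (nm U (d0 n)))
  have := hshrink _ hx
  rw [nm_spec] at this
  obtain ⟨i, rfl⟩ := this
  have := presence_swap φ hcont hshrink U i k i hx
  simpa using this

lemma exists_diag {n : ℕ} (M : Matrix (Fin n) (Fin n) ℂ) (d : Fin n → ℂ) (hd : Function.Injective d)
    (h : ∀ k, d k ∈ spectrum ℂ M) :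
    ∃ T T' : Matrix (Fin n) (Fin n) ℂ, T * T' = 1 ∧ T' * T = 1 ∧ T' * M * T = diagonal d := by
  have h1 : ∀ k, ∃ v : Fin n → ℂ, Module.End.HasEigenvector (Matrix.toLin' M) (d k) v := by
    intro k
    have : Module.End.HasEigenvalue (Matrix.toLin' M) (d k) := by
      rw [Module.End.hasEigenvalue_iff_mem_spectrum, Matrix.spectrum_toLin']
      exact h k
    exact this.exists_hasEigenvector
  choose v hv using h1
  have hli := Module.End.eigenvectors_linearIndependent' (Matrix.toLin' M) d hd v hv
  let T : Matrix (Fin n) (Fin n) ℂ := Matrix.of fun i j => v j i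
  have hT : IsUnit T := by
    rw [← Matrix.linearIndependent_cols_iff_isUnit]
    exact hli
  obtain ⟨u, hu⟩ := hT
  have hMT : M * T = T * diagonal d := by
    ext i j
    have := congrFun (hv j).apply_eq_smul i
    rw [Matrix.mul_diagonal, Matrix.mul_apply]
    simp only [Matrix.toLin'_apply, Matrix.mulVec, dotProduct, Pi.smul_apply, smul_eq_mul] at this
    simpa [T, mul_comm] using this
  refine ⟨T, (u⁻¹ : (Matrix (Fin n) (Fin n) ℂ)ˣ).val, ?_, ?_, ?_⟩
  · rw [← hu]; exact u.mul_inv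
  · rw [← hu]; exact u.inv_mul
  · rw [Matrix.mul_assoc, hMT, ← Matrix.mul_assoc, ← hu]
    rw [u.inv_mul, Matrix.one_mul]

lemma frame_lemma {n : ℕ} (φ : NM n → Matrix (Fin n) (Fin n) ℂ) (hcont : Continuous φ)
    (hcomm : ∀ X Y, X.val * Y.val = Y.val * X.val → φ X * φ Y = φ Y * φ X)
    (hshrink : ∀ X, spectrum ℂ (φ X) ⊆ spectrum ℂ X.val)
    (U : UG n) : ∃ T T' : Matrix (Fin n) (Fin n) ℂ, T * T' = 1 ∧ T' * T = 1 ∧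
    ∀ d, φ (nm U d) = T * diagonal d * T' := by
  obtain ⟨T, T', hT, hT', h0⟩ := exists_diag (φ (nm U (d0 n))) (d0 n) (d0_inj n)
    (presence_all φ hcont hshrink U)
  refine ⟨T, T', hT, hT', fun d => ?_⟩
  have hdiag : ∀ d, T' * φ (nm U d) * T = diagonal fun i => (T' * φ (nm U d) * T) i i := by
    intro d
    have hc : (T' * φ (nm U d) * T) * diagonal (d0 n) = diagonal (d0 n) * (T' * φ (nm U d) * T) := by
      rw [← h0, conj_mul_conj hT, conj_mul_conj hT, hcomm _ _ (nm_comm U _ _)]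
    ext i j
    have := congrFun (congrFun hc i) j
    rw [Matrix.mul_diagonal, Matrix.diagonal_mul] at this
    by_cases hij : i = j
    · subst hij; simp
    · rw [diagonal_apply_ne _ hij]
      have h2 : (d0 n j - d0 n i) * (T' * φ (nm U d) * T) i j = 0 := by linear_combination this
      rcases mul_eq_zero.mp h2 with h | h
      · exact absurd (d0_inj n (sub_eq_zero.mp h)).symm hij
      · exact h
  let e : (Fin n → ℂ) → Fin n → ℂ := fun d i => (T' * φ (nm U d) * T) i i
  have hecont : ∀ i, Continuous fun d => e d i := by
    intro i
    have : Continuous fun d => φ (nm U d) :=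
      hcont.comp (nm_cont' continuous_const continuous_id)
    exact ((continuous_const.matrix_mul this).matrix_mul continuous_const).matrix_elem i i
  have heq : ∀ d, φ (nm U d) = T * diagonal (e d) * T' := by
    intro d
    have : T * (T' * φ (nm U d) * T) * T' = φ (nm U d) := by
      calc _ = (T * T') * φ (nm U d) * (T * T') := by simp only [Matrix.mul_assoc]
        _ = _ := by rw [hT]; simp
    exact this.symm.trans (congrArg (fun M => T * M * T') (hdiag d))
  have hmem : ∀ d i, e d i ∈ Set.range d := by
    intro d i
    rw [← nm_spec U]
    apply hshrink
    have hs := spectrum.units_conjugate (R := ℂ) (a := diagonal (e d)) (u := ⟨T, T', hT, hT'⟩)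
    have : φ (nm U d) = (Units.mk T T' hT hT').val * diagonal (e d) *
      ((Units.mk T T' hT hT')⁻¹).val := heq d
    rw [this, hs, spectrum_diagonal]
    exact ⟨i, rfl⟩
  have he0 : e (d0 n) = d0 n := by
    ext i; simp only [e, h0, diagonal_apply_eq]
  have hfin : ∀ i, e d i = d i := by
    intro i
    have := bad_conn (d0 n) d (d0_inj n)
    have p0 : (0 : ℂ) ∈ (bad (d0 n) d)ᶜ := by
      simp only [bad, Set.mem_compl_iff, Set.mem_ofPred_eq, not_not, ln_zero]
      exact d0_inj n
    have hl : Continuous fun z : ((bad (d0 n) d)ᶜ : Set ℂ) => ln (d0 n) d z :=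
      (ln_cont _ _).comp continuous_subtype_val
    have h1 : ∀ z ∈ (bad (d0 n) d)ᶜ, e (ln (d0 n) d z) i = ln (d0 n) d z i := by
      intro z hz
      have := index_const (S := ((bad (d0 n) d)ᶜ : Set ℂ)) (fun z => e (ln (d0 n) d z) i)
        ((hecont i).comp hl) (fun z => ln (d0 n) d z) hl
        (fun z => by have := z.2; simpa only [bad, Set.mem_compl_iff, Set.mem_ofPred_eq, not_not])
        (fun z => hmem _ _) i ⟨0, p0⟩ ⟨z, hz⟩
      simp only [ln_zero, he0] at this
      exact this trivial
    have h2 : Set.EqOn (fun z => e (ln (d0 n) d z) i) (fun z => ln (d0 n) d z i)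
      ((bad (d0 n) d)ᶜ) := h1
    have h3 := Continuous.ext_on (bad_dense (d0 n) d (d0_inj n))
      ((hecont i).comp (ln_cont _ _)) ((continuous_apply i).comp (ln_cont _ _)) h2
    have := congrFun h3 1
    simpa [ln_one] using this
  rw [heq, show e d = d from funext hfin]

end PN


namespace PN

/-- The maps on vectors induced from `φ` by restricting to rank one projections. -/
structure IsPsi {n : ℕ} (ψ : EV n → Matrix (Fin n) (Fin n) ℂ) : Prop where
  cont : ∀ u, u ≠ 0 → ContinuousAt ψ u
  smul : ∀ c : ℂ, c ≠ 0 → ∀ u, ψ (c • u) = ψ u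
  frame : ∀ b : OrthonormalBasis (Fin n) ℂ (EV n), ∃ T T' : Matrix (Fin n) (Fin n) ℂ,
    T * T' = 1 ∧ T' * T = 1 ∧ ∀ i, ψ (b i) = T * Matrix.single i i 1 * T'

lemma extend_basis {n : ℕ} (v : Fin n → EV n) (s : Set (Fin n))
    (h : ∀ i ∈ s, ∀ j ∈ s, inner ℂ (v i) (v j) = if i = j then 1 else 0) :
    ∃ b : OrthonormalBasis (Fin n) ℂ (EV n), ∀ i ∈ s, b i = v i := by
  apply Orthonormal.exists_orthonormalBasis_extension_of_card_eq (by simp)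
  rw [orthonormal_iff_ite]
  rintro ⟨i, hi⟩ ⟨j, hj⟩
  have := h i hi j hj
  simpa [Set.domRestrict] using this

lemma basis2 {n : ℕ} (hn : 3 ≤ n) (e1 e2 : EV n) (h11 : inner ℂ e1 e1 = 1)
    (h22 : inner ℂ e2 e2 = 1) (h12 : inner ℂ e1 e2 = 0) :
    ∃ (b : OrthonormalBasis (Fin n) ℂ (EV n)) (i j k : Fin n), i ≠ j ∧ i ≠ k ∧ j ≠ k ∧
      b i = e1 ∧ b j = e2 := by
  have h21 : inner ℂ e2 e1 = 0 := inner_eq_zero_symm.mp h12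
  let i : Fin n := ⟨0, by omega⟩
  let j : Fin n := ⟨1, by omega⟩
  let k : Fin n := ⟨2, by omega⟩
  have hij : i ≠ j := by simp [i, j]
  obtain ⟨b, hb⟩ := extend_basis (fun x => if x = i then e1 else e2) {i, j} (by
    intro x hx y hy
    simp only [Set.mem_insert_iff, Set.mem_singleton_iff] at hx hy
    rcases hx with rfl | rfl <;> rcases hy with rfl | rfl <;> simp [-inner_self_eq_norm_sq_to_K, hij, hij.symm, *])
  refine ⟨b, i, j, k, hij, by simp [i, k], by simp [j, k], ?_, ?_⟩
  · simpa using hb i (by simp)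
  · simpa [hij.symm] using hb j (by simp)

lemma basis3 {n : ℕ} (hn : 3 ≤ n) (e1 e2 e3 : EV n) (h11 : inner ℂ e1 e1 = 1)
    (h22 : inner ℂ e2 e2 = 1) (h33 : inner ℂ e3 e3 = 1) (h12 : inner ℂ e1 e2 = 0)
    (h13 : inner ℂ e1 e3 = 0) (h23 : inner ℂ e2 e3 = 0) :
    ∃ (b : OrthonormalBasis (Fin n) ℂ (EV n)) (i j k : Fin n), i ≠ j ∧ i ≠ k ∧ j ≠ k ∧
      b i = e1 ∧ b j = e2 ∧ b k = e3 := by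
  have h21 : inner ℂ e2 e1 = 0 := inner_eq_zero_symm.mp h12
  have h31 : inner ℂ e3 e1 = 0 := inner_eq_zero_symm.mp h13
  have h32 : inner ℂ e3 e2 = 0 := inner_eq_zero_symm.mp h23
  let i : Fin n := ⟨0, by omega⟩
  let j : Fin n := ⟨1, by omega⟩
  let k : Fin n := ⟨2, by omega⟩
  have hij : i ≠ j := by simp [i, j]
  have hik : i ≠ k := by simp [i, k]
  have hjk : j ≠ k := by simp [j, k]
  obtain ⟨b, hb⟩ := extend_basis (fun x => if x = i then e1 else if x = j then e2 else e3)
    {i, j, k} (by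
    intro x hx y hy
    simp only [Set.mem_insert_iff, Set.mem_singleton_iff] at hx hy
    rcases hx with rfl | rfl | rfl <;> rcases hy with rfl | rfl | rfl <;>
      simp [-inner_self_eq_norm_sq_to_K, hij, hij.symm, hik, hik.symm, hjk, hjk.symm, *])
  refine ⟨b, i, j, k, hij, hik, hjk, ?_, ?_, ?_⟩
  · simpa using hb i (by simp)
  · simpa [hij.symm] using hb j (by simp)
  · simpa [hik.symm, hjk.symm] using hb k (by simp)

lemma exists_unit {n : ℕ} (u : EV n) (hu : u ≠ 0) :
    ∃ c : ℂ, c ≠ 0 ∧ inner ℂ (c • u) (c • u) = 1 := by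
  refine ⟨((‖u‖⁻¹ : ℝ) : ℂ), ?_, ?_⟩
  · simpa using hu
  · have : ‖u‖ ≠ 0 := by simpa using hu
    rw [inner_smul_left, inner_smul_right, inner_self_eq_norm_sq_to_K, Complex.conj_ofReal]
    have h2 : (‖u‖ : ℂ) ≠ 0 := by exact_mod_cast this
    simp only [Complex.ofReal_inv, Complex.coe_algebraMap]
    field_simp

lemma ne_zero_of_inner {n : ℕ} {x u : EV n} (h : inner ℂ x u ≠ 0) : u ≠ 0 := by
  rintro rfl; simp at h

lemma ne_zero_of_inner_self {n : ℕ} {u : EV n} (h : inner ℂ u u = 1) : u ≠ 0 :=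
  ne_zero_of_inner (x := u) (by rw [h]; exact one_ne_zero)

section
variable {n : ℕ} {ψ : EV n → Matrix (Fin n) (Fin n) ℂ}

lemma single_mid (i : Fin n) (B : Matrix (Fin n) (Fin n) ℂ) :
    Matrix.single i i (1 : ℂ) * B * Matrix.single i i 1 = B i i • Matrix.single i i 1 := by
  rw [Matrix.single_mul_mul_single]; simp [Matrix.smul_single]

lemma IsPsi.unit (hψ : IsPsi ψ) (hn : 3 ≤ n) (u : EV n) (hu : u ≠ 0) :
    ∃ (b : OrthonormalBasis (Fin n) ℂ (EV n)) (i : Fin n), ψ u = ψ (b i) := by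
  obtain ⟨c, hc, h1⟩ := exists_unit u hu
  obtain ⟨b, hb⟩ := extend_basis (fun _ => c • u) {⟨0, by omega⟩} (by
    intro i hi j hj
    simp only [Set.mem_singleton_iff] at hi hj
    rw [hi, hj, if_pos rfl, h1])
  refine ⟨b, ⟨0, by omega⟩, ?_⟩
  rw [hb _ rfl, hψ.smul c hc]

lemma IsPsi.rank (hψ : IsPsi ψ) (hn : 3 ≤ n) (u : EV n) (hu : u ≠ 0) :
    ∃ ξ η : Fin n → ℂ, ψ u = Matrix.vecMulVec ξ η ∧ η ⬝ᵥ ξ = 1 := by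
  obtain ⟨b, i, hb⟩ := hψ.unit hn u hu
  obtain ⟨T, T', h1, h2, h3⟩ := hψ.frame b
  refine ⟨fun a => T a i, fun a => T' i a, ?_, ?_⟩
  · rw [hb, h3]
    ext a c
    simp [Matrix.mul_apply, Matrix.vecMulVec_apply, Matrix.single_apply, ite_and]
  · have := congrFun (congrFun h2 i) i
    simpa [Matrix.mul_apply, dotProduct] using this

lemma IsPsi.idem (hψ : IsPsi ψ) (hn : 3 ≤ n) (u : EV n) (hu : u ≠ 0) : ψ u * ψ u = ψ u := by
  obtain ⟨ξ, η, h1, h2⟩ := hψ.rank hn u hu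
  rw [h1, Matrix.vecMulVec_mul_vecMulVec, h2]
  simp

lemma IsPsi.ne (hψ : IsPsi ψ) (hn : 3 ≤ n) (u : EV n) (hu : u ≠ 0) : ψ u ≠ 0 := by
  obtain ⟨ξ, η, h1, h2⟩ := hψ.rank hn u hu
  intro h
  have : Matrix.trace (ψ u) = 1 := by
    rw [h1, Matrix.trace_vecMulVec, dotProduct_comm, h2]
  rw [h] at this
  simp at this

lemma IsPsi.r1 (hψ : IsPsi ψ) (hn : 3 ≤ n) (u : EV n) (hu : u ≠ 0)
    (A : Matrix (Fin n) (Fin n) ℂ) : ∃ c : ℂ, ψ u * A * ψ u = c • ψ u := by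
  obtain ⟨ξ, η, h1, h2⟩ := hψ.rank hn u hu
  refine ⟨η ⬝ᵥ (A *ᵥ ξ), ?_⟩
  rw [h1, Matrix.mul_assoc, Matrix.mul_vecMulVec, Matrix.vecMulVec_mul_vecMulVec]
  ext a b
  simp [Matrix.vecMulVec_apply]; ring

/-- `PQ = Q → QP = P` for rank one idempotents. -/
lemma IsPsi.flipL (hψ : IsPsi ψ) (hn : 3 ≤ n) {u v : EV n} (hu : u ≠ 0) (hv : v ≠ 0)
    (h : ψ u * ψ v = ψ v) : ψ v * ψ u = ψ u := by
  obtain ⟨c, hc⟩ := hψ.r1 hn u hu (ψ v)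
  rw [h] at hc
  have h1 : c • ψ v = ψ v := by
    calc c • ψ v = (c • ψ u) * ψ v := by rw [Matrix.smul_mul, h]
      _ = ψ v * (ψ u * ψ v) := by rw [← hc, Matrix.mul_assoc]
      _ = ψ v := by rw [h, hψ.idem hn v hv]
  have hc1 : c = 1 := by
    have : (c - 1) • ψ v = 0 := by rw [sub_smul, h1, one_smul, sub_self]
    rcases smul_eq_zero.mp this with h | h
    · exact sub_eq_zero.mp h
    · exact absurd h (hψ.ne hn v hv)
  rw [hc, hc1, one_smul]

lemma IsPsi.flipR (hψ : IsPsi ψ) (hn : 3 ≤ n) {u v : EV n} (hu : u ≠ 0) (hv : v ≠ 0)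
    (h : ψ v * ψ u = ψ v) : ψ u * ψ v = ψ u := by
  obtain ⟨c, hc⟩ := hψ.r1 hn u hu (ψ v)
  rw [Matrix.mul_assoc, h] at hc
  have h1 : c • ψ v = ψ v := by
    calc c • ψ v = ψ v * (c • ψ u) := by rw [Matrix.mul_smul, h]
      _ = (ψ v * ψ u) * ψ v := by rw [← hc, Matrix.mul_assoc]
      _ = ψ v := by rw [h, hψ.idem hn v hv]
  have hc1 : c = 1 := by
    have : (c - 1) • ψ v = 0 := by rw [sub_smul, h1, one_smul, sub_self]
    rcases smul_eq_zero.mp this with h | h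
    · exact sub_eq_zero.mp h
    · exact absurd h (hψ.ne hn v hv)
  rw [hc, hc1, one_smul]

lemma IsPsi.orthoU (hψ : IsPsi ψ) (b : OrthonormalBasis (Fin n) ℂ (EV n)) (i j : Fin n)
    (hij : i ≠ j) : ψ (b i) * ψ (b j) = 0 := by
  obtain ⟨T, T', h1, h2, h3⟩ := hψ.frame b
  rw [h3, h3, conj_mul_conj h2, Matrix.single_mul_single_of_ne _ _ _ _ hij]
  simp

lemma IsPsi.ortho (hψ : IsPsi ψ) (hn : 3 ≤ n) {u v : EV n} (hu : u ≠ 0) (hv : v ≠ 0)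
    (h : inner ℂ u v = 0) : ψ u * ψ v = 0 := by
  obtain ⟨c, hc, h1⟩ := exists_unit u hu
  obtain ⟨d, hd, h2⟩ := exists_unit v hv
  obtain ⟨b, i, j, k, hij, -, -, hi, hj⟩ := basis2 hn (c • u) (d • v) h1 h2
    (by rw [inner_smul_left, inner_smul_right, h]; simp)
  rw [← hψ.smul c hc u, ← hψ.smul d hd v, ← hi, ← hj]
  exact hψ.orthoU b i j hij

lemma IsPsi.sum (hψ : IsPsi ψ) (b : OrthonormalBasis (Fin n) ℂ (EV n)) :
    ∑ i, ψ (b i) = 1 := by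
  obtain ⟨T, T', h1, h2, h3⟩ := hψ.frame b
  simp only [h3]
  rw [← Finset.sum_mul, ← Finset.mul_sum, Matrix.sum_single_one, Matrix.mul_one, h1]

lemma IsPsi.sumL (hψ : IsPsi ψ) (hn : 3 ≤ n) (b : OrthonormalBasis (Fin n) ℂ (EV n))
    (s : Finset (Fin n)) (z : EV n) (hz : z ≠ 0) (h : ∀ i, i ∉ s → inner ℂ (b i) z = 0) :
    ∑ i ∈ s, ψ (b i) * ψ z = ψ z := by
  have : ∑ i, ψ (b i) * ψ z = ψ z := by rw [← Finset.sum_mul, hψ.sum b, Matrix.one_mul]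
  rw [← Finset.sum_subset (Finset.subset_univ s)] at this
  · exact this
  · intro i _ hi
    exact hψ.ortho hn (b.orthonormal.ne_zero i) hz (h i hi)

lemma IsPsi.sumR (hψ : IsPsi ψ) (hn : 3 ≤ n) (b : OrthonormalBasis (Fin n) ℂ (EV n))
    (s : Finset (Fin n)) (z : EV n) (hz : z ≠ 0) (h : ∀ i, i ∉ s → inner ℂ (b i) z = 0) :
    ∑ i ∈ s, ψ z * ψ (b i) = ψ z := by
  have : ∑ i, ψ z * ψ (b i) = ψ z := by rw [← Finset.mul_sum, hψ.sum b, Matrix.mul_one]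
  rw [← Finset.sum_subset (Finset.subset_univ s)] at this
  · exact this
  · intro i _ hi
    exact hψ.ortho hn hz (b.orthonormal.ne_zero i) (inner_eq_zero_symm.mp (h i hi))

lemma inner_b {b : OrthonormalBasis (Fin n) ℂ (EV n)} {i j : Fin n} (h : i ≠ j) :
    inner ℂ (b i) (b j) = 0 := by
  rw [orthonormal_iff_ite.mp b.orthonormal, if_neg h]

lemma IsPsi.S2 (hψ : IsPsi ψ) (hn : 3 ≤ n) {u v z : EV n} (hu : u ≠ 0) (hv : v ≠ 0)
    (h : inner ℂ u v = 0) (hz : z ≠ 0) (α β : ℂ) (hzz : z = α • u + β • v) :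
    ψ u * ψ z + ψ v * ψ z = ψ z ∧ ψ z * ψ u + ψ z * ψ v = ψ z := by
  obtain ⟨c, hc, h1⟩ := exists_unit u hu
  obtain ⟨d, hd, h2⟩ := exists_unit v hv
  obtain ⟨b, i, j, k, hij, -, -, hi, hj⟩ := basis2 hn (c • u) (d • v) h1 h2
    (by rw [inner_smul_left, inner_smul_right, h]; simp)
  have hh : ∀ l, l ∉ ({i, j} : Finset (Fin n)) → inner ℂ (b l) z = 0 := by
    intro l hl
    simp only [Finset.mem_insert, Finset.mem_singleton, not_or] at hl
    have e : z = (α * c⁻¹) • b i + (β * d⁻¹) • b j := by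
      rw [hi, hj, smul_smul, smul_smul, mul_assoc, mul_assoc, inv_mul_cancel₀ hc,
        inv_mul_cancel₀ hd, mul_one, mul_one, hzz]
    rw [e, inner_add_right, inner_smul_right, inner_smul_right, inner_b hl.1, inner_b hl.2]
    simp
  have hL := hψ.sumL hn b {i, j} z hz hh
  have hR := hψ.sumR hn b {i, j} z hz hh
  rw [Finset.sum_pair hij, hi, hj, hψ.smul c hc, hψ.smul d hd] at hL hR
  exact ⟨hL, hR⟩

lemma IsPsi.S3 (hψ : IsPsi ψ) (hn : 3 ≤ n) {e1 e2 e3 z : EV n} (h11 : inner ℂ e1 e1 = 1)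
    (h22 : inner ℂ e2 e2 = 1) (h33 : inner ℂ e3 e3 = 1) (h12 : inner ℂ e1 e2 = 0)
    (h13 : inner ℂ e1 e3 = 0) (h23 : inner ℂ e2 e3 = 0) (hz : z ≠ 0) (α β γ : ℂ)
    (hzz : z = α • e1 + β • e2 + γ • e3) :
    ψ e1 * ψ z + ψ e2 * ψ z + ψ e3 * ψ z = ψ z := by
  obtain ⟨b, i, j, k, hij, hik, hjk, hi, hj, hk⟩ := basis3 hn e1 e2 e3 h11 h22 h33 h12 h13 h23
  have hh : ∀ l, l ∉ ({i, j, k} : Finset (Fin n)) → inner ℂ (b l) z = 0 := by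
    intro l hl
    simp only [Finset.mem_insert, Finset.mem_singleton, not_or] at hl
    rw [hzz, ← hi, ← hj, ← hk, inner_add_right, inner_add_right, inner_smul_right,
      inner_smul_right, inner_smul_right, inner_b hl.1, inner_b hl.2.1, inner_b hl.2.2]
    simp
  have hL := hψ.sumL hn b {i, j, k} z hz hh
  rw [Finset.sum_insert (by simp [hij, hik]), Finset.sum_pair hjk, hi, hj, hk, ← add_assoc] at hL
  exact hL

end
end PN


namespace PN

structure ON3 {n : ℕ} (e1 e2 e3 : EV n) : Prop where
  h11 : inner ℂ e1 e1 = 1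
  h22 : inner ℂ e2 e2 = 1
  h33 : inner ℂ e3 e3 = 1
  h12 : inner ℂ e1 e2 = 0
  h13 : inner ℂ e1 e3 = 0
  h23 : inner ℂ e2 e3 = 0
  h21 : inner ℂ e2 e1 = 0
  h31 : inner ℂ e3 e1 = 0
  h32 : inner ℂ e3 e2 = 0

section
variable {n : ℕ} {ψ : EV n → Matrix (Fin n) (Fin n) ℂ}

lemma IsPsi.zero3 (hψ : IsPsi ψ) (hn : 3 ≤ n) {u : EV n} (hu : u ≠ 0)
    (A B : Matrix (Fin n) (Fin n) ℂ) (h : A * ψ u * B = 0) : A * ψ u = 0 ∨ ψ u * B = 0 := by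
  obtain ⟨ξ, η, h1, h2⟩ := hψ.rank hn u hu
  rw [h1, Matrix.mul_vecMulVec, Matrix.vecMulVec_mul] at h
  rw [h1, Matrix.mul_vecMulVec, Matrix.vecMulVec_mul]
  rcases Matrix.vecMulVec_eq_zero.mp h with h | h
  · left; rw [h]; simp
  · right; rw [h]; simp

lemma one_add_ne (τ : ℂ) : 1 + τ * (starRingEnd ℂ) τ ≠ 0 := by
  rw [Complex.mul_conj]
  have : (0:ℝ) < 1 + Complex.normSq τ := by have := Complex.normSq_nonneg τ; linarith
  exact_mod_cast this.ne'

section pair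
variable {a b : EV n}

lemma pair_w_ne (haa : inner ℂ a a = 1) (hab : inner ℂ a b = 0) (τ : ℂ) : a + τ • b ≠ 0 := by
  apply ne_zero_of_inner (x := a)
  simp only [inner_add_right, inner_smul_right, haa, hab]; simp

lemma pair_w'_ne (hbb : inner ℂ b b = 1) (hab : inner ℂ a b = 0) (τ : ℂ) :
    -(starRingEnd ℂ τ) • a + b ≠ 0 := by
  have hba : inner ℂ b a = 0 := inner_eq_zero_symm.mp hab
  apply ne_zero_of_inner (x := b)
  simp only [inner_add_right, inner_smul_right, hbb, hba]; simp

lemma pair_orth (haa : inner ℂ a a = 1) (hbb : inner ℂ b b = 1) (hab : inner ℂ a b = 0) (τ : ℂ) :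
    inner ℂ (-(starRingEnd ℂ τ) • a + b) (a + τ • b) = 0 := by
  have hba : inner ℂ b a = 0 := inner_eq_zero_symm.mp hab
  simp only [inner_add_right, inner_add_left, inner_smul_left, inner_smul_right, haa, hbb, hba, hab]
  simp

lemma IsPsi.pair1 (hψ : IsPsi ψ) (hn : 3 ≤ n) (haa : inner ℂ a a = 1) (hbb : inner ℂ b b = 1)
    (hab : inner ℂ a b = 0) (τ : ℂ) (h : ψ b * ψ (a + τ • b) = 0) (z : EV n) (hz : z ≠ 0)
    (hwz : inner ℂ (-(starRingEnd ℂ τ) • a + b) z = 0) : ψ b * ψ z = 0 := by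
  have ha := ne_zero_of_inner_self haa
  have hb := ne_zero_of_inner_self hbb
  have hw := pair_w_ne haa hab τ
  have hw' := pair_w'_ne hbb hab τ
  have ho := hψ.ortho hn hw' hw (pair_orth haa hbb hab τ)
  have s1 := (hψ.S2 hn ha hb hab hw 1 τ (by simp)).1
  rw [h, add_zero] at s1
  have s2 := hψ.flipL hn ha hw s1
  have s3 : ψ (-(starRingEnd ℂ τ) • a + b) * ψ a = 0 := by
    rw [← s2, ← Matrix.mul_assoc, ho, Matrix.zero_mul]
  have s4 := (hψ.S2 hn ha hb hab hw' (-(starRingEnd ℂ τ)) 1 (by simp)).2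
  rw [s3, zero_add] at s4
  have s5 := hψ.flipR hn hb hw' s4
  rw [← s5, Matrix.mul_assoc, hψ.ortho hn hw' hz hwz, Matrix.mul_zero]

lemma IsPsi.pair2 (hψ : IsPsi ψ) (hn : 3 ≤ n) (haa : inner ℂ a a = 1) (hbb : inner ℂ b b = 1)
    (hab : inner ℂ a b = 0) (τ : ℂ) (h : ψ (-(starRingEnd ℂ τ) • a + b) * ψ a = 0) :
    ψ b * ψ (a + τ • b) = 0 := by
  have ha := ne_zero_of_inner_self haa
  have hb := ne_zero_of_inner_self hbb
  have hw := pair_w_ne haa hab τ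
  have hw' := pair_w'_ne hbb hab τ
  have hN := one_add_ne τ
  have s1 := (hψ.S2 hn hw hw' (inner_eq_zero_symm.mp (pair_orth haa hbb hab τ)) ha
    (1 + τ * (starRingEnd ℂ) τ)⁻¹ (-(1 + τ * (starRingEnd ℂ) τ)⁻¹ * τ) (by
      have : a = ((1 + τ * (starRingEnd ℂ) τ)⁻¹ * (1 + τ * (starRingEnd ℂ) τ)) • a := by
        rw [inv_mul_cancel₀ hN, one_smul]
      conv_lhs => rw [this]
      module)).1
  rw [h, add_zero] at s1
  have s2 := hψ.flipL hn hw ha s1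
  rw [← s2, ← Matrix.mul_assoc, hψ.ortho hn hb ha (inner_eq_zero_symm.mp hab), Matrix.zero_mul]

end pair

lemma IsPsi.near (hψ : IsPsi ψ) (hn : 3 ≤ n) {u : EV n} (hu : u ≠ 0) (v : EV n) :
    ∀ᶠ s : ℂ in nhds 0, ψ u * ψ (u + s • v) ≠ 0 := by
  have h1 : ContinuousAt (fun s : ℂ => ψ u * ψ (u + s • v)) 0 := by
    have h2 : ContinuousAt ψ ((fun s : ℂ => u + s • v) 0) := by simpa using hψ.cont u hu
    have h3 : ContinuousAt (fun s : ℂ => u + s • v) 0 := by fun_prop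
    have h4 : ContinuousAt (fun s : ℂ => ψ (u + s • v)) 0 := ContinuousAt.comp h2 h3
    exact continuousAt_const.mul h4
  apply h1.eventually_ne
  simp [hψ.idem hn u hu, hψ.ne hn u hu]

lemma IsPsi.fin3 (hψ : IsPsi ψ) (hn : 3 ≤ n) {e1 e2 e3 : EV n} (H : ON3 e1 e2 e3)
    (t s : ℂ) (z : EV n) (hz : z = e1 + t • e2 + s • e3)
    (h2 : ψ e2 * ψ z = 0) (h3 : ψ e3 * ψ z = 0) : ψ e2 * ψ (e1 + t • e2) = 0 := by
  obtain ⟨h11, h22, h33, h12, h13, h23, h21, h31, h32⟩ := H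
  have n1 := ne_zero_of_inner_self h11
  have hzn : z ≠ 0 := by
    apply ne_zero_of_inner (x := e1)
    rw [hz]
    simp only [inner_add_right, inner_smul_right, h11, h12, h13]; simp
  have s1 := hψ.S3 hn h11 h22 h33 h12 h13 h23 hzn 1 t s (by rw [hz, one_smul])
  rw [h2, h3, add_zero, add_zero] at s1
  have s2 := hψ.flipL hn n1 hzn s1
  apply hψ.pair2 hn h11 h22 h12 t
  rw [← s2, ← Matrix.mul_assoc, hψ.ortho hn (pair_w'_ne h22 h12 t) hzn, Matrix.zero_mul]
  rw [hz]
  simp only [inner_add_right, inner_add_left, inner_smul_left, inner_smul_right, h11, h12, h13,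
    h22, h23, h21]
  simp

lemma ON3.swap {e1 e2 e3 : EV n} (H : ON3 e1 e2 e3) : ON3 e1 e3 e2 :=
  ⟨H.h11, H.h33, H.h22, H.h13, H.h12, H.h32, H.h31, H.h21, H.h23⟩

lemma IsPsi.dich (hψ : IsPsi ψ) (hn : 3 ≤ n) {e1 e2 e3 : EV n} (H : ON3 e1 e2 e3)
    (t1 : ℂ) (h : ψ e2 * ψ (e1 + t1 • e2) = 0) (s : ℂ) (ht1 : t1 ≠ 0) :
    ψ e3 * ψ (e1 + (s * t1) • e3) = 0 ∨ ψ e2 * ψ (e2 + s • e3) = 0 := by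
  have HH := H
  obtain ⟨h11, h22, h33, h12, h13, h23, h21, h31, h32⟩ := H
  have n1 := ne_zero_of_inner_self h11
  have n2 := ne_zero_of_inner_self h22
  have n3 := ne_zero_of_inner_self h33
  by_cases hs : s = 0
  · left
    rw [hs, zero_mul, zero_smul, add_zero]
    exact hψ.ortho hn n3 n1 h31
  set z := e1 + t1 • e2 + (s * t1) • e3 with hz
  have hzn : z ≠ 0 := by
    apply ne_zero_of_inner (x := e1)
    rw [hz]
    simp only [inner_add_right, inner_smul_right, h11, h12, h13]; simp
  have o2 : ψ e2 * ψ z = 0 := by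
    apply hψ.pair1 hn h11 h22 h12 t1 h z hzn
    rw [hz]
    simp only [inner_add_right, inner_add_left, inner_smul_left, inner_smul_right, h11, h12, h13,
      h22, h23, h21]
    simp
  have hq := pair_w'_ne h22 h32 s⁻¹
  set q := -(starRingEnd ℂ s⁻¹) • e3 + e2 with hqd
  have hqz : ψ q * ψ z = 0 := by
    apply hψ.ortho hn hq hzn
    rw [hz, hqd]
    simp only [inner_add_right, inner_add_left, inner_smul_left, inner_smul_right, h11, h12, h13,
      h22, h23, h21, h31, h32, h33]
    simp
    field_simp
    simp
  have s1 := (hψ.S2 hn n3 n2 h32 hq (-(starRingEnd ℂ s⁻¹)) 1 (by rw [hqd, one_smul])).2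
  have s2 : ψ q * ψ e3 * ψ z = 0 := by
    rw [← s1, Matrix.add_mul, Matrix.mul_assoc _ (ψ e2), o2, Matrix.mul_zero, add_zero] at hqz
    exact hqz
  rcases hψ.zero3 hn n3 _ _ s2 with h5 | h5
  · right
    have := hψ.pair2 hn h33 h22 h32 s⁻¹ h5
    rw [← this, ← hψ.smul s⁻¹ (inv_ne_zero hs) (e2 + s • e3)]
    congr 2
    rw [smul_add, smul_smul, inv_mul_cancel₀ hs, one_smul, add_comm]
  · left
    exact hψ.fin3 hn HH.swap (s * t1) t1 z (by rw [hz]; abel) h5 o2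

lemma IsPsi.local_claim (hψ : IsPsi ψ) (hn : 3 ≤ n) {e1 e2 e3 : EV n} (H : ON3 e1 e2 e3)
    (t1 : ℂ) (ht1 : t1 ≠ 0) (h : ψ e2 * ψ (e1 + t1 • e2) = 0) :
    ∀ᶠ t : ℂ in nhds 0, ψ e2 * ψ (e1 + t • e2) = 0 := by
  have HH := H
  obtain ⟨h11, h22, h33, h12, h13, h23, h21, h31, h32⟩ := H
  have n1 := ne_zero_of_inner_self h11
  have n2 := ne_zero_of_inner_self h22
  have n3 := ne_zero_of_inner_self h33
  have h_ii : ∀ᶠ s : ℂ in nhds 0, ψ e3 * ψ (e1 + (s * t1) • e3) = 0 := by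
    filter_upwards [hψ.near hn n2 e3] with s hs
    exact (hψ.dich hn HH t1 h s ht1).resolve_right hs
  obtain ⟨s0, hs0, o0⟩ : ∃ s0 : ℂ, s0 ≠ 0 ∧ ψ e2 * ψ (e2 + s0 • e3) = 0 := by
    have h1 : ∀ᶠ r : ℂ in nhdsWithin 0 {0}ᶜ, ψ e3 * ψ (e3 + r • e1) ≠ 0 :=
      (hψ.near hn n3 e1).filter_mono nhdsWithin_le_nhds
    obtain ⟨r, hr, hr0⟩ := (h1.and self_mem_nhdsWithin).exists
    have hr0 : r ≠ 0 := by simpa using hr0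
    refine ⟨(r * t1)⁻¹, by simp [hr0, ht1], ?_⟩
    refine (hψ.dich hn HH t1 h _ ht1).resolve_left ?_
    rw [← hψ.smul r hr0 (e1 + _)]
    convert hr using 3
    rw [smul_add, smul_smul, add_comm]
    congr 1
    field_simp
    simp
  have h_t : Filter.Tendsto (fun t : ℂ => s0 * t / t1) (nhds 0) (nhds 0) := by
    have : Continuous (fun t : ℂ => s0 * t / t1) := by fun_prop
    simpa using this.tendsto 0
  filter_upwards [h_t.eventually h_ii] with t ht
  rw [div_mul_cancel₀ _ ht1] at ht
  set z := e1 + t • e2 + (s0 * t) • e3 with hz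
  have hzn : z ≠ 0 := by
    apply ne_zero_of_inner (x := e1)
    rw [hz]
    simp only [inner_add_right, inner_smul_right, h11, h12, h13]; simp
  have o3 : ψ e3 * ψ z = 0 := by
    apply hψ.pair1 hn h11 h33 h13 _ ht z hzn
    rw [hz]
    simp only [inner_add_right, inner_add_left, inner_smul_left, inner_smul_right, h11, h12, h13,
      h22, h23, h21, h31, h32, h33]
    simp
  have o2 : ψ e2 * ψ z = 0 := by
    apply hψ.pair1 hn h33 h22 h32 s0⁻¹ _ z hzn
    · rw [hz]
      simp only [inner_add_right, inner_add_left, inner_smul_left, inner_smul_right, h11, h12, h13,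
        h22, h23, h21, h31, h32, h33]
      simp
      field_simp
      simp
    · rw [← o0, ← hψ.smul s0⁻¹ (inv_ne_zero hs0) (e2 + s0 • e3)]
      congr 2
      rw [smul_add, smul_smul, inv_mul_cancel₀ hs0, one_smul, add_comm]
  exact hψ.fin3 hn HH t (s0 * t) z hz o2 o3

end
end PN


namespace PN

section
variable {n : ℕ} {ψ : EV n → Matrix (Fin n) (Fin n) ℂ}

lemma IsPsi.trans (hψ : IsPsi ψ) (hn : 3 ≤ n) {u v u' v' z : EV n} (hu : u ≠ 0) (hv : v ≠ 0)
    (hu' : u' ≠ 0) (hv' : v' ≠ 0) (hz : z ≠ 0) (h : inner ℂ u v = 0) (h' : inner ℂ u' v' = 0)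
    (α β α' β' : ℂ) (hz1 : z = α • u + β • v) (hz2 : z = α' • u' + β' • v')
    (hh : ψ u' * ψ u = ψ u) (h0 : ψ v * ψ z = 0) : ψ v' * ψ z = 0 := by
  have s1 := (hψ.S2 hn hu hv h hz α β hz1).1
  rw [h0, add_zero] at s1
  have s2 := (hψ.S2 hn hu' hv' h' hz α' β' hz2).1
  have s3 : ψ u' * ψ z = ψ z := by
    rw [← s1, ← Matrix.mul_assoc, hh]
  rw [s3] at s2
  simpa using s2

lemma IsPsi.local_claim2 (hψ : IsPsi ψ) (hn : 3 ≤ n) {e1 e2 : EV n} (h11 : inner ℂ e1 e1 = 1)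
    (h22 : inner ℂ e2 e2 = 1) (h12 : inner ℂ e1 e2 = 0) (τ : ℂ) (w w' : EV n)
    (hw : w = e1 + τ • e2) (hw' : w' = -(starRingEnd ℂ τ) • e1 + e2)
    (t1 : ℂ) (ht1 : t1 ≠ 0) (h : ψ w' * ψ (w + t1 • w') = 0) :
    ∀ᶠ t : ℂ in nhds 0, ψ w' * ψ (w + t • w') = 0 := by
  have h21 : inner ℂ e2 e1 = 0 := inner_eq_zero_symm.mp h12
  have nw : w ≠ 0 := by rw [hw]; exact pair_w_ne h11 h12 τ
  obtain ⟨c, hc, hc1⟩ := exists_unit w nw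
  have i1 : inner ℂ w w = 1 + τ * (starRingEnd ℂ) τ := by
    rw [hw]
    simp only [inner_add_right, inner_add_left, inner_smul_left, inner_smul_right, h11, h12, h22,
      h21]
    ring
  have i2 : inner ℂ w' w' = 1 + τ * (starRingEnd ℂ) τ := by
    rw [hw']
    simp only [inner_add_right, inner_add_left, inner_smul_left, inner_smul_right, h11, h12, h22,
      h21]
    simp; ring
  have i3 : inner ℂ w w' = 0 := by
    rw [hw, hw']
    exact inner_eq_zero_symm.mp (pair_orth h11 h22 h12 τ)
  have hc2 : inner ℂ (c • w') (c • w') = 1 := by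
    rw [inner_smul_left, inner_smul_right, i2, ← i1, ← inner_smul_right, ← inner_smul_left, hc1]
  have hc3 : inner ℂ (c • w) (c • w') = 0 := by
    rw [inner_smul_left, inner_smul_right, i3]; simp
  obtain ⟨b, i, j, k, hij, hik, hjk, hi, hj⟩ := basis2 hn (c • w) (c • w') hc1 hc2 hc3
  have H : ON3 (c • w) (c • w') (b k) := by
    refine ⟨hc1, hc2, ?_, hc3, ?_, ?_, ?_, ?_, ?_⟩
    · rw [orthonormal_iff_ite.mp b.orthonormal, if_pos rfl]
    · rw [← hi]; exact inner_b hik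
    · rw [← hj]; exact inner_b hjk
    · rw [← hi, ← hj]; exact inner_b hij.symm
    · rw [← hi]; exact inner_b hik.symm
    · rw [← hj]; exact inner_b hjk.symm
  have key : ∀ t : ℂ, ψ (c • w') * ψ (c • w + t • c • w') = ψ w' * ψ (w + t • w') := by
    intro t
    rw [hψ.smul c hc, smul_comm t c, ← smul_add, hψ.smul c hc]
  have := hψ.local_claim hn H t1 ht1 (by rw [key, h])
  simpa only [key] using this

lemma IsPsi.N (hψ : IsPsi ψ) (hn : 3 ≤ n) {e1 e2 : EV n} (h11 : inner ℂ e1 e1 = 1)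
    (h22 : inner ℂ e2 e2 = 1) (h12 : inner ℂ e1 e2 = 0) (t : ℂ) (ht : t ≠ 0) :
    ψ e2 * ψ (e1 + t • e2) ≠ 0 := by
  intro h
  have h21 : inner ℂ e2 e1 = 0 := inner_eq_zero_symm.mp h12
  have n1 := ne_zero_of_inner_self h11
  have n2 := ne_zero_of_inner_self h22
  let Z : Set ℝ := {r | ψ e2 * ψ (e1 + ((r : ℂ) * t) • e2) = 0}
  have memZ : ∀ r, r ∈ Z ↔ ψ e2 * ψ (e1 + ((r : ℂ) * t) • e2) = 0 := fun r => Iff.rfl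
  have h0 : (0 : ℝ) ∈ Z := by
    rw [memZ]; simpa using hψ.ortho hn n2 n1 h21
  have h1 : (1 : ℝ) ∈ Z := by
    rw [memZ]; simpa using h
  have hcl : IsClosed Z := by
    have hc : Continuous (fun r : ℝ => ψ e2 * ψ (e1 + ((r : ℂ) * t) • e2)) := by
      rw [continuous_iff_continuousAt]
      intro r
      have h2 : ContinuousAt ψ ((fun r : ℝ => e1 + ((r : ℂ) * t) • e2) r) :=
        hψ.cont _ (pair_w_ne h11 h12 _)
      have h3 : ContinuousAt (fun r : ℝ => e1 + ((r : ℂ) * t) • e2) r := by fun_prop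
      exact continuousAt_const.mul (ContinuousAt.comp h2 h3)
    exact isClosed_singleton.preimage hc (t := {0})
  have hop : IsOpen Z := by
    rw [isOpen_iff_mem_nhds]
    intro r0 hr0
    rw [memZ] at hr0
    set τ : ℂ := (r0 : ℂ) * t with hτ
    obtain ⟨w, hw⟩ : ∃ w, w = e1 + τ • e2 := ⟨_, rfl⟩
    obtain ⟨w', hw'⟩ : ∃ w', w' = -(starRingEnd ℂ τ) • e1 + e2 := ⟨_, rfl⟩
    have nw : w ≠ 0 := by rw [hw]; exact pair_w_ne h11 h12 τ
    have nw' : w' ≠ 0 := by rw [hw']; exact pair_w'_ne h22 h12 τ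
    have i3 : inner ℂ w w' = 0 := by
      rw [hw, hw']
      exact inner_eq_zero_symm.mp (pair_orth h11 h22 h12 τ)
    have N0 := one_add_ne τ
    set N : ℂ := 1 + τ * (starRingEnd ℂ) τ with hN
    rw [← hw] at hr0
    have f1 : ψ e1 * ψ w = ψ w := by
      have := (hψ.S2 hn n1 n2 h12 nw 1 τ (by rw [hw, one_smul])).1
      rwa [hr0, add_zero] at this
    have f2 : ψ w * ψ e1 = ψ e1 := hψ.flipL hn n1 nw f1
    let A : ℝ → ℂ := fun r => 1 + r * (r0 : ℂ) * (t * starRingEnd ℂ t)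
    let B : ℝ → ℂ := fun r => t * (r - r0)
    have hAB : ∀ r : ℝ, N • (e1 + ((r : ℂ) * t) • e2) = A r • w + B r • w' := by
      intro r
      rw [hw, hw', hN, hτ, map_mul, Complex.conj_ofReal]
      simp only [A, B]
      module
    have hAB' : ∀ r : ℝ, (e1 + ((r : ℂ) * t) • e2) = (N⁻¹ * A r) • w + (N⁻¹ * B r) • w' := by
      intro r
      rw [mul_smul N⁻¹, mul_smul N⁻¹, ← smul_add, ← hAB, smul_smul, inv_mul_cancel₀ N0, one_smul]
    have key : ∀ r : ℝ, A r ≠ 0 →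
        ψ (e1 + ((r : ℂ) * t) • e2) = ψ (w + (B r / A r) • w') := by
      intro r hr
      rw [← hψ.smul N N0, hAB, ← hψ.smul (A r) hr (w + _), smul_add, smul_smul,
        mul_div_cancel₀ _ hr]
    have tr1 : ∀ r : ℝ, ψ e2 * ψ (e1 + ((r : ℂ) * t) • e2) = 0 ↔
        ψ w' * ψ (e1 + ((r : ℂ) * t) • e2) = 0 := by
      intro r
      have nz := pair_w_ne h11 h12 ((r : ℂ) * t)
      constructor
      · intro hh
        exact hψ.trans hn n1 n2 nw nw' nz h12 i3 1 _ _ _ (by rw [one_smul]) (hAB' r) f2 hh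
      · intro hh
        exact hψ.trans hn nw nw' n1 n2 nz i3 h12 _ _ 1 _ (hAB' r) (by rw [one_smul]) f1 hh
    obtain ⟨r1, hr1, hA1, hB1⟩ : ∃ r1 : ℝ, r1 ∈ Z ∧ A r1 ≠ 0 ∧ B r1 ≠ 0 := by
      by_cases hr : r0 = 0
      · refine ⟨1, h1, ?_, ?_⟩
        · simp [A, hr]
        · simp [B, hr, ht]
      · refine ⟨0, h0, ?_, ?_⟩
        · simp [A]
        · simp [B, hr, ht]
    have hloc := hψ.local_claim2 hn h11 h22 h12 τ w w' hw hw' (B r1 / A r1)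
      (div_ne_zero hB1 hA1) (by rw [← key r1 hA1]; exact (tr1 r1).mp hr1)
    have hA0 : A r0 ≠ 0 := by
      have : A r0 = N := by
        simp only [A, hN, hτ, map_mul, Complex.conj_ofReal]; ring
      rw [this]; exact N0
    have cA : ContinuousAt A r0 := by simp only [A]; fun_prop
    have cB : ContinuousAt B r0 := by simp only [B]; fun_prop
    have hlim : Filter.Tendsto (fun r => B r / A r) (nhds r0) (nhds 0) := by
      have h5 : Filter.Tendsto (fun r => B r / A r) (nhds r0) (nhds (B r0 / A r0)) :=
        Filter.Tendsto.div cB cA hA0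
      have h6 : B r0 / A r0 = 0 := by simp [B]
      rwa [h6] at h5
    filter_upwards [hlim.eventually hloc, cA.eventually_ne hA0] with r hr1 hr2
    rw [memZ, tr1, key r hr2]
    exact hr1
  have huniv : Z = Set.univ := IsClopen.eq_univ ⟨hcl, hop⟩ ⟨0, h0⟩
  have hl : Filter.Tendsto (fun ρ : ℝ => (ρ : ℂ) / t) (nhds 0) (nhds 0) := by
    have : Continuous (fun ρ : ℝ => (ρ : ℂ) / t) := by fun_prop
    simpa using this.tendsto 0
  have h2 := (hl.eventually (hψ.near hn n2 e1)).filter_mono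
    (nhdsWithin_le_nhds (s := ({0}ᶜ : Set ℝ)))
  obtain ⟨ρ, hρ, hρ0⟩ := (h2.and self_mem_nhdsWithin).exists
  have hρ0 : ρ ≠ 0 := by simpa using hρ0
  have hρ1 : (ρ : ℂ) ≠ 0 := by exact_mod_cast hρ0
  apply hρ
  have h3 : ρ⁻¹ ∈ Z := by rw [huniv]; trivial
  rw [memZ, ← hψ.smul ((ρ : ℂ) / t) (div_ne_zero hρ1 ht) (e1 + _)] at h3
  rw [← h3]
  congr 2
  rw [smul_add, smul_smul, add_comm]
  congr 1
  push_cast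
  field_simp
  simp

lemma IsPsi.N' (hψ : IsPsi ψ) (hn : 3 ≤ n) {u v : EV n} (hu : u ≠ 0) (hv : v ≠ 0)
    (h : ψ u * ψ v = 0) : inner ℂ u v = 0 := by
  by_contra hne
  obtain ⟨c, hc, h1⟩ := exists_unit u hu
  set e2 := c • u with he2
  have hne' : inner ℂ e2 v ≠ 0 := by
    rw [he2, inner_smul_left]; simp [hc, hne]
  set r := v - (inner ℂ e2 v) • e2 with hr
  have hve : v = r + (inner ℂ e2 v) • e2 := by rw [hr]; abel
  have hor : inner ℂ e2 r = 0 := by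
    rw [hr, inner_sub_right, inner_smul_right, h1]; ring
  have h' : ψ e2 * ψ v = 0 := by rw [he2, hψ.smul c hc, h]
  have n2 := ne_zero_of_inner_self h1
  by_cases hr0 : r = 0
  · rw [hve, hr0, zero_add, hψ.smul _ hne', hψ.idem hn _ n2] at h'
    exact hψ.ne hn _ n2 h'
  · obtain ⟨d, hd, h3⟩ := exists_unit r hr0
    refine hψ.N hn h3 h1 ?_ (d * inner ℂ e2 v) (mul_ne_zero hd hne') ?_
    · rw [inner_smul_left, inner_eq_zero_symm.mp hor, mul_zero]
    · rw [mul_smul, ← smul_add, hψ.smul d hd, ← hve, h']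

end
end PN


namespace PN

lemma alg_half {f1 G1 f2 G2 : ℂ → ℂ}
    (H : ∀ a b c d : ℂ, 1 + a * c + b * d = 0 ↔ 1 + G1 a * f1 c + G2 b * f2 d = 0)
    (zf : f2 0 = 0) :
    (∀ a c, G1 a * f1 c = G1 (a * c) * f1 1) ∧ (G1 (-1) * f1 1 = -1) ∧ (G1 1 * f1 1 = 1) ∧
    (∀ x y, G1 (x * y) * f1 1 = (G1 x * f1 1) * (G1 y * f1 1)) := by
  have dep : ∀ a c, G1 a * f1 c = G1 (a * c) * f1 1 := by
    intro a c
    have h1 := (H a (-1 - a * c) c 1).mp (by ring)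
    have h2 := (H (a * c) (-1 - a * c) 1 1).mp (by ring)
    linear_combination h1 - h2
  have hm : G1 (-1) * f1 1 = -1 := by
    have := (H (-1) 0 1 0).mp (by ring)
    rw [zf] at this
    linear_combination this
  have mul : ∀ x y, (G1 (x * y) * f1 1) * (G1 1 * f1 1) = (G1 x * f1 1) * (G1 y * f1 1) := by
    intro x y
    have h1 := dep x y
    have h2 := dep 1 y
    rw [one_mul] at h2
    rw [← h1, ← h2]; ring
  have h1 : G1 1 * f1 1 = 1 := by
    have h2 := mul (-1) (-1)
    rw [hm] at h2
    have h3 : (G1 1 * f1 1) * (G1 1 * f1 1) = 1 := by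
      have e : (-1 : ℂ) * -1 = 1 := by norm_num
      rw [e] at h2
      exact h2
    rcases mul_self_eq_one_iff.mp h3 with h4 | h4
    · exact h4
    · exfalso
      have := (H 1 0 1 0).mpr (by rw [h4, zf]; ring)
      norm_num at this
  refine ⟨dep, hm, h1, ?_⟩
  intro x y
  have := mul x y
  rw [h1, mul_one] at this
  exact this

lemma alg_main {f1 G1 f2 G2 : ℂ → ℂ}
    (H : ∀ a b c d : ℂ, 1 + a * c + b * d = 0 ↔ 1 + G1 a * f1 c + G2 b * f2 d = 0)
    (zf1 : f1 0 = 0) (zf2 : f2 0 = 0) :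
    ∃ F : ℂ →+* ℂ, (∀ x, F x = G1 x * f1 1) ∧ (∀ a c, G1 a * f1 c = F (a * c)) ∧
      (∀ a c, G2 a * f2 c = F (a * c)) := by
  obtain ⟨d1, m1, o1, M1⟩ := alg_half H zf2
  obtain ⟨d2, m2, o2, M2⟩ := alg_half (f1 := f2) (G1 := G2) (f2 := f1) (G2 := G1)
    (by intro a b c d
        rw [add_right_comm, H, add_right_comm]) zf1
  set h1 : ℂ → ℂ := fun x => G1 x * f1 1 with hh1
  set h2 : ℂ → ℂ := fun x => G2 x * f2 1 with hh2
  have e1 : ∀ x, G1 x * f1 1 = h1 x := fun x => rfl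
  have e2 : ∀ x, G2 x * f2 1 = h2 x := fun x => rfl
  simp only [e1] at d1 m1 o1 M1
  simp only [e2] at d2 m2 o2 M2
  have K : ∀ x y, 1 + x + y = 0 ↔ 1 + h1 x + h2 y = 0 := by
    intro x y
    have := H x y 1 1
    simpa [mul_one] using this
  have z1 : h1 0 = 0 := by have := d1 0 0; rw [zf1] at this; simpa using this.symm
  have z2 : h2 0 = 0 := by have := d2 0 0; rw [zf2] at this; simpa using this.symm
  have s2 : ∀ x, h2 (1 + x) = 1 + h1 x := by
    intro x
    have a := (K x (-1 * (1 + x))).mp (by ring)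
    rw [M2, m2] at a
    linear_combination -a
  have eq : ∀ x, h1 x = h2 x := by
    intro x
    by_cases hx : x = 0
    · rw [hx, z1, z2]
    have a1 := s2 x
    have a2 : h2 (1 + x) = h2 x * (1 + h1 x⁻¹) := by
      rw [← s2, ← M2]; congr 1; field_simp; ring
    have a3 : h1 x * h1 x⁻¹ = 1 := by rw [← M1, mul_inv_cancel₀ hx, o1]
    have a4 : (1 + h1 x) * (h1 x - h2 x) = 0 := by
      linear_combination (-h1 x) * a1 + h1 x * a2 + h2 x * a3
    rcases mul_eq_zero.mp a4 with h | h
    · have := (K x 0).mpr (by rw [z2, h, add_zero])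
      have hx1 : x = -1 := by linear_combination this
      rw [hx1, m1, m2]
    · exact sub_eq_zero.mp h
  have add : ∀ x y, h1 (x + y) = h1 x + h1 y := by
    intro x y
    by_cases hx : x = 0
    · rw [hx, z1, zero_add, zero_add]
    have : x + y = x * (1 + x⁻¹ * y) := by field_simp
    rw [this, M1, eq (1 + _), s2, mul_add, ← M1, mul_one]
    congr 2
    field_simp
  refine ⟨{ toFun := h1, map_one' := o1, map_mul' := M1, map_zero' := z1, map_add' := add },
    fun x => rfl, fun a c => ?_, fun a c => ?_⟩
  · exact d1 a c
  · rw [d2]; exact (eq _).symm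

end PN


namespace PN

lemma sum2 {n : ℕ} {o j : Fin n} (hoj : o ≠ j) (F : Fin n → ℂ)
    (h : ∀ l, l ≠ o → l ≠ j → F l = 0) : ∑ i, F i = F o + F j := by
  rw [← Finset.sum_pair hoj]
  symm
  apply Finset.sum_subset (Finset.subset_univ _)
  intro l _ hl
  simp only [Finset.mem_insert, Finset.mem_singleton, not_or] at hl
  exact h l hl.1 hl.2

lemma sum3 {n : ℕ} {o j k : Fin n} (hoj : o ≠ j) (hok : o ≠ k) (hjk : j ≠ k) (F : Fin n → ℂ)
    (h : ∀ l, l ≠ o → l ≠ j → l ≠ k → F l = 0) : ∑ i, F i = F o + F j + F k := by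
  have : ∑ i ∈ ({o, j, k} : Finset (Fin n)), F i = F o + F j + F k := by
    rw [Finset.sum_insert (by simp [hoj, hok]), Finset.sum_pair hjk, add_assoc]
  rw [← this]
  symm
  apply Finset.sum_subset (Finset.subset_univ _)
  intro l _ hl
  simp only [Finset.mem_insert, Finset.mem_singleton, not_or] at hl
  exact h l hl.1 hl.2.1 hl.2.2

/-- vector with entries `a, b` at `o, j`. -/
noncomputable def vec2 {n : ℕ} (o j : Fin n) (a b : ℂ) : EV n :=
  WithLp.toLp 2 (fun i => if i = o then a else if i = j then b else 0)

noncomputable def vec3 {n : ℕ} (o j k : Fin n) (a b c : ℂ) : EV n :=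
  WithLp.toLp 2 (fun i => if i = o then a else if i = j then b else if i = k then c else 0)

lemma inner_sum {n : ℕ} (u v : EV n) : inner ℂ u v = ∑ i, starRingEnd ℂ (u i) * v i := by
  simp [PiLp.inner_apply, mul_comm]

lemma ne_zero_of_coord {n : ℕ} {u : EV n} (i : Fin n) (h : u i ≠ 0) : u ≠ 0 := by
  rintro rfl; simp at h

/-- coordinates of the rank one idempotents -/
structure Crd {n : ℕ} (ψ : EV n → Matrix (Fin n) (Fin n) ℂ) (ξ η : EV n → Fin n → ℂ) : Prop where
  eq : ∀ u, u ≠ 0 → ∀ i j, ψ u i j = ξ u i * η u j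
  one : ∀ u, u ≠ 0 → ∑ i, η u i * ξ u i = 1
  x0 : ∀ u, u ≠ 0 → ∀ i, ξ u i = 0 ↔ u i = 0
  y0 : ∀ u, u ≠ 0 → ∀ i, η u i = 0 ↔ u i = 0
  orth : ∀ u, u ≠ 0 → ∀ v, v ≠ 0 → (∑ i, η v i * ξ u i = 0 ↔ ∑ i, starRingEnd ℂ (v i) * u i = 0)

section
variable {n : ℕ} {ψ : EV n → Matrix (Fin n) (Fin n) ℂ}

lemma IsPsi.crd (hψ : IsPsi ψ) (hn : 3 ≤ n)
    (hE : ∀ i, ψ (EuclideanSpace.single i (1 : ℂ)) = Matrix.single i i 1) :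
    ∃ ξ η, Crd ψ ξ η := by
  have h := hψ.rank hn
  choose! ξ η h1 h2 using h
  have xn : ∀ u, u ≠ 0 → ξ u ≠ 0 := by
    intro u hu h; have := h2 u hu; rw [h] at this; simp at this
  have yn : ∀ u, u ≠ 0 → η u ≠ 0 := by
    intro u hu h; have := h2 u hu; rw [h] at this; simp at this
  have O : ∀ u, u ≠ 0 → ∀ v, v ≠ 0 → (ψ v * ψ u = 0 ↔ inner ℂ v u = 0) :=
    fun u hu v hv => ⟨fun h => hψ.N' hn hv hu h, fun h => hψ.ortho hn hv hu h⟩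
  have En : ∀ i : Fin n, (EuclideanSpace.single i (1 : ℂ) : EV n) ≠ 0 := by
    intro i; simp
  refine ⟨ξ, η, fun u hu i j => by rw [h1 u hu, Matrix.vecMulVec_apply], ?_, ?_, ?_, ?_⟩
  · intro u hu; simpa [dotProduct] using h2 u hu
  · intro u hu i
    have h3 := O u hu _ (En i)
    rw [hE, h1 u hu, EuclideanSpace.inner_single_left, Matrix.mul_vecMulVec,
      Matrix.vecMulVec_eq_zero] at h3
    simp only [map_one, one_mul] at h3
    rw [← h3]
    constructor
    · intro h; left; ext a
      simp only [Matrix.mulVec, dotProduct, Matrix.single_apply, Pi.zero_apply]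
      apply Finset.sum_eq_zero
      intro l _
      split_ifs with hh
      · rw [← hh.2, h, mul_zero]
      · rw [zero_mul]
    · rintro (h | h)
      · have := congrFun h i
        simpa [Matrix.mulVec, dotProduct, Matrix.single_apply] using this
      · exact absurd h (yn u hu)
  · intro u hu i
    have h3 := O _ (En i) u hu
    rw [hE, h1 u hu, EuclideanSpace.inner_single_right, Matrix.vecMulVec_mul,
      Matrix.vecMulVec_eq_zero] at h3
    simp only [one_mul, map_eq_zero] at h3
    rw [← h3]
    constructor
    · intro h; right; ext a
      simp only [Matrix.vecMul, dotProduct, Matrix.single_apply, Pi.zero_apply]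
      apply Finset.sum_eq_zero
      intro l _
      split_ifs with hh
      · rw [← hh.1, h, zero_mul]
      · rw [mul_zero]
    · rintro (h | h)
      · exact absurd h (xn u hu)
      · have := congrFun h i
        simpa [Matrix.vecMul, dotProduct, Matrix.single_apply] using this
  · intro u hu v hv
    rw [← inner_sum, ← O u hu v hv, h1 u hu, h1 v hv, Matrix.vecMulVec_mul_vecMulVec,
      Matrix.vecMulVec_eq_zero, smul_eq_zero]
    simp [xn v hv, yn u hu, dotProduct]

variable {ξ η : EV n → Fin n → ℂ}

lemma Crd.ratx (C : Crd ψ ξ η) {o j : Fin n} (hoj : o ≠ j) {u v : EV n} (hu : u o ≠ 0)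
    (hv : v o ≠ 0) (h : u j * v o = v j * u o) : ξ u j * ξ v o = ξ v j * ξ u o := by
  have hu' := ne_zero_of_coord o hu
  have hv' := ne_zero_of_coord o hv
  set w := vec2 o j (starRingEnd ℂ (-u j)) (starRingEnd ℂ (u o)) with hw
  have wo : w o = starRingEnd ℂ (-u j) := by simp [hw, vec2]
  have wj : w j = starRingEnd ℂ (u o) := by simp [hw, vec2, hoj.symm]
  have wl : ∀ l, l ≠ o → l ≠ j → w l = 0 := by
    intro l h1 h2; simp [hw, vec2, h1, h2]
  have wn : w ≠ 0 := ne_zero_of_coord j (by rw [wj]; simpa using hu)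
  have a1 := (C.orth u hu' w wn).mpr (by
    rw [sum2 hoj _ (fun l h1 h2 => by rw [wl l h1 h2]; simp), wo, wj]
    simp; ring)
  have a2 := (C.orth v hv' w wn).mpr (by
    rw [sum2 hoj _ (fun l h1 h2 => by rw [wl l h1 h2]; simp), wo, wj]
    simp; linear_combination -h)
  rw [sum2 hoj _ (fun l h1 h2 => by rw [(C.y0 w wn l).mpr (wl l h1 h2), zero_mul])] at a1 a2
  have yj : η w j ≠ 0 := by
    rw [Ne, C.y0 w wn, wj]; simpa using hu
  apply mul_left_cancel₀ yj
  linear_combination ξ v o * a1 - ξ u o * a2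

lemma Crd.raty (C : Crd ψ ξ η) {o j : Fin n} (hoj : o ≠ j) {u v : EV n} (hu : u o ≠ 0)
    (hv : v o ≠ 0) (h : u j * v o = v j * u o) : η u j * η v o = η v j * η u o := by
  have hu' := ne_zero_of_coord o hu
  have hv' := ne_zero_of_coord o hv
  set w := vec2 o j (starRingEnd ℂ (-u j)) (starRingEnd ℂ (u o)) with hw
  have wo : w o = starRingEnd ℂ (-u j) := by simp [hw, vec2]
  have wj : w j = starRingEnd ℂ (u o) := by simp [hw, vec2, hoj.symm]
  have wl : ∀ l, l ≠ o → l ≠ j → w l = 0 := by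
    intro l h1 h2; simp [hw, vec2, h1, h2]
  have wn : w ≠ 0 := ne_zero_of_coord j (by rw [wj]; simpa using hu)
  have a1 := (C.orth w wn u hu').mpr (by
    rw [sum2 hoj _ (fun l h1 h2 => by rw [wl l h1 h2]; simp), wo, wj]
    simp; ring)
  have a2 := (C.orth w wn v hv').mpr (by
    rw [sum2 hoj _ (fun l h1 h2 => by rw [wl l h1 h2]; simp), wo, wj]
    have := congrArg (starRingEnd ℂ) h
    simp only [map_mul] at this
    simp; linear_combination -this)
  rw [sum2 hoj _ (fun l h1 h2 => by rw [(C.x0 w wn l).mpr (wl l h1 h2), mul_zero])] at a1 a2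
  have yj : ξ w j ≠ 0 := by
    rw [Ne, C.x0 w wn, wj]; simpa using hu
  apply mul_left_cancel₀ yj
  linear_combination η v o * a1 - η u o * a2

/-- slope functions -/
noncomputable def slope {n : ℕ} (ξ : EV n → Fin n → ℂ) (o j : Fin n) (c : ℂ) : ℂ :=
  ξ (vec2 o j 1 c) j / ξ (vec2 o j 1 c) o

lemma vec2_o (o j : Fin n) (a c : ℂ) : vec2 o j a c o = a := by simp [vec2]
lemma vec2_j {o j : Fin n} (hoj : o ≠ j) (a c : ℂ) : vec2 o j a c j = c := by
  simp [vec2, hoj.symm]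

lemma vec2_ne (o j : Fin n) (c : ℂ) : vec2 o j 1 c ≠ 0 :=
  ne_zero_of_coord o (by rw [vec2_o]; exact one_ne_zero)

lemma Crd.fx (C : Crd ψ ξ η) {o j : Fin n} (hoj : o ≠ j) {u : EV n} (hu : u o ≠ 0) :
    ξ u j = slope ξ o j (u j / u o) * ξ u o := by
  have hv : vec2 o j 1 (u j / u o) o ≠ 0 := by rw [vec2_o]; exact one_ne_zero
  have := C.ratx hoj hu hv (by rw [vec2_o, vec2_j hoj]; field_simp)
  have h2 : ξ (vec2 o j 1 (u j / u o)) o ≠ 0 := by rw [Ne, C.x0 _ (vec2_ne _ _ _)]; exact hv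
  rw [slope]
  field_simp
  linear_combination this

lemma Crd.fy (C : Crd ψ ξ η) {o j : Fin n} (hoj : o ≠ j) {u : EV n} (hu : u o ≠ 0) :
    η u j = slope η o j (u j / u o) * η u o := by
  have hv : vec2 o j 1 (u j / u o) o ≠ 0 := by rw [vec2_o]; exact one_ne_zero
  have := C.raty hoj hu hv (by rw [vec2_o, vec2_j hoj]; field_simp)
  have h2 : η (vec2 o j 1 (u j / u o)) o ≠ 0 := by rw [Ne, C.y0 _ (vec2_ne _ _ _)]; exact hv
  rw [slope]
  field_simp
  linear_combination this

lemma Crd.slope_zero (C : Crd ψ ξ η) {o j : Fin n} (hoj : o ≠ j) : slope ξ o j 0 = 0 := by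
  rw [slope, (C.x0 _ (vec2_ne o j 0) j).mpr (vec2_j hoj 1 0), zero_div]

lemma Crd.H (C : Crd ψ ξ η) {o j k : Fin n} (hoj : o ≠ j) (hok : o ≠ k) (hjk : j ≠ k)
    (a b c d : ℂ) : 1 + a * c + b * d = 0 ↔
      1 + slope η o j (starRingEnd ℂ a) * slope ξ o j c +
        slope η o k (starRingEnd ℂ b) * slope ξ o k d = 0 := by
  set u := vec3 o j k 1 c d with hu
  set v := vec3 o j k 1 (starRingEnd ℂ a) (starRingEnd ℂ b) with hv
  have uo : u o = 1 := by simp [hu, vec3]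
  have uj : u j = c := by simp [hu, vec3, hoj.symm]
  have uk : u k = d := by simp [hu, vec3, hok.symm, hjk.symm]
  have vo : v o = 1 := by simp [hv, vec3]
  have vj : v j = starRingEnd ℂ a := by simp [hv, vec3, hoj.symm]
  have vk : v k = starRingEnd ℂ b := by simp [hv, vec3, hok.symm, hjk.symm]
  have ul : ∀ l, l ≠ o → l ≠ j → l ≠ k → u l = 0 := by
    intro l h1 h2 h3; simp [hu, vec3, h1, h2, h3]
  have un : u ≠ 0 := ne_zero_of_coord o (by rw [uo]; exact one_ne_zero)
  have vn : v ≠ 0 := ne_zero_of_coord o (by rw [vo]; exact one_ne_zero)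
  have h1 := C.orth u un v vn
  rw [sum3 hoj hok hjk _ (fun l h1 h2 h3 => by rw [(C.x0 u un l).mpr (ul l h1 h2 h3), mul_zero]),
    sum3 hoj hok hjk _ (fun l h1 h2 h3 => by rw [ul l h1 h2 h3, mul_zero]),
    C.fx hoj (u := u) (by rw [uo]; exact one_ne_zero),
    C.fx hok (u := u) (by rw [uo]; exact one_ne_zero),
    C.fy hoj (u := v) (by rw [vo]; exact one_ne_zero),
    C.fy hok (u := v) (by rw [vo]; exact one_ne_zero), uo, vo, uj, uk, vj, vk] at h1
  simp only [map_one, div_one, Complex.conj_conj, one_mul] at h1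
  rw [← h1]
  have x0 : ξ u o ≠ 0 := by rw [Ne, C.x0 u un, uo]; exact one_ne_zero
  have y0 : η v o ≠ 0 := by rw [Ne, C.y0 v vn, vo]; exact one_ne_zero
  constructor
  · intro h
    apply mul_left_cancel₀ (mul_ne_zero x0 y0)
    linear_combination h
  · intro h
    linear_combination ξ u o * η v o * h

lemma Crd.slope_cont (C : Crd ψ ξ η) (hψ : IsPsi ψ) (o j : Fin n) :
    Continuous (slope ξ o j) := by
  have e : slope ξ o j = fun c => ψ (vec2 o j 1 c) j o / ψ (vec2 o j 1 c) o o := by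
    ext c
    have y0 : η (vec2 o j 1 c) o ≠ 0 := by
      rw [Ne, C.y0 _ (vec2_ne o j c), vec2_o]; exact one_ne_zero
    rw [C.eq _ (vec2_ne o j c), C.eq _ (vec2_ne o j c), slope, mul_div_mul_right _ _ y0]
  rw [e]
  have cv : Continuous (fun c : ℂ => vec2 o j 1 c) := by
    unfold vec2
    apply (PiLp.continuous_toLp 2 _).comp
    apply continuous_pi
    intro i
    split_ifs <;> fun_prop
  have cψ : Continuous (fun c : ℂ => ψ (vec2 o j 1 c)) := by
    rw [continuous_iff_continuousAt]
    intro c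
    exact ContinuousAt.comp (f := fun c : ℂ => vec2 o j 1 c) (g := ψ)
      (hψ.cont _ (vec2_ne o j c)) cv.continuousAt
  have cc : ∀ a b : Fin n, Continuous (fun c : ℂ => ψ (vec2 o j 1 c) a b) :=
    fun a b => cψ.matrix_elem a b
  apply (cc j o).div (cc o o)
  intro c
  rw [C.eq _ (vec2_ne o j c)]
  apply mul_ne_zero
  · rw [Ne, C.x0 _ (vec2_ne o j c), vec2_o]; exact one_ne_zero
  · rw [Ne, C.y0 _ (vec2_ne o j c), vec2_o]; exact one_ne_zero

end
end PN


namespace PN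

section
variable {n : ℕ} {ψ : EV n → Matrix (Fin n) (Fin n) ℂ}

lemma IsPsi.form0 (hψ : IsPsi ψ) (hn : 3 ≤ n)
    (hE : ∀ i, ψ (EuclideanSpace.single i (1 : ℂ)) = Matrix.single i i 1) :
    ∃ (o : Fin n) (d : Fin n → ℂ) (F : ℂ →+* ℂ), (∀ i, d i ≠ 0) ∧ Continuous F ∧
      ∀ u : EV n, u o ≠ 0 → ∀ i j, ψ u i j * F (∑ k, u k * starRingEnd ℂ (u k)) =
        d i * (d j)⁻¹ * F (u i * starRingEnd ℂ (u j)) := by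
  obtain ⟨ξ, η, C⟩ := hψ.crd hn hE
  let o : Fin n := ⟨0, by omega⟩
  let j1 : Fin n := ⟨1, by omega⟩
  let k2 : Fin n := ⟨2, by omega⟩
  have o1 : o ≠ j1 := by simp [o, j1]
  have o2 : o ≠ k2 := by simp [o, k2]
  have h12 : j1 ≠ k2 := by simp [j1, k2]
  have M := fun k (hok : o ≠ k) (hjk : j1 ≠ k) =>
    alg_main (G1 := fun a => slope η o j1 (starRingEnd ℂ a))
      (G2 := fun a => slope η o k (starRingEnd ℂ a)) (C.H o1 hok hjk)
      (C.slope_zero o1) (C.slope_zero hok)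
  obtain ⟨F, hF1, hF2, -⟩ := M k2 o2 h12
  have hFk : ∀ k, o ≠ k → ∀ a c, slope η o k (starRingEnd ℂ a) * slope ξ o k c = F (a * c) := by
    intro k hok a c
    by_cases hk : j1 = k
    · subst hk; exact hF2 a c
    · obtain ⟨F', h1, -, h3⟩ := M k hok hk
      rw [h3 a c, h1, hF1]
  have hFc : Continuous F := by
    have : (F : ℂ → ℂ) = fun c => slope η o j1 (starRingEnd ℂ 1) * slope ξ o j1 c := by
      ext c; rw [hFk j1 o1, one_mul]
    rw [this]
    exact continuous_const.mul (C.slope_cont hψ o j1)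
  have hone : ∀ k, o ≠ k → slope η o k (starRingEnd ℂ 1) * slope ξ o k 1 = 1 := by
    intro k hk; rw [hFk k hk, one_mul, map_one]
  let d : Fin n → ℂ := fun i => if i = o then 1 else slope ξ o i 1
  have d_o : d o = 1 := by simp [d]
  have d_i : ∀ i, o ≠ i → d i = slope ξ o i 1 := by intro i hi; simp [d, hi.symm]
  have hd : ∀ i, d i ≠ 0 := by
    intro i
    by_cases hi : o = i
    · rw [← hi, d_o]; exact one_ne_zero
    · rw [d_i i hi]; intro h
      have := hone i hi
      rw [h, mul_zero] at this
      exact zero_ne_one this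
  refine ⟨o, d, F, hd, hFc, ?_⟩
  intro u hu i j
  have un := ne_zero_of_coord o hu
  have cx : ∀ i, ξ u i = d i * F (u i / u o) * ξ u o := by
    intro i
    by_cases hi : o = i
    · rw [← hi, d_o, div_self hu, map_one]; ring
    · rw [C.fx hi hu, d_i i hi]
      congr 1
      have h1 := hFk i hi 1 (u i / u o)
      have h2 := hone i hi
      rw [one_mul] at h1
      linear_combination slope ξ o i 1 * h1 - slope ξ o i (u i / u o) * h2
  have cy : ∀ i, η u i = (d i)⁻¹ * F (starRingEnd ℂ (u i / u o)) * η u o := by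
    intro i
    by_cases hi : o = i
    · rw [← hi, d_o, div_self hu, map_one, map_one]; ring
    · rw [C.fy hi hu]
      congr 1
      have h1 := hFk i hi (starRingEnd ℂ (u i / u o)) 1
      rw [Complex.conj_conj, mul_one, ← d_i i hi] at h1
      have := hd i
      rw [← h1]
      field_simp
  have hu' : starRingEnd ℂ (u o) ≠ 0 := by simpa using hu
  have r1 : F (u o) ≠ 0 := by simpa using hu
  have r2 : F (starRingEnd ℂ (u o)) ≠ 0 := by simpa using hu
  have hs : ∑ k, ((d k)⁻¹ * F (starRingEnd ℂ (u k / u o)) * η u o) *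
      (d k * F (u k / u o) * ξ u o) = 1 := by
    rw [← C.one u un]
    apply Finset.sum_congr rfl
    intro k _
    rw [← cx k, ← cy k]
  have hs2 : (∑ k, F (u k * starRingEnd ℂ (u k))) * (ξ u o * η u o) =
      F (u o) * F (starRingEnd ℂ (u o)) := by
    rw [← mul_one (F (u o) * _), ← hs, Finset.sum_mul, Finset.mul_sum]
    apply Finset.sum_congr rfl
    intro k _
    have := hd k
    simp only [map_div₀, map_mul]
    field_simp
  rw [C.eq u un, cx i, cy j, map_sum]
  have e : F (u i * starRingEnd ℂ (u j)) = F (u i / u o) * F (starRingEnd ℂ (u j / u o)) *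
      ((∑ k, F (u k * starRingEnd ℂ (u k))) * (ξ u o * η u o)) := by
    rw [hs2]
    simp only [map_div₀, map_mul]
    field_simp
  rw [e]
  ring

lemma IsPsi.form1 (hψ : IsPsi ψ) (hn : 3 ≤ n)
    (hE : ∀ i, ψ (EuclideanSpace.single i (1 : ℂ)) = Matrix.single i i 1) :
    ∃ (d : Fin n → ℂ) (F : ℂ →+* ℂ), (∀ i, d i ≠ 0) ∧ Continuous F ∧
      ∀ u : EV n, u ≠ 0 → ∀ i j, ψ u i j * F (∑ k, u k * starRingEnd ℂ (u k)) =
        d i * (d j)⁻¹ * F (u i * starRingEnd ℂ (u j)) := by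
  obtain ⟨o, d, F, hd, hF, h⟩ := hψ.form0 hn hE
  refine ⟨d, F, hd, hF, ?_⟩
  intro u hu i j
  by_cases huo : u o = 0
  swap
  · exact h u huo i j
  let γ : ℂ → EV n := fun r => u + r • EuclideanSpace.single o (1 : ℂ)
  have γ0 : γ 0 = u := by simp [γ]
  have cγ : Continuous γ := by simp only [γ]; fun_prop
  have cγi : ∀ k, Continuous (fun r => γ r k) := by
    intro k; fun_prop
  have c1 : ContinuousAt (fun r => ψ (γ r) i j) 0 := by
    have h2 : ContinuousAt (fun r => ψ (γ r)) 0 :=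
      ContinuousAt.comp (f := γ) (g := ψ) (by rw [γ0]; exact hψ.cont u hu) cγ.continuousAt
    exact ((continuous_id.matrix_elem i j).continuousAt).comp h2
  have c2 : Continuous (fun r => F (∑ k, γ r k * starRingEnd ℂ (γ r k))) := by
    apply hF.comp
    apply continuous_finsetSum
    intro k _
    exact (cγi k).mul (Complex.continuous_conj.comp (cγi k))
  have c3 : Continuous (fun r => d i * (d j)⁻¹ * F (γ r i * starRingEnd ℂ (γ r j))) := by
    apply continuous_const.mul
    apply hF.comp
    exact (cγi i).mul (Complex.continuous_conj.comp (cγi j))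
  have t1 := (c1.mul c2.continuousAt).tendsto.mono_left
    (nhdsWithin_le_nhds (s := ({0}ᶜ : Set ℂ)))
  have t2 := (c3.continuousAt (x := 0)).tendsto.mono_left
    (nhdsWithin_le_nhds (s := ({0}ᶜ : Set ℂ)))
  have := tendsto_nhds_unique_of_eventuallyEq t1 t2 (by
    filter_upwards [self_mem_nhdsWithin] with r hr
    have hr : r ≠ 0 := by simpa using hr
    apply h
    simpa [γ, huo] using hr)
  simpa only [γ0, Pi.mul_apply] using this

lemma IsPsi.conj (hψ : IsPsi ψ) (S S' : Matrix (Fin n) (Fin n) ℂ) (h1 : S * S' = 1)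
    (h2 : S' * S = 1) : IsPsi (fun u => S * ψ u * S') := by
  refine ⟨?_, ?_, ?_⟩
  · intro u hu
    exact (continuousAt_const.mul (hψ.cont u hu)).mul continuousAt_const
  · intro c hc u
    simp only [hψ.smul c hc u]
  · intro b
    obtain ⟨T, T', a1, a2, a3⟩ := hψ.frame b
    refine ⟨S * T, T' * S', ?_, ?_, ?_⟩
    · calc S * T * (T' * S') = S * (T * T') * S' := by simp only [Matrix.mul_assoc]
        _ = 1 := by rw [a1, Matrix.mul_one, h1]
    · calc T' * S' * (S * T) = T' * (S' * S) * T := by simp only [Matrix.mul_assoc]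
        _ = 1 := by rw [h2, Matrix.mul_one, a2]
    · intro i
      simp only [a3, Matrix.mul_assoc]

/-- Final form of `ψ` on unit vectors. -/
lemma IsPsi.form (hψ : IsPsi ψ) (hn : 3 ≤ n) :
    ∃ T T' : Matrix (Fin n) (Fin n) ℂ, T * T' = 1 ∧ T' * T = 1 ∧
      ((∀ u : EV n, inner ℂ u u = 1 → ψ u = T * vecMulVec u (star u) * T') ∨
       (∀ u : EV n, inner ℂ u u = 1 → ψ u = T * vecMulVec (star u) u * T')) := by
  obtain ⟨S, S', h1, h2, h3⟩ := hψ.frame (EuclideanSpace.basisFun (Fin n) ℂ)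
  have hψ' := hψ.conj S' S h2 h1
  obtain ⟨d, F, hd, hF, hform⟩ := hψ'.form1 hn (by
    intro i
    have := h3 i
    rw [EuclideanSpace.basisFun_apply] at this
    simp only [this]
    calc S' * (S * Matrix.single i i 1 * S') * S = (S' * S) * Matrix.single i i 1 * (S' * S) := by
          simp only [Matrix.mul_assoc]
      _ = Matrix.single i i 1 := by rw [h2, Matrix.one_mul, Matrix.mul_one])
  have hdd : diagonal d * diagonal (fun i => (d i)⁻¹) = 1 := by
    rw [Matrix.diagonal_mul_diagonal, ← Matrix.diagonal_one]
    congr 1; ext i; exact mul_inv_cancel₀ (hd i)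
  have hdd' : diagonal (fun i => (d i)⁻¹) * diagonal d = 1 := by
    rw [Matrix.diagonal_mul_diagonal, ← Matrix.diagonal_one]
    congr 1; ext i; exact inv_mul_cancel₀ (hd i)
  have hu1 : ∀ u : EV n, inner ℂ u u = 1 → ∑ k, u k * starRingEnd ℂ (u k) = 1 := by
    intro u hu
    rw [← hu, inner_sum]
    exact Finset.sum_congr rfl (fun k _ => mul_comm _ _)
  have key : ∀ u : EV n, inner ℂ u u = 1 → ∀ V : Matrix (Fin n) (Fin n) ℂ,
      (∀ i j, F (u i * starRingEnd ℂ (u j)) = V i j) →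
      ψ u = S * diagonal d * V * (diagonal (fun i => (d i)⁻¹) * S') := by
    intro u hu V hV
    have e : S' * ψ u * S = diagonal d * V * diagonal (fun i => (d i)⁻¹) := by
      ext i j
      have := hform u (ne_zero_of_inner_self hu) i j
      rw [hu1 u hu, map_one, mul_one, hV] at this
      rw [this, Matrix.mul_diagonal, Matrix.diagonal_mul]
      ring
    calc ψ u = (S * S') * ψ u * (S * S') := by rw [h1, Matrix.one_mul, Matrix.mul_one]
      _ = S * (S' * ψ u * S) * S' := by simp only [Matrix.mul_assoc]
      _ = _ := by rw [e]; simp only [Matrix.mul_assoc]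
  refine ⟨S * diagonal d, diagonal (fun i => (d i)⁻¹) * S', ?_, ?_, ?_⟩
  · calc _ = S * (diagonal d * diagonal (fun i => (d i)⁻¹)) * S' := by
          simp only [Matrix.mul_assoc]
      _ = 1 := by rw [hdd, Matrix.mul_one, h1]
  · calc _ = diagonal (fun i => (d i)⁻¹) * (S' * S) * diagonal d := by
          simp only [Matrix.mul_assoc]
      _ = 1 := by rw [h2, Matrix.mul_one, hdd']
  · rcases Complex.ringHom_eq_id_or_conj_of_continuous hF with h | h
    · left
      intro u hu
      apply key u hu
      intro i j
      rw [h]; simp [vecMulVec_apply]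
    · right
      intro u hu
      apply key u hu
      intro i j
      rw [h]; simp [vecMulVec_apply]

end
end PN


namespace PN

/-- Projection onto the span of `u`. -/
noncomputable def prj {n : ℕ} (u : EV n) : NM n :=
  ⟨(inner ℂ u u)⁻¹ • vecMulVec u.ofLp (star u.ofLp), by
    have h : (vecMulVec u.ofLp (star u.ofLp))ᴴ = vecMulVec u.ofLp (star u.ofLp) := by
      rw [Matrix.conjTranspose_vecMulVec, star_star]
    rw [Matrix.conjTranspose_smul, h, Matrix.smul_mul, Matrix.mul_smul, Matrix.smul_mul,
      Matrix.mul_smul, smul_comm]⟩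

lemma bm_conj {n : ℕ} (b : OrthonormalBasis (Fin n) ℂ (EV n)) (d : Fin n → ℂ) :
    bm b * diagonal d * star (bm b) = ∑ i, d i • vecMulVec (b i).ofLp (star (b i).ofLp) := by
  ext a c
  rw [Matrix.mul_apply, Matrix.sum_apply]
  apply Finset.sum_congr rfl
  intro i _
  rw [Matrix.mul_diagonal]
  simp [bm, Matrix.star_apply, vecMulVec_apply]
  ring

lemma basis_self {n : ℕ} (b : OrthonormalBasis (Fin n) ℂ (EV n)) (i : Fin n) :
    inner ℂ (b i) (b i) = 1 := by
  rw [orthonormal_iff_ite.mp b.orthonormal, if_pos rfl]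

lemma prj_basis {n : ℕ} (b : OrthonormalBasis (Fin n) ℂ (EV n)) (i : Fin n) :
    prj (b i) = nm ⟨bm b, bm_mem b⟩ (Pi.single i 1) := by
  apply Subtype.ext
  simp only [prj, nm]
  rw [bm_conj, basis_self, inv_one, one_smul, Finset.sum_eq_single i]
  · simp
  · intro j _ hj; simp [hj]
  · simp

lemma diag_sum {n : ℕ} (d : Fin n → ℂ) :
    diagonal d = ∑ i, d i • Matrix.single i i (1 : ℂ) := by
  ext a c
  rw [Matrix.sum_apply]
  simp [Matrix.single_apply, Matrix.diagonal_apply, ite_and]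

lemma isPsi_of {n : ℕ} (φ : NM n → Matrix (Fin n) (Fin n) ℂ) (hcont : Continuous φ)
    (hcomm : ∀ X Y, X.val * Y.val = Y.val * X.val → φ X * φ Y = φ Y * φ X)
    (hshrink : ∀ X, spectrum ℂ (φ X) ⊆ spectrum ℂ X.val) : IsPsi (fun u => φ (prj u)) := by
  refine ⟨?_, ?_, ?_⟩
  · intro u hu
    apply ContinuousAt.comp (f := prj) (g := φ) hcont.continuousAt
    refine (Topology.IsInducing.continuousAt_iff (g := (Subtype.val : NM n → Matrix (Fin n) (Fin n) ℂ)) ⟨rfl⟩).mpr ?_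
    have hu' : inner ℂ u u ≠ 0 := by
      rwa [Ne, inner_self_eq_zero]
    have c1 : ContinuousAt (fun u : EV n => (inner ℂ u u)⁻¹) u := by
      have c0 : ContinuousAt (fun u : EV n => inner ℂ u u) u := by fun_prop
      exact c0.inv₀ hu'
    have c2 : Continuous (fun u : EV n => vecMulVec u.ofLp (star u.ofLp)) := by
      apply Continuous.matrix_vecMulVec
      · fun_prop
      · fun_prop
    exact c1.smul c2.continuousAt
  · intro c hc u
    have : prj (c • u) = prj u := by
      apply Subtype.ext
      simp only [prj]
      ext a b
      simp only [inner_smul_left, inner_smul_right, Matrix.smul_apply, vecMulVec_apply,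
        PiLp.smul_apply, WithLp.ofLp_smul, Pi.smul_apply, star_smul, smul_eq_mul, Pi.star_apply]
      have hc' : starRingEnd ℂ c ≠ 0 := by simpa using hc
      have e : star c = starRingEnd ℂ c := rfl
      rw [e, mul_inv, mul_inv]
      field_simp
    simp only [this]
  · intro b
    obtain ⟨T, T', h1, h2, h3⟩ := frame_lemma φ hcont hcomm hshrink ⟨bm b, bm_mem b⟩
    refine ⟨T, T', h1, h2, ?_⟩
    intro i
    simp only [prj_basis, h3]
    rw [Matrix.diagonal_single]

lemma phi_sum {n : ℕ} (φ : NM n → Matrix (Fin n) (Fin n) ℂ) (hcont : Continuous φ)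
    (hcomm : ∀ X Y, X.val * Y.val = Y.val * X.val → φ X * φ Y = φ Y * φ X)
    (hshrink : ∀ X, spectrum ℂ (φ X) ⊆ spectrum ℂ X.val)
    (b : OrthonormalBasis (Fin n) ℂ (EV n)) (d : Fin n → ℂ) (X : NM n)
    (hX : X.val = bm b * diagonal d * star (bm b)) : φ X = ∑ i, d i • φ (prj (b i)) := by
  obtain ⟨T, T', h1, h2, h3⟩ := frame_lemma φ hcont hcomm hshrink ⟨bm b, bm_mem b⟩
  have e : X = nm ⟨bm b, bm_mem b⟩ d := Subtype.ext hX
  rw [e, h3, diag_sum, Finset.mul_sum, Finset.sum_mul]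
  apply Finset.sum_congr rfl
  intro i _
  rw [prj_basis, h3, Matrix.diagonal_single, Matrix.mul_smul, Matrix.smul_mul]

end PN


/-- For `n ≥ 3`, any continuous, commutativity-preserving and
spectrum-shrinking map `φ : N_n → M_n` defined on the set of normal matrices is of the
form `φ(X) = T X T⁻¹` or `φ(X) = T Xᵗ T⁻¹` for some `T ∈ GL(n)`. -/
theorem preserver_normal (n : ℕ) (hn : 3 ≤ n)
    (φ : {X : Matrix (Fin n) (Fin n) ℂ // X * X.conjTranspose = X.conjTranspose * X} →
      Matrix (Fin n) (Fin n) ℂ)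
    (hcont : Continuous φ)
    (hcomm : ∀ X Y, X.val * Y.val = Y.val * X.val → φ X * φ Y = φ Y * φ X)
    (hshrink : ∀ X, spectrum ℂ (φ X) ⊆ spectrum ℂ X.val) :
    ∃ T : Matrix (Fin n) (Fin n) ℂ, IsUnit T ∧
      ((∀ X, φ X = T * X.val * T⁻¹) ∨ (∀ X, φ X = T * X.val.transpose * T⁻¹)) := by
  have hψ := PN.isPsi_of φ hcont hcomm hshrink
  obtain ⟨T, T', h1, h2, h3⟩ := hψ.form hn
  have hinv : T⁻¹ = T' := Matrix.inv_eq_right_inv h1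
  refine ⟨T, ⟨⟨T, T', h1, h2⟩, rfl⟩, ?_⟩
  rw [hinv]
  rcases h3 with h3 | h3
  · left
    intro X
    obtain ⟨b, d, hX⟩ := PN.normal_diag X.val X.2
    rw [PN.phi_sum φ hcont hcomm hshrink b d X hX, hX, PN.bm_conj, Finset.mul_sum,
      Finset.sum_mul]
    apply Finset.sum_congr rfl
    intro i _
    rw [h3 _ (PN.basis_self b i), Matrix.mul_smul, Matrix.smul_mul]
  · right
    intro X
    obtain ⟨b, d, hX⟩ := PN.normal_diag X.val X.2
    rw [PN.phi_sum φ hcont hcomm hshrink b d X hX, hX, PN.bm_conj, Matrix.transpose_sum,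
      Finset.mul_sum, Finset.sum_mul]
    apply Finset.sum_congr rfl
    intro i _
    rw [h3 _ (PN.basis_self b i), Matrix.transpose_smul, Matrix.transpose_vecMulVec,
      Matrix.mul_smul, Matrix.smul_mul]
end
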